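/- Let η_{ν,m}(x) := 2^{νn}(1 + 2^ν|x|)^{−m}. Let p, q ∈ P^log(ℝ^n) and u a variable exponent with 1 < p^- ≤ p(x) ≤ u(x) ≤ sup u < ∞ for a.e. x, and 1 < q^- ≤ q^+ < ∞. Set c_{p,u} := max(0, sup_{x∈ℝ^n}(1/p(x) − 1/u(x)) − 1/p_∞). Then for every m > n + n·c_{p,u} there exists c > 0 such that for all sequences (f_ν)_{ν∈ℕ_0} of measurable functions on ℝ^n one has ‖(∑_{ν=0}^∞ |(η_{ν,m} ∗ f_ν)(·)|^{q(·)})^{1/q(·)}‖_{M^{u(·)}_{p(·)}(ℝ^n)} ≤ c ‖(∑_{ν=0}^∞ |f_ν(·)|^{q(·)})^{1/q(·)}‖_{M^{u(·)}_{p(·)}(ℝ^n)}. -/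

import Mathlib

open MeasureTheory ENNReal Real
open scoped FourierTransform

noncomputable section

/-- Euclidean space `ℝ^n`. -/
abbrev Rn (n : ℕ) : Type := EuclideanSpace ℝ (Fin n)

variable {n : ℕ}

/-- The function `φ_t(s)` used in the semimodular of variable exponent Lebesgue spaces:
`φ_t(s) = s^t` for `t < ∞`, while `φ_∞(s) = 0` for `s ≤ 1` and `= ∞` for `s > 1`. -/
def phiVE (t : ℝ≥0∞) (s : ℝ≥0∞) : ℝ≥0∞ :=
  if t = ∞ then (if s ≤ 1 then 0 else ∞) else s ^ t.toReal

/-- The semimodular `ρ_p` of variable exponent Lebesgue spaces. -/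
def modularVE (p : Rn n → ℝ≥0∞) (g : Rn n → ℝ≥0∞) : ℝ≥0∞ :=
  ∫⁻ x, phiVE (p x) (g x)

/-- The variable exponent Lebesgue quasi-norm `‖·‖_{L^{p(·)}(ℝ^n)}`, applied to the
(pointwise) absolute value of a function, i.e. to `[0,∞]`-valued functions.
(For `p⁻ ≥ 1` this is the usual Luxemburg norm; for general `p` it agrees with the
definition via `‖f‖ = ‖|f|^t‖_{L^{p/t}}^{1/t}`.) -/
def vLpNorm (p : Rn n → ℝ≥0∞) (g : Rn n → ℝ≥0∞) : ℝ≥0∞ :=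
  sInf {lam : ℝ≥0∞ | modularVE p (fun x => g x / lam) ≤ 1}

/-- A variable exponent: a measurable function `p : ℝ^n → (0,∞]` with `p⁻ = ess inf p > 0`. -/
def IsVarExp (p : Rn n → ℝ≥0∞) : Prop :=
  Measurable p ∧ (∀ x, 0 < p x) ∧ 0 < essInf p (volume : Measure (Rn n))

/-- Local log-Hölder continuity of `g : ℝ^n → ℝ`. -/
def LocLogHolder (g : Rn n → ℝ) : Prop :=
  ∃ c > 0, ∀ x y : Rn n, |g x - g y| ≤ c / Real.log (Real.exp 1 + (dist x y)⁻¹)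

/-- Log-Hölder decay of `g` at infinity, with limit value `gInf` and constant `c`. -/
def LogDecay (g : Rn n → ℝ) (gInf c : ℝ) : Prop :=
  ∀ x : Rn n, |g x - gInf| ≤ c / Real.log (Real.exp 1 + ‖x‖)

/-- `p ∈ P^log(ℝ^n)`, with prescribed limit value `pinvInf = 1/p_∞` of `1/p` at infinity. -/
def IsPLogWith (p : Rn n → ℝ≥0∞) (pinvInf : ℝ) : Prop :=
  IsVarExp p ∧ LocLogHolder (fun x => (p x)⁻¹.toReal) ∧
    ∃ c > 0, LogDecay (fun x => (p x)⁻¹.toReal) pinvInf c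

/-- `p ∈ P^log(ℝ^n)`. -/
def IsPLog (p : Rn n → ℝ≥0∞) : Prop := ∃ pinvInf : ℝ, IsPLogWith p pinvInf

/-- The Morrey quasi-norm `‖·‖_{M^{u(·)}_{p(·)}(ℝ^n)}` of a `[0,∞]`-valued function:
`sup_{x, r>0} r^{n(1/u(x) - 1/p(x))} ‖f‖_{L^{p(·)}(B_r(x))}`. -/
def morreyNorm (p u : Rn n → ℝ≥0∞) (g : Rn n → ℝ≥0∞) : ℝ≥0∞ :=
  ⨆ (x : Rn n) (r : ℝ) (_ : 0 < r),
    ENNReal.ofReal (r ^ ((n : ℝ) * ((u x)⁻¹.toReal - (p x)⁻¹.toReal))) *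
      vLpNorm p ((Metric.ball x r).indicator g)

/-- The `ℓ^q` (quasi-)norm of a sequence in `[0,∞]`, with the usual modification for `q = ∞`. -/
def lqNorm (q : ℝ≥0∞) (a : ℕ → ℝ≥0∞) : ℝ≥0∞ :=
  if q = ∞ then ⨆ ν, a ν else (∑' ν, a ν ^ q.toReal) ^ (1 / q.toReal)

/-- The vector-valued Morrey quasi-norm `‖(f_ν)_ν‖_{M^{u(·)}_{p(·)}(ℓ^{q(·)})}`. -/
def morreySeqNorm (p u q : Rn n → ℝ≥0∞) (f : ℕ → Rn n → ℝ≥0∞) : ℝ≥0∞ :=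
  morreyNorm p u (fun x => lqNorm (q x) (fun ν => f ν x))

/-- The kernel `η_{ν,m}(x) = 2^{νn} (1 + 2^ν |x|)^{-m}`. -/
def etaK (ν : ℕ) (m : ℝ) (x : Rn n) : ℝ≥0∞ :=
  ENNReal.ofReal ((2 : ℝ) ^ (ν * n) * (1 + 2 ^ ν * ‖x‖) ^ (-m))

/-- Convolution of `[0,∞]`-valued functions. -/
def lconv (f g : Rn n → ℝ≥0∞) (x : Rn n) : ℝ≥0∞ := ∫⁻ y, f (x - y) * g y

/-- The constant `c_{p,u} = max(0, sup_x (1/p(x) - 1/u(x)) - 1/p_∞)`. -/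
def cpu (p u : Rn n → ℝ≥0∞) (pinvInf : ℝ) : ℝ :=
  max 0 ((⨆ x : Rn n, ((p x)⁻¹.toReal - (u x)⁻¹.toReal)) - pinvInf)

/-!
The maximal function is bounded for modulars with a log-Hölder exponent `P` with `inf P > 1`:
Jensen's inequality survives the change of exponent because an average over a ball of radius `r` is
between powers of `r`, and `r ^ (P x - P y)` is bounded for `x`, `y` in that ball; the
decay of `P` settles the behaviour at infinity.

For sequences the maximal function cannot be used termwise, since it is not bounded in `ℓ^{Q(·)}`
when `Q` varies. The convolution with `η_{ν,m}` is different: the decay of the kernel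
absorbs the error `2^{νK(Q x - Q y)}` made by replacing `Q y` by `Q x`, at the price of a smaller
`m`. After factoring out a Rubio de Francia majorant `G` of the `ℓ^{Q(·)}` norm, which satisfies
`M G ≤ A G`, only a sum of convolutions is left. By duality the convolutions move to a test function
in the conjugate exponent, where the maximal function does bound them.

In the Morrey space the sequence is cut at the double of the given ball. The inner part is covered
by the inequality on the whole space. For the outer part `∑ ν, η_{ν,m} z` is bounded by a constant
times `|z| ^ (-n)` near the origin and `|z| ^ (-m)` away from it. On each dyadic annulus this is
combined with Hölder's inequality and the norm of the indicator of a ball, and the resulting series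
is geometric because `1 / p - 1 / u` stays below `1 / p` and, by the choice of `m`, below
`(m - n) / n + 1 / p_∞`.
-/

section DyadicMaximal

variable {X : Type*} [PseudoMetricSpace X] [MeasurableSpace X] {μ : Measure X} {f g : X → ℝ≥0∞}

/-- The centred Hardy–Littlewood maximal function of a `[0,∞]`-valued function. Only the radii
`2 ^ k` are used, which makes it a countable supremum. -/
def dyadicMaximal (μ : Measure X) (f : X → ℝ≥0∞) (x : X) : ℝ≥0∞ :=
  ⨆ k : ℤ, ⨍⁻ y in Metric.closedBall x (2 ^ k), f y ∂μ

lemma laverage_le_dyadicMaximal (f : X → ℝ≥0∞) (k : ℤ) (x : X) :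
    ⨍⁻ y in Metric.closedBall x (2 ^ k), f y ∂μ ≤ dyadicMaximal μ f x :=
  le_iSup (fun k : ℤ => ⨍⁻ y in Metric.closedBall x (2 ^ k), f y ∂μ) k

lemma measurable_dyadicMaximal [SecondCountableTopology X] [OpensMeasurableSpace X] [SFinite μ]
    (hf : Measurable f) : Measurable (dyadicMaximal μ f) := by
  refine Measurable.iSup fun k => ?_
  have hball : MeasurableSet {p : X × X | dist p.2 p.1 ≤ (2 : ℝ) ^ k} :=
    measurableSet_le (measurable_snd.dist measurable_fst) measurable_const
  have hint : Measurable fun x => ∫⁻ y in Metric.closedBall x (2 ^ k), f y ∂μ := by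
    simp_rw [← lintegral_indicator Metric.isClosed_closedBall.measurableSet]
    exact Measurable.lintegral_prod_right' ((hf.comp measurable_snd).indicator hball)
  simp_rw [setLAverage_eq]
  exact hint.div (measurable_measure_prodMk_left hball)

lemma dyadicMaximal_mono (h : f ≤ g) : dyadicMaximal μ f ≤ dyadicMaximal μ g :=
  fun _ => iSup_mono fun _ => lintegral_mono h

lemma dyadicMaximal_add_le (hf : Measurable f) (g : X → ℝ≥0∞) (x : X) :
    dyadicMaximal μ (f + g) x ≤ dyadicMaximal μ f x + dyadicMaximal μ g x := by
  refine iSup_le fun k => (lintegral_add_left hf g).trans_le ?_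
  exact add_le_add (laverage_le_dyadicMaximal f k x) (laverage_le_dyadicMaximal g k x)

lemma dyadicMaximal_tsum_le {F : ℕ → X → ℝ≥0∞} (hF : ∀ i, Measurable (F i)) (x : X) :
    dyadicMaximal μ (fun y => ∑' i, F i y) x ≤ ∑' i, dyadicMaximal μ (F i) x := by
  refine iSup_le fun k => (lintegral_tsum fun i => (hF i).aemeasurable).trans_le ?_
  exact ENNReal.tsum_le_tsum fun i => laverage_le_dyadicMaximal (F i) k x

lemma dyadicMaximal_const_mul (c : ℝ≥0∞) (hf : Measurable f) (x : X) :
    dyadicMaximal μ (fun y => c * f y) x = c * dyadicMaximal μ f x := by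
  simp only [dyadicMaximal, laverage, lintegral_const_mul c hf, ENNReal.mul_iSup]

lemma dyadicMaximal_le_of_le {c : ℝ≥0∞} (h : ∀ x, f x ≤ c) (x : X) :
    dyadicMaximal μ f x ≤ c := by
  refine iSup_le fun k => (lintegral_mono h).trans ?_
  rw [lintegral_const, Measure.smul_apply, smul_eq_mul]
  exact mul_le_of_le_one_right zero_le (ENNReal.inv_mul_le_one _)

end DyadicMaximal

section MaximalTheorem

variable {E : Type*} [NormedAddCommGroup E] [NormedSpace ℝ E] [FiniteDimensional ℝ E]
  [MeasurableSpace E] [BorelSpace E] {μ : Measure E} [μ.IsAddHaarMeasure]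

lemma measure_closedBall_mul (x : E) {s r : ℝ} (hs : 0 ≤ s) (hr : 0 ≤ r) :
    μ (Metric.closedBall x (s * r)) =
      ENNReal.ofReal s ^ Module.finrank ℝ E * μ (Metric.closedBall x r) := by
  rw [Measure.addHaar_closedBall_mul μ x hs hr, Measure.addHaar_closedBall_center μ x,
    ENNReal.ofReal_pow hs]

lemma mul_measure_lt_laverage_le (f : E → ℝ≥0∞) (l : ℝ≥0∞) (K : ℤ) :
    l * μ {x | ∃ k ≤ K, l < ⨍⁻ y in Metric.closedBall x (2 ^ k), f y ∂μ} ≤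
      5 ^ Module.finrank ℝ E * ∫⁻ y, f y ∂μ := by
  obtain ⟨u, hut, hdisj, hcov⟩ := Vitali.exists_disjoint_subfamily_covering_enlargement_closedBall
    {a : E × ℤ | a.2 ≤ K ∧ l < ⨍⁻ y in Metric.closedBall a.1 (2 ^ a.2), f y ∂μ}
    (fun a => a.1) (fun a => (2 : ℝ) ^ a.2) ((2 : ℝ) ^ K)
    (fun a ha => zpow_le_zpow_right₀ one_le_two ha.1) 5 (by norm_num)
  have hcount : u.Countable := hdisj.countable_of_nonempty_interior fun a _ =>
    ⟨a.1, Metric.ball_subset_interior_closedBall (Metric.mem_ball_self (by positivity))⟩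
  have hsub : {x | ∃ k ≤ K, l < ⨍⁻ y in Metric.closedBall x (2 ^ k), f y ∂μ} ⊆
      ⋃ a ∈ u, Metric.closedBall a.1 (5 * (2 : ℝ) ^ a.2) := by
    rintro x ⟨k, hk, hx⟩
    obtain ⟨b, hb, hbs⟩ := hcov (x, k) ⟨hk, hx⟩
    exact Set.mem_iUnion₂.2 ⟨b, hb, hbs (Metric.mem_closedBall_self (by positivity))⟩
  have hball (a : u) : l * μ (Metric.closedBall a.1.1 (2 ^ a.1.2)) ≤
      ∫⁻ y in Metric.closedBall a.1.1 (2 ^ a.1.2), f y ∂μ := by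
    rw [← measure_mul_setLAverage f measure_closedBall_lt_top.ne, mul_comm l]
    gcongr
    exact (hut a.2).2.le
  calc l * μ {x | ∃ k ≤ K, l < ⨍⁻ y in Metric.closedBall x (2 ^ k), f y ∂μ}
      ≤ l * ∑' a : u, μ (Metric.closedBall a.1.1 (5 * (2 : ℝ) ^ a.1.2)) := by
        gcongr
        exact (measure_mono hsub).trans (measure_biUnion_le _ hcount _)
    _ = 5 ^ Module.finrank ℝ E * ∑' a : u, l * μ (Metric.closedBall a.1.1 (2 ^ a.1.2)) := by
        simp_rw [measure_closedBall_mul _ (show (0 : ℝ) ≤ 5 by norm_num)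
          (zpow_nonneg zero_le_two _), ENNReal.ofReal_ofNat, ENNReal.tsum_mul_left]
        ring
    _ ≤ 5 ^ Module.finrank ℝ E *
          ∑' a : u, ∫⁻ y in Metric.closedBall a.1.1 (2 ^ a.1.2), f y ∂μ := by
        gcongr with a
        exact hball a
    _ = 5 ^ Module.finrank ℝ E * ∫⁻ y in ⋃ a ∈ u, Metric.closedBall a.1 (2 ^ a.2), f y ∂μ := by
        rw [lintegral_biUnion hcount (fun _ _ => measurableSet_closedBall) hdisj]
    _ ≤ 5 ^ Module.finrank ℝ E * ∫⁻ y, f y ∂μ := by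
        gcongr
        exact Measure.restrict_le_self

lemma mul_measure_lt_dyadicMaximal_le (f : E → ℝ≥0∞) (l : ℝ≥0∞) :
    l * μ {x | l < dyadicMaximal μ f x} ≤ 5 ^ Module.finrank ℝ E * ∫⁻ y, f y ∂μ := by
  have hunion : {x | l < dyadicMaximal μ f x} =
      ⋃ K : ℤ, {x | ∃ k ≤ K, l < ⨍⁻ y in Metric.closedBall x (2 ^ k), f y ∂μ} := by
    ext x
    simp only [dyadicMaximal, lt_iSup_iff, Set.mem_ofPred_eq, Set.mem_iUnion]
    exact ⟨fun ⟨k, hk⟩ => ⟨k, k, le_rfl, hk⟩, fun ⟨_, k, _, hk⟩ => ⟨k, hk⟩⟩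
  have hmono : Monotone fun K : ℤ =>
      {x | ∃ k ≤ K, l < ⨍⁻ y in Metric.closedBall x (2 ^ k), f y ∂μ} :=
    fun _ _ hKL _ ⟨k, hk, hx⟩ => ⟨k, hk.trans hKL, hx⟩
  rw [hunion, hmono.measure_iUnion, ENNReal.mul_iSup]
  exact iSup_le fun K => mul_measure_lt_laverage_le f l K

lemma mul_measure_two_mul_lt_dyadicMaximal_le {f : E → ℝ≥0∞} (hf : Measurable f) (l : ℝ≥0∞) :
    l * μ {x | 2 * l < dyadicMaximal μ f x} ≤
      5 ^ Module.finrank ℝ E * ∫⁻ y in {y | l < f y}, f y ∂μ := by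
  have hset : MeasurableSet {y | l < f y} := measurableSet_lt measurable_const hf
  have hle (x : E) : dyadicMaximal μ f x ≤ dyadicMaximal μ ({y | l < f y}.indicator f) x + l := by
    have hfle : f ≤ {y | l < f y}.indicator f + fun _ => l := fun y => by
      by_cases h : l < f y
      · simp [h]
      · simp [h, not_lt.1 h]
    refine (dyadicMaximal_mono hfle x).trans
      ((dyadicMaximal_add_le (hf.indicator hset) _ x).trans ?_)
    gcongr
    exact dyadicMaximal_le_of_le (fun _ => le_rfl) x
  have hsub : {x | 2 * l < dyadicMaximal μ f x} ⊆
      {x | l < dyadicMaximal μ ({y | l < f y}.indicator f) x} := fun x hx =>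
    lt_of_add_lt_add_right ((two_mul l).symm.trans_lt (hx.trans_le (hle x)))
  rw [← lintegral_indicator hset]
  exact (mul_le_mul_right (measure_mono hsub) l).trans (mul_measure_lt_dyadicMaximal_le _ l)

lemma lintegral_Ioi_rpow_sub_one_eq_top (r : ℝ) :
    ∫⁻ t in Set.Ioi (0 : ℝ), ENNReal.ofReal (t ^ (r - 1)) = ∞ := by
  by_contra h
  refine not_integrableOn_Ioi_rpow (r - 1) ⟨by fun_prop, ?_⟩
  rw [hasFiniteIntegral_iff_ofReal]
  · exact lt_top_iff_ne_top.2 h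
  · filter_upwards [ae_restrict_mem measurableSet_Ioi] with t ht
    exact Real.rpow_nonneg (le_of_lt ht) _

lemma lintegral_Ioi_indicator_lt_rpow_sub_one {r : ℝ} (hr : 0 < r) (a : ℝ≥0∞) :
    ∫⁻ t in Set.Ioi (0 : ℝ), {t | ENNReal.ofReal t < a}.indicator
      (fun t => ENNReal.ofReal (t ^ (r - 1))) t = a ^ r / ENNReal.ofReal r := by
  rcases eq_or_ne a ∞ with rfl | ha
  · simp [lintegral_Ioi_rpow_sub_one_eq_top, ENNReal.top_rpow_of_pos hr, ENNReal.top_div]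
  lift a to NNReal using ha
  have hset : {t | ENNReal.ofReal t < a} ∩ Set.Ioi 0 = Set.Ioo 0 (a : ℝ) := by
    ext t
    simp only [Set.mem_inter_iff, Set.mem_ofPred_eq, Set.mem_Ioi, Set.mem_Ioo]
    rw [and_comm]
    exact and_congr_right fun ht => ENNReal.ofReal_lt_coe_iff ht.le
  have hint : IntegrableOn (fun t : ℝ => t ^ (r - 1)) (Set.Ioc 0 a) :=
    (intervalIntegrable_iff_integrableOn_Ioc_of_le a.coe_nonneg).1
      (intervalIntegral.intervalIntegrable_rpow' (by linarith))
  have hpos : 0 ≤ᵐ[volume.restrict (Set.Ioc 0 (a : ℝ))] fun t : ℝ => t ^ (r - 1) := by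
    filter_upwards [ae_restrict_mem measurableSet_Ioc] with t ht
    exact Real.rpow_nonneg ht.1.le _
  rw [setLIntegral_indicator (measurableSet_lt ENNReal.measurable_ofReal measurable_const), hset,
    setLIntegral_congr Ioo_ae_eq_Ioc, ← ofReal_integral_eq_lintegral_ofReal hint hpos,
    ← intervalIntegral.integral_of_le a.coe_nonneg, integral_rpow (Or.inl (by linarith)),
    sub_add_cancel, Real.zero_rpow hr.ne', sub_zero, ENNReal.ofReal_div_of_pos hr,
    ← ENNReal.ofReal_rpow_of_nonneg a.coe_nonneg hr.le]
  simp

lemma lintegral_mul_rpow_eq_lintegral_Ioi {X : Type*} [MeasurableSpace X] {μ : Measure X}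
    [SFinite μ] {w g : X → ℝ≥0∞} (hw : Measurable w) (hg : Measurable g) {r : ℝ} (hr : 0 < r) :
    ∫⁻ x, w x * g x ^ r ∂μ = ENNReal.ofReal r * ∫⁻ t in Set.Ioi (0 : ℝ),
      ENNReal.ofReal (t ^ (r - 1)) * ∫⁻ x in {x | ENNReal.ofReal t < g x}, w x ∂μ := by
  have hset : MeasurableSet {z : X × ℝ | ENNReal.ofReal z.2 < g z.1} :=
    measurableSet_lt (by fun_prop) (by fun_prop)
  have hjoint : Measurable fun z : X × ℝ => w z.1 *
      {t | ENNReal.ofReal t < g z.1}.indicator (fun t => ENNReal.ofReal (t ^ (r - 1))) z.2 := by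
    refine (hw.comp measurable_fst).mul ?_
    exact Measurable.indicator (f := fun z : X × ℝ => ENNReal.ofReal (z.2 ^ (r - 1)))
      (by fun_prop) hset
  have hfiber (x : X) : w x * g x ^ r = ENNReal.ofReal r * ∫⁻ t in Set.Ioi (0 : ℝ), w x *
      {t | ENNReal.ofReal t < g x}.indicator (fun t => ENNReal.ofReal (t ^ (r - 1))) t := by
    have hmeas : MeasurableSet {t | ENNReal.ofReal t < g x} :=
      measurableSet_lt ENNReal.measurable_ofReal measurable_const
    rw [lintegral_const_mul _ (Measurable.indicator (by fun_prop) hmeas),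
      lintegral_Ioi_indicator_lt_rpow_sub_one hr, mul_left_comm,
      ENNReal.mul_div_cancel (ENNReal.ofReal_pos.2 hr).ne' ENNReal.ofReal_ne_top]
  simp_rw [hfiber]
  rw [lintegral_const_mul _ hjoint.lintegral_prod_right',
    lintegral_lintegral_swap hjoint.aemeasurable]
  congr 1
  refine lintegral_congr fun t => ?_
  have hmeas : MeasurableSet {x | ENNReal.ofReal t < g x} := measurableSet_lt measurable_const hg
  rw [← lintegral_indicator hmeas, ← lintegral_const_mul _ (hw.indicator hmeas)]
  refine lintegral_congr fun x => ?_
  by_cases h : ENNReal.ofReal t < g x <;> simp [h, mul_comm]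

lemma rpow_mul_measure_lt_dyadicMaximal_le {f : E → ℝ≥0∞} (hf : Measurable f) (r : ℝ) {t : ℝ}
    (ht : 0 < t) :
    ENNReal.ofReal (t ^ (r - 1)) * μ {x | ENNReal.ofReal t < dyadicMaximal μ f x} ≤
      2 * 5 ^ Module.finrank ℝ E * (ENNReal.ofReal (t ^ (r - 1 - 1)) *
        ∫⁻ y in {y | ENNReal.ofReal t < 2 * f y}, f y ∂μ) := by
  have htwo : 2 * (ENNReal.ofReal t / 2) = ENNReal.ofReal t :=
    ENNReal.mul_div_cancel two_ne_zero ENNReal.ofNat_ne_top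
  have hsplit : ENNReal.ofReal (t ^ (r - 1)) =
      ENNReal.ofReal (t ^ (r - 1 - 1)) * (2 * (ENNReal.ofReal t / 2)) := by
    rw [htwo, ← ENNReal.ofReal_mul (Real.rpow_nonneg ht.le _), ← Real.rpow_add_one ht.ne',
      sub_add_cancel]
  have hhalf (y : E) : ENNReal.ofReal t / 2 < f y ↔ ENNReal.ofReal t < 2 * f y := by
    rw [ENNReal.div_lt_iff (by simp) (by simp), mul_comm]
  have hweak := mul_measure_two_mul_lt_dyadicMaximal_le (μ := μ) hf (ENNReal.ofReal t / 2)
  simp_rw [hhalf, htwo] at hweak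
  calc _ = 2 * ENNReal.ofReal (t ^ (r - 1 - 1)) * (ENNReal.ofReal t / 2 *
        μ {x | ENNReal.ofReal t < dyadicMaximal μ f x}) := by rw [hsplit]; ring
    _ ≤ 2 * ENNReal.ofReal (t ^ (r - 1 - 1)) * (5 ^ Module.finrank ℝ E *
          ∫⁻ y in {y | ENNReal.ofReal t < 2 * f y}, f y ∂μ) := by gcongr
    _ = _ := by ring

lemma exists_lintegral_dyadicMaximal_rpow_le (μ : Measure E) [μ.IsAddHaarMeasure] {r : ℝ}
    (hr : 1 < r) :
    ∃ C ≠ ∞, ∀ f : E → ℝ≥0∞, Measurable f →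
      ∫⁻ x, dyadicMaximal μ f x ^ r ∂μ ≤ C * ∫⁻ x, f x ^ r ∂μ := by
  have hr1 : 0 < r - 1 := sub_pos.2 hr
  have hr1' : 0 < ENNReal.ofReal (r - 1) := ENNReal.ofReal_pos.2 hr1
  set D : ℝ≥0∞ := 2 * 5 ^ Module.finrank ℝ E
  refine ⟨ENNReal.ofReal r * D * (2 ^ (r - 1) / ENNReal.ofReal (r - 1)),
    by have := hr1'.ne'; finiteness, fun f hf => ?_⟩
  have hpow (y : E) : f y * (2 * f y) ^ (r - 1) = 2 ^ (r - 1) * f y ^ r := by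
    rw [ENNReal.mul_rpow_of_nonneg _ _ hr1.le, mul_left_comm]
    congr 1
    calc f y * f y ^ (r - 1) = f y ^ (1 : ℝ) * f y ^ (r - 1) := by rw [ENNReal.rpow_one]
      _ = f y ^ r := by
        rw [← ENNReal.rpow_add_of_nonneg _ _ zero_le_one hr1.le, add_sub_cancel]
  have hcake := lintegral_mul_rpow_eq_lintegral_Ioi (μ := μ) hf (hf.const_mul 2) hr1
  simp_rw [hpow] at hcake
  rw [lintegral_const_mul _ (hf.pow_const _)] at hcake
  calc ∫⁻ x, dyadicMaximal μ f x ^ r ∂μ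
      = ENNReal.ofReal r * ∫⁻ t in Set.Ioi (0 : ℝ), ENNReal.ofReal (t ^ (r - 1)) *
          μ {x | ENNReal.ofReal t < dyadicMaximal μ f x} := by
        simpa using lintegral_mul_rpow_eq_lintegral_Ioi (μ := μ) (w := 1) measurable_one
          (measurable_dyadicMaximal hf) (one_pos.trans hr)
    _ ≤ ENNReal.ofReal r * ∫⁻ t in Set.Ioi (0 : ℝ), D * (ENNReal.ofReal (t ^ (r - 1 - 1)) *
          ∫⁻ y in {y | ENNReal.ofReal t < 2 * f y}, f y ∂μ) := by
        gcongr ENNReal.ofReal r * ?_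
        exact setLIntegral_mono' measurableSet_Ioi fun t ht =>
          rpow_mul_measure_lt_dyadicMaximal_le hf r ht
    _ = ENNReal.ofReal r * D * (2 ^ (r - 1) / ENNReal.ofReal (r - 1)) *
          ∫⁻ x, f x ^ r ∂μ := by
        rw [lintegral_const_mul' _ _ (by finiteness), mul_assoc _ (2 ^ (r - 1) / _),
          ENNReal.mul_div_right_comm.symm, hcake,
          mul_comm (ENNReal.ofReal (r - 1)), ENNReal.mul_div_cancel_right hr1'.ne'
          ENNReal.ofReal_ne_top]
        ring

end MaximalTheorem

section Powers

lemma rpow_le_rpow_abs {t Z : ℝ≥0∞} (h : t ≤ Z) (hinv : t⁻¹ ≤ Z) (e : ℝ) : t ^ e ≤ Z ^ |e| := by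
  rcases le_total 0 e with he | he
  · rw [abs_of_nonneg he]
    gcongr
  · rw [abs_of_nonpos he, ← inv_inv (t ^ e), ← ENNReal.rpow_neg, ← ENNReal.inv_rpow]
    exact ENNReal.rpow_le_rpow hinv (neg_nonneg.2 he)

lemma rpow_le_of_mul_log_le {t D : ℝ≥0∞} {X K B c e : ℝ} (hD : 1 ≤ D) (hX : 1 ≤ X) (hK : 0 ≤ K)
    (h : t ≤ D * ENNReal.ofReal X ^ K) (hinv : t⁻¹ ≤ D * ENNReal.ofReal X ^ K)
    (hB : |e| ≤ B) (hc : |e| * Real.log X ≤ c) :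
    t ^ e ≤ D ^ B * ENNReal.ofReal (Real.exp (K * c)) := by
  have hX0 : 0 < X := one_pos.trans_le hX
  refine (rpow_le_rpow_abs h hinv e).trans ?_
  rw [ENNReal.mul_rpow_of_nonneg _ _ (abs_nonneg e)]
  gcongr
  rw [← ENNReal.rpow_mul, ENNReal.ofReal_rpow_of_pos hX0, Real.rpow_def_of_pos hX0]
  refine ENNReal.ofReal_le_ofReal (Real.exp_le_exp.2 ?_)
  linarith [mul_le_mul_of_nonneg_left hc hK]

lemma rpow_le_mul_rpow_of_sub {t C : ℝ≥0∞} (ht0 : t ≠ 0) (ht : t ≠ ∞) {s r : ℝ}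
    (h : t ^ (s - r) ≤ C) : t ^ s ≤ C * t ^ r := by
  calc t ^ s = t ^ (s - r) * t ^ r := by rw [← ENNReal.rpow_add _ _ ht0 ht, sub_add_cancel]
    _ ≤ C * t ^ r := by gcongr

lemma iSup_rpow_le {ι : Sort*} {A : ι → ℝ≥0∞} {s : ℝ} (hs : 0 < s) {Z : ℝ≥0∞}
    (h : ∀ i, A i ^ s ≤ Z) : (⨆ i, A i) ^ s ≤ Z :=
  (ENNReal.le_rpow_inv_iff hs).1 (iSup_le fun i => (ENNReal.le_rpow_inv_iff hs).2 (h i))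

lemma le_add_rpow_mul_rpow {f t : ℝ≥0∞} {s : ℝ} (hs : 1 ≤ s) (ht0 : t ≠ 0) (ht : t ≠ ∞) :
    f ≤ t + f ^ s * t ^ (1 - s) := by
  rcases le_total f t with h | h
  · exact h.trans le_self_add
  refine le_trans ?_ le_add_self
  have hf0 : f ≠ 0 := (pos_iff_ne_zero.2 ht0 |>.trans_le h).ne'
  rcases eq_or_ne f ∞ with rfl | hf
  · rw [ENNReal.top_rpow_of_pos (by linarith),
      ENNReal.top_mul (ENNReal.rpow_pos (pos_iff_ne_zero.2 ht0) ht).ne']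
  · calc f = f ^ s * f ^ (1 - s) := by
          rw [← ENNReal.rpow_add _ _ hf0 hf, add_sub_cancel, ENNReal.rpow_one]
      _ ≤ f ^ s * t ^ (1 - s) := by
          rw [← neg_sub, ENNReal.rpow_neg, ENNReal.rpow_neg]
          gcongr

lemma one_le_exp_one_add {s : ℝ} (hs : 0 ≤ s) : 1 ≤ Real.exp 1 + s := by
  linarith [Real.one_le_exp zero_le_one]

end Powers

section LogHolderExponent

/-- A real exponent `P` with values in `[a, b] ⊆ [1, ∞)` that is locally log-Hölder continuous
with constant `c`. The modulus of continuity is tested at every radius `R ≥ dist x y`, so that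
nothing has to be said about the diagonal. -/
structure LogHolderExponent {X : Type*} [PseudoMetricSpace X] [MeasurableSpace X] (P : X → ℝ)
    (a b c : ℝ) : Prop where
  measurable : Measurable P
  one_le : 1 ≤ a
  lower : ∀ x, a ≤ P x
  upper : ∀ x, P x ≤ b
  loc : ∀ (x y : X) (R : ℝ), 0 < R → dist x y ≤ R →
    |P x - P y| * Real.log (Real.exp 1 + R⁻¹) ≤ c

/-- A `LogHolderExponent` that tends logarithmically to `Pi` at infinity. -/
structure DecayingLogHolderExponent {E : Type*} [NormedAddCommGroup E] [MeasurableSpace E]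
    (P : E → ℝ) (Pi a b c : ℝ) : Prop extends LogHolderExponent P a b c where
  inf_lower : a ≤ Pi
  inf_upper : Pi ≤ b
  decay : ∀ x : E, |P x - Pi| * Real.log (Real.exp 1 + ‖x‖) ≤ c

namespace LogHolderExponent

variable {X : Type*} [PseudoMetricSpace X] [MeasurableSpace X] {P : X → ℝ} {a b c : ℝ}

lemma one_le_apply (h : LogHolderExponent P a b c) (x : X) : 1 ≤ P x := h.one_le.trans (h.lower x)

lemma pos (h : LogHolderExponent P a b c) (x : X) : 0 < P x := one_pos.trans_le (h.one_le_apply x)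

lemma abs_sub_le (h : LogHolderExponent P a b c) (x y : X) : |P x - P y| ≤ b :=
  (abs_sub_le_of_nonneg_of_le (h.pos x).le (h.upper x) (h.pos y).le (h.upper y))

lemma rpow_sub_le (h : LogHolderExponent P a b c) {D : ℝ≥0∞} (hD : 1 ≤ D) {K : ℝ}
    (hK : 0 ≤ K) {t : ℝ≥0∞} {x y : X} {R : ℝ} (hR : 0 < R) (hxy : dist x y ≤ R)
    (ht : t ≤ D * ENNReal.ofReal (Real.exp 1 + R⁻¹) ^ K)
    (hinv : t⁻¹ ≤ D * ENNReal.ofReal (Real.exp 1 + R⁻¹) ^ K) :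
    t ^ (P x - P y) ≤ D ^ b * ENNReal.ofReal (Real.exp (K * c)) :=
  rpow_le_of_mul_log_le hD (one_le_exp_one_add (by positivity)) hK ht hinv (h.abs_sub_le x y)
    (h.loc x y R hR hxy)

lemma add_rpow_le (h : LogHolderExponent P a b c) (x : X) (s t : ℝ≥0∞) :
    (s + t) ^ P x ≤ 2 ^ b * (s ^ P x + t ^ P x) := by
  refine (ENNReal.add_rpow_le_two_rpow_mul_rpow_add_rpow s t (h.pos x).le).trans ?_
  gcongr
  · exact one_le_two
  · exact h.upper x

lemma lintegral_add_rpow_le (h : LogHolderExponent P a b c) {μ : Measure X} {f : X → ℝ≥0∞}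
    (hf : Measurable f) (g : X → ℝ≥0∞) :
    ∫⁻ x, (f x + g x) ^ P x ∂μ ≤ 2 ^ b * (∫⁻ x, f x ^ P x ∂μ + ∫⁻ x, g x ^ P x ∂μ) := by
  rw [← lintegral_add_left (hf.pow h.measurable), ← lintegral_const_mul' _ _ (by finiteness)]
  exact lintegral_mono fun x => h.add_rpow_le x _ _

end LogHolderExponent

namespace DecayingLogHolderExponent

variable {E : Type*} [NormedAddCommGroup E] [MeasurableSpace E] {P : E → ℝ} {Pi a b c : ℝ}

lemma one_le_inf (h : DecayingLogHolderExponent P Pi a b c) : 1 ≤ Pi := h.one_le.trans h.inf_lower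

lemma abs_sub_inf_le (h : DecayingLogHolderExponent P Pi a b c) (x : E) : |P x - Pi| ≤ b :=
  abs_sub_le_of_nonneg_of_le (h.pos x).le (h.upper x) (zero_le_one.trans h.one_le_inf) h.inf_upper

end DecayingLogHolderExponent

/-- The weight `(e + |x|)^{-(d+1)}` on a `d`-dimensional space: an integrable function that
absorbs the error made when an exponent is replaced by its limit at infinity. -/
def decayWeight {E : Type*} [NormedAddCommGroup E] [NormedSpace ℝ E] (x : E) : ℝ≥0∞ :=
  ENNReal.ofReal (Real.exp 1 + ‖x‖) ^ (-((Module.finrank ℝ E : ℝ) + 1))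

variable {E : Type*} [NormedAddCommGroup E] [NormedSpace ℝ E]

lemma decayWeight_pos (x : E) : 0 < decayWeight x :=
  ENNReal.rpow_pos (ENNReal.ofReal_pos.2 (by positivity)) ENNReal.ofReal_ne_top

variable [MeasurableSpace E]

@[fun_prop]
lemma measurable_decayWeight [OpensMeasurableSpace E] :
    Measurable (decayWeight : E → ℝ≥0∞) := by
  unfold decayWeight
  fun_prop

lemma lintegral_decayWeight_ne_top [FiniteDimensional ℝ E] [BorelSpace E] (μ : Measure E)
    [μ.IsAddHaarMeasure] : ∫⁻ x : E, decayWeight x ∂μ ≠ ∞ := by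
  refine ne_top_of_le_ne_top (finite_integral_one_add_norm (μ := μ) (lt_add_one _)).ne
    (lintegral_mono fun x => ?_)
  have hpos : 0 < 1 + ‖x‖ := by positivity
  rw [decayWeight, ENNReal.ofReal_rpow_of_pos (by positivity)]
  exact ENNReal.ofReal_le_ofReal (Real.rpow_le_rpow_of_nonpos hpos
    (by linarith [Real.one_le_exp zero_le_one]) (neg_nonpos.2 (by positivity)))

namespace DecayingLogHolderExponent

variable {P : E → ℝ} {Pi a b c : ℝ}

lemma rpow_le_of_decayWeight_le (h : DecayingLogHolderExponent P Pi a b c) {t : ℝ≥0∞}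
    (ht : t ≤ 1) {x : E} (hx : decayWeight x ≤ t) {e : ℝ} (heq : |e| = |P x - Pi|) :
    t ^ e ≤ ENNReal.ofReal (Real.exp ((Module.finrank ℝ E + 1) * c)) := by
  have hX : 1 ≤ Real.exp 1 + ‖x‖ := one_le_exp_one_add (norm_nonneg x)
  have hinv : t⁻¹ ≤ 1 * ENNReal.ofReal (Real.exp 1 + ‖x‖) ^ ((Module.finrank ℝ E : ℝ) + 1) := by
    rw [one_mul, ENNReal.inv_le_iff_inv_le, ← ENNReal.rpow_neg]
    exact hx
  have hle : t ≤ 1 * ENNReal.ofReal (Real.exp 1 + ‖x‖) ^ ((Module.finrank ℝ E : ℝ) + 1) := by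
    rw [one_mul]
    exact ht.trans (ENNReal.one_le_rpow (ENNReal.one_le_ofReal.2 hX) (by positivity))
  simpa using rpow_le_of_mul_log_le le_rfl hX (by positivity) hle hinv (heq ▸ h.abs_sub_inf_le x)
    (heq ▸ h.decay x)

/-- For `t` below the weight the claim is trivial, since both exponents are at least one; above
it, `t ^ (P x - Pi)` is bounded by the decay condition. -/
lemma rpow_le_rpow_inf (h : DecayingLogHolderExponent P Pi a b c) {t : ℝ≥0∞} (ht : t ≤ 1)
    (x : E) :
    t ^ P x ≤ ENNReal.ofReal (Real.exp ((Module.finrank ℝ E + 1) * c)) * t ^ Pi + decayWeight x ∧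
    t ^ Pi ≤
      ENNReal.ofReal (Real.exp ((Module.finrank ℝ E + 1) * c)) * t ^ P x + decayWeight x := by
  rcases le_total t (decayWeight x) with hlt | hge
  · exact ⟨(ENNReal.rpow_le_self_of_le_one ht (h.one_le_apply x)).trans (hlt.trans le_add_self),
      (ENNReal.rpow_le_self_of_le_one ht h.one_le_inf).trans (hlt.trans le_add_self)⟩
  · have ht0 : t ≠ 0 := ((decayWeight_pos x).trans_le hge).ne'
    have htop : t ≠ ∞ := ne_top_of_le_ne_top one_ne_top ht
    exact ⟨(rpow_le_mul_rpow_of_sub ht0 htop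
        (h.rpow_le_of_decayWeight_le ht hge rfl)).trans le_self_add,
      (rpow_le_mul_rpow_of_sub ht0 htop
        (h.rpow_le_of_decayWeight_le ht hge (abs_sub_comm _ _))).trans le_self_add⟩

end DecayingLogHolderExponent

end LogHolderExponent

section ModularMaximal

lemma rpow_lintegral_le_of_ae_le {X : Type*} [MeasurableSpace X] {ν : Measure X}
    (hν : ν Set.univ ≤ 1) {f g : X → ℝ≥0∞} {r : ℝ} (hr : 0 ≤ r) {C t : ℝ≥0∞} (hC : C ≠ ∞)
    (ht0 : t ≠ 0) (ht : t ≠ ∞) (htf : ∫⁻ y, f y ∂ν = t + t)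
    (h : ∀ᵐ y ∂ν, f y ≤ t + C * t ^ (1 - r) * g y) :
    (∫⁻ y, f y ∂ν) ^ r ≤ 2 ^ r * C * ∫⁻ y, g y ∂ν := by
  have hpow : t ^ (1 - r) ≠ ∞ := ENNReal.rpow_ne_top_of_ne_zero ht0 ht
  have hmean : t + t ≤ t + C * t ^ (1 - r) * ∫⁻ y, g y ∂ν :=
    calc t + t = ∫⁻ y, f y ∂ν := htf.symm
      _ ≤ ∫⁻ y, (t + C * t ^ (1 - r) * g y) ∂ν := lintegral_mono_ae h
      _ = t * ν Set.univ + C * t ^ (1 - r) * ∫⁻ y, g y ∂ν := by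
        rw [lintegral_add_left measurable_const, lintegral_const,
          lintegral_const_mul' _ _ (by finiteness)]
      _ ≤ t + C * t ^ (1 - r) * ∫⁻ y, g y ∂ν := by
        gcongr
        exact mul_le_of_le_one_right zero_le hν
  calc (∫⁻ y, f y ∂ν) ^ r = 2 ^ r * (t * t ^ (r - 1)) := by
        rw [htf, ← two_mul, ENNReal.mul_rpow_of_nonneg _ _ hr]
        congr 1
        calc t ^ r = t ^ (1 : ℝ) * t ^ (r - 1) := by
              rw [← ENNReal.rpow_add _ _ ht0 ht, add_sub_cancel]
          _ = t * t ^ (r - 1) := by rw [ENNReal.rpow_one]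
    _ ≤ 2 ^ r * (C * t ^ (1 - r) * (∫⁻ y, g y ∂ν) * t ^ (r - 1)) := by
        gcongr
        exact (ENNReal.add_le_add_iff_left ht).1 hmean
    _ = 2 ^ r * C * (∫⁻ y, g y ∂ν) * (t ^ (1 - r) * t ^ (r - 1)) := by ring
    _ = 2 ^ r * C * ∫⁻ y, g y ∂ν := by
        rw [← ENNReal.rpow_add _ _ ht0 ht, sub_add_sub_cancel, sub_self, ENNReal.rpow_zero, mul_one]

namespace LogHolderExponent

variable {X : Type*} [PseudoMetricSpace X] [MeasurableSpace X] {P : X → ℝ} {a b c : ℝ}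

lemma rpow_one_sub_div_le (h : LogHolderExponent P a b c) {D : ℝ≥0∞} (hD : 1 ≤ D) {K : ℝ}
    (hK : 0 ≤ K) {t : ℝ≥0∞} (ht0 : t ≠ 0) (ht : t ≠ ∞) {x y : X} {R : ℝ} (hR : 0 < R)
    (hxy : dist x y ≤ R) (hle : t ≤ D * ENNReal.ofReal (Real.exp 1 + R⁻¹) ^ K)
    (hinv : t⁻¹ ≤ D * ENNReal.ofReal (Real.exp 1 + R⁻¹) ^ K) :
    t ^ (1 - P y / a) ≤
      (D ^ b * ENNReal.ofReal (Real.exp (K * c))) ^ a⁻¹ * t ^ (1 - P x / a) := by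
  have ha : 0 < a := one_pos.trans_le h.one_le
  refine rpow_le_mul_rpow_of_sub ht0 ht ?_
  have hexp : 1 - P y / a - (1 - P x / a) = (P x - P y) * a⁻¹ := by ring
  rw [hexp, ENNReal.rpow_mul]
  exact ENNReal.rpow_le_rpow (h.rpow_sub_le hD hK hR hxy hle hinv) (inv_nonneg.2 ha.le)

/-- With `t` half of the average of `f`, the powers `t ^ P x` and `t ^ P y` are comparable for `y`
in the ball, whence `f y ≤ t + C t^{1 - P x / a} f y ^ (P y / a)`; averaging over `y` absorbs
`t`. -/
lemma rpow_laverage_le_of_one_le [OpensMeasurableSpace X] {μ : Measure X}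
    (h : LogHolderExponent P a b c) {D : ℝ≥0∞} (hD : 2 ≤ D) (hDtop : D ≠ ∞) {K : ℝ} (hK : 0 ≤ K)
    {f : X → ℝ≥0∞} {x : X} {R : ℝ} (hR : 0 < R)
    (hone : 1 ≤ ⨍⁻ y in Metric.closedBall x R, f y ∂μ)
    (hle : ⨍⁻ y in Metric.closedBall x R, f y ∂μ ≤
      D * ENNReal.ofReal (Real.exp 1 + R⁻¹) ^ K) :
    (⨍⁻ y in Metric.closedBall x R, f y ∂μ) ^ (P x / a) ≤
      2 ^ (b / a) * (D ^ b * ENNReal.ofReal (Real.exp (K * c))) ^ a⁻¹ *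
        ⨍⁻ y in Metric.closedBall x R, f y ^ (P y / a) ∂μ := by
  have ha : 0 < a := one_pos.trans_le h.one_le
  have hexp (y : X) : 1 ≤ P y / a := (one_le_div ha).2 (h.lower y)
  set A := ⨍⁻ y in Metric.closedBall x R, f y ∂μ
  have ht0 : A / 2 ≠ 0 := (ENNReal.half_pos (one_pos.trans_le hone).ne').ne'
  have ht : A / 2 ≠ ∞ := ENNReal.div_ne_top (ne_top_of_le_ne_top (by finiteness) hle) two_ne_zero
  have hinv : (A / 2)⁻¹ ≤ D * ENNReal.ofReal (Real.exp 1 + R⁻¹) ^ K :=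
    calc (A / 2)⁻¹ = 2 * A⁻¹ := by rw [ENNReal.inv_div (by simp) (by simp), div_eq_mul_inv]
      _ ≤ D * 1 ^ K := by
        rw [ENNReal.one_rpow]
        exact mul_le_mul' hD (ENNReal.inv_le_one.2 hone)
      _ ≤ _ := by
        gcongr
        exact ENNReal.one_le_ofReal.2 (one_le_exp_one_add (by positivity))
  set C := (D ^ b * ENNReal.ofReal (Real.exp (K * c))) ^ a⁻¹
  have hpt (y : X) (hy : y ∈ Metric.closedBall x R) :
      f y ≤ A / 2 + C * (A / 2) ^ (1 - P x / a) * f y ^ (P y / a) := by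
    refine (le_add_rpow_mul_rpow (hexp y) ht0 ht).trans ?_
    rw [mul_comm (f y ^ _)]
    gcongr
    exact h.rpow_one_sub_div_le (one_le_two.trans hD) hK ht0 ht hR
      ((dist_comm x y).trans_le hy) (ENNReal.half_le_self.trans hle) hinv
  calc A ^ (P x / a) ≤ 2 ^ (P x / a) * C * ⨍⁻ y in Metric.closedBall x R, f y ^ (P y / a) ∂μ := by
        refine rpow_lintegral_le_of_ae_le (ENNReal.inv_mul_le_one _) (by linarith [hexp x])
          (by finiteness) ht0 ht (ENNReal.add_halves A).symm (Measure.ae_smul_measure ?_ _)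
        exact ae_restrict_of_forall_mem measurableSet_closedBall hpt
    _ ≤ _ := by
        gcongr
        · exact one_le_two
        · exact h.upper x

end LogHolderExponent

variable {E : Type*} [NormedAddCommGroup E] [NormedSpace ℝ E] [FiniteDimensional ℝ E]
  [MeasurableSpace E] [BorelSpace E] {P : E → ℝ} {Pi a b c : ℝ}

lemma laverage_closedBall_le (μ : Measure E) [μ.IsAddHaarMeasure] (f : E → ℝ≥0∞) (x : E) {R : ℝ}
    (hR : 0 < R) : ⨍⁻ y in Metric.closedBall x R, f y ∂μ ≤
      (μ (Metric.ball 0 1))⁻¹ * ENNReal.ofReal R⁻¹ ^ (Module.finrank ℝ E : ℝ) * ∫⁻ y, f y ∂μ := by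
  rw [setLAverage_eq, ENNReal.div_eq_inv_mul, Measure.addHaar_closedBall μ x hR.le,
    ENNReal.mul_inv (Or.inr measure_ball_lt_top.ne) (Or.inl ENNReal.ofReal_ne_top),
    ENNReal.ofReal_pow hR.le, ENNReal.ofReal_inv_of_pos hR, ENNReal.rpow_natCast, ENNReal.inv_pow,
    mul_comm (_ ^ _)]
  gcongr
  exact Measure.restrict_le_self

namespace LogHolderExponent

lemma exists_rpow_laverage_le (h : LogHolderExponent P a b c) (μ : Measure E)
    [μ.IsAddHaarMeasure] : ∃ C ≠ ∞, ∀ f : E → ℝ≥0∞, (∀ x, f x = 0 ∨ 1 ≤ f x) →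
      ∫⁻ x, f x ^ P x ∂μ ≤ 1 → ∀ (x : E) (R : ℝ), 0 < R →
        (⨍⁻ y in Metric.closedBall x R, f y ∂μ) ^ (P x / a) ≤
          C * ⨍⁻ y in Metric.closedBall x R, f y ^ (P y / a) ∂μ := by
  have ha : 0 < a := one_pos.trans_le h.one_le
  set V := μ (Metric.ball (0 : E) 1)
  have hV : V ≠ 0 := (Metric.measure_ball_pos μ 0 one_pos).ne'
  set d : ℝ := (Module.finrank ℝ E : ℝ)
  set C : ℝ≥0∞ := 2 ^ (b / a) * ((2 + V⁻¹) ^ b * ENNReal.ofReal (Real.exp (d * c))) ^ a⁻¹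
  refine ⟨1 + C, by finiteness, fun f hf hmod x R hR => ?_⟩
  have hfpow (y : E) {e : ℝ} (he : 1 ≤ e) : f y ≤ f y ^ e := by
    rcases hf y with h0 | h1
    · simp [h0]
    · exact ENNReal.le_rpow_self_of_one_le h1 he
  set A := ⨍⁻ y in Metric.closedBall x R, f y ∂μ
  have hexp (y : E) : 1 ≤ P y / a := (one_le_div ha).2 (h.lower y)
  rw [add_mul, one_mul]
  rcases le_total A 1 with hA | hA
  · exact ((ENNReal.rpow_le_self_of_le_one hA (hexp x)).trans
      (lintegral_mono fun y => hfpow y (hexp y))).trans le_self_add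
  · refine (h.rpow_laverage_le_of_one_le le_self_add (by finiteness) (by positivity) hR hA
      ?_).trans le_add_self
    calc A ≤ V⁻¹ * ENNReal.ofReal R⁻¹ ^ d * ∫⁻ y, f y ∂μ := laverage_closedBall_le μ f x hR
      _ ≤ (2 + V⁻¹) * ENNReal.ofReal (Real.exp 1 + R⁻¹) ^ d * 1 := by
        gcongr
        · exact le_add_self
        · linarith [Real.exp_pos 1]
        · exact (lintegral_mono fun y => hfpow y (h.one_le_apply y)).trans hmod
      _ = _ := mul_one _

/-- The previous lemma gives `(M f) ^ (P / a) ≤ C M (f ^ (P / a))`, to which the maximal inequality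
with the constant exponent `a` applies. -/
lemma exists_lintegral_dyadicMaximal_rpow_le_of_one_le (h : LogHolderExponent P a b c)
    (ha : 1 < a) (μ : Measure E) [μ.IsAddHaarMeasure] : ∃ C ≠ ∞, ∀ f : E → ℝ≥0∞, Measurable f →
      (∀ x, f x = 0 ∨ 1 ≤ f x) → ∫⁻ x, f x ^ P x ∂μ ≤ 1 →
        ∫⁻ x, dyadicMaximal μ f x ^ P x ∂μ ≤ C := by
  obtain ⟨C, hC, havg⟩ := h.exists_rpow_laverage_le μ
  obtain ⟨D, hD, hmax⟩ := exists_lintegral_dyadicMaximal_rpow_le μ ha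
  have ha0 : 0 < a := one_pos.trans ha
  refine ⟨C ^ a * D, by finiteness, fun f hf hf1 hmod => ?_⟩
  set g : E → ℝ≥0∞ := fun y => f y ^ (P y / a)
  have hg : Measurable g := hf.pow (h.measurable.div_const a)
  have hpt (x : E) : dyadicMaximal μ f x ^ P x ≤ C ^ a * dyadicMaximal μ g x ^ a := by
    have hroot : dyadicMaximal μ f x ^ (P x / a) ≤ C * dyadicMaximal μ g x :=
      iSup_rpow_le (div_pos (h.pos x) ha0) fun k =>
        (havg f hf1 hmod x (2 ^ k) (by positivity)).trans
          (mul_le_mul_right (laverage_le_dyadicMaximal g k x) C)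
    rw [← ENNReal.mul_rpow_of_nonneg _ _ ha0.le, ← div_mul_cancel₀ (P x) ha0.ne',
      ENNReal.rpow_mul]
    exact ENNReal.rpow_le_rpow hroot ha0.le
  calc ∫⁻ x, dyadicMaximal μ f x ^ P x ∂μ
      ≤ C ^ a * ∫⁻ x, dyadicMaximal μ g x ^ a ∂μ := by
        rw [← lintegral_const_mul' _ _ (by finiteness)]
        exact lintegral_mono hpt
    _ ≤ C ^ a * (D * ∫⁻ x, g x ^ a ∂μ) := by
        gcongr
        exact hmax g hg
    _ = C ^ a * (D * ∫⁻ x, f x ^ P x ∂μ) := by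
        simp_rw [g, ← ENNReal.rpow_mul, div_mul_cancel₀ _ ha0.ne']
    _ ≤ C ^ a * (D * 1) := by gcongr
    _ = C ^ a * D := by rw [mul_one]

end LogHolderExponent

namespace DecayingLogHolderExponent

lemma exists_lintegral_dyadicMaximal_rpow_le_of_le_one (h : DecayingLogHolderExponent P Pi a b c)
    (hPi : 1 < Pi) (μ : Measure E) [μ.IsAddHaarMeasure] : ∃ C ≠ ∞, ∀ f : E → ℝ≥0∞,
      Measurable f → (∀ x, f x ≤ 1) → ∫⁻ x, f x ^ P x ∂μ ≤ 1 →
        ∫⁻ x, dyadicMaximal μ f x ^ P x ∂μ ≤ C := by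
  obtain ⟨C, hC, hmax⟩ := exists_lintegral_dyadicMaximal_rpow_le μ hPi
  set D := ENNReal.ofReal (Real.exp ((Module.finrank ℝ E + 1) * c))
  set I := ∫⁻ x : E, decayWeight x ∂μ
  have hI : I ≠ ∞ := lintegral_decayWeight_ne_top μ
  refine ⟨D * (C * (D + I)) + I, by finiteness, fun f hf hf1 hmod => ?_⟩
  calc ∫⁻ x, dyadicMaximal μ f x ^ P x ∂μ
      ≤ ∫⁻ x, (D * dyadicMaximal μ f x ^ Pi + decayWeight x) ∂μ :=
        lintegral_mono fun x => (h.rpow_le_rpow_inf (dyadicMaximal_le_of_le hf1 x) x).1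
    _ = D * ∫⁻ x, dyadicMaximal μ f x ^ Pi ∂μ + I := by
        rw [lintegral_add_right _ measurable_decayWeight,
          lintegral_const_mul' _ _ ENNReal.ofReal_ne_top]
    _ ≤ D * (C * ∫⁻ x, f x ^ Pi ∂μ) + I := by
        gcongr
        exact hmax f hf
    _ ≤ D * (C * ∫⁻ x, (D * f x ^ P x + decayWeight x) ∂μ) + I := by
        gcongr with x
        exact (h.rpow_le_rpow_inf (hf1 x) x).2
    _ = D * (C * (D * ∫⁻ x, f x ^ P x ∂μ + I)) + I := by
        rw [lintegral_add_right _ measurable_decayWeight,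
          lintegral_const_mul' _ _ ENNReal.ofReal_ne_top]
    _ ≤ D * (C * (D * 1 + I)) + I := by gcongr
    _ = _ := by rw [mul_one]

/-- The parts of `f` above and below the level `1` are controlled by the local continuity of `P`
and by its decay at infinity, respectively. -/
lemma exists_lintegral_dyadicMaximal_rpow_le (h : DecayingLogHolderExponent P Pi a b c)
    (ha : 1 < a) (μ : Measure E) [μ.IsAddHaarMeasure] : ∃ C ≠ ∞, ∀ f : E → ℝ≥0∞, Measurable f →
      ∫⁻ x, f x ^ P x ∂μ ≤ 1 → ∫⁻ x, dyadicMaximal μ f x ^ P x ∂μ ≤ C := by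
  obtain ⟨C₁, hC₁, hsmall⟩ :=
    h.exists_lintegral_dyadicMaximal_rpow_le_of_le_one (ha.trans_le h.inf_lower) μ
  obtain ⟨C₂, hC₂, hlarge⟩ :=
    h.toLogHolderExponent.exists_lintegral_dyadicMaximal_rpow_le_of_one_le ha μ
  refine ⟨2 ^ b * (C₁ + C₂), by finiteness, fun f hf hmod => ?_⟩
  set s : Set E := {x | f x ≤ 1}
  have hs : MeasurableSet s := measurableSet_le hf measurable_const
  have hmods (t : Set E) : ∫⁻ x, t.indicator f x ^ P x ∂μ ≤ 1 :=
    (lintegral_mono fun x => ENNReal.rpow_le_rpow (Set.indicator_le_self t f x)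
      (h.pos x).le).trans hmod
  have hsub (x : E) : dyadicMaximal μ f x ≤
      dyadicMaximal μ (s.indicator f) x + dyadicMaximal μ (sᶜ.indicator f) x := by
    conv_lhs => rw [← Set.indicator_self_add_compl s f]
    exact dyadicMaximal_add_le (hf.indicator hs) _ x
  calc ∫⁻ x, dyadicMaximal μ f x ^ P x ∂μ
      ≤ ∫⁻ x, (dyadicMaximal μ (s.indicator f) x + dyadicMaximal μ (sᶜ.indicator f) x) ^ P x ∂μ :=
        lintegral_mono fun x => ENNReal.rpow_le_rpow (hsub x) (h.pos x).le
    _ ≤ 2 ^ b * (∫⁻ x, dyadicMaximal μ (s.indicator f) x ^ P x ∂μ +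
          ∫⁻ x, dyadicMaximal μ (sᶜ.indicator f) x ^ P x ∂μ) :=
        h.lintegral_add_rpow_le (measurable_dyadicMaximal (hf.indicator hs)) _
    _ ≤ 2 ^ b * (C₁ + C₂) := by
        gcongr
        · refine hsmall _ (hf.indicator hs) (fun x => ?_) (hmods s)
          exact Set.indicator_apply_le' id fun _ => zero_le_one
        · refine hlarge _ (hf.indicator hs.compl) (fun x => ?_) (hmods sᶜ)
          by_cases hx : x ∈ s
          · exact Or.inl (Set.indicator_of_notMem (Set.notMem_compl_iff.2 hx) f)
          · rw [Set.indicator_of_mem hx]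
            exact Or.inr (not_le.1 hx).le

end DecayingLogHolderExponent

end ModularMaximal

section Convolution

variable {k f g h : Rn n → ℝ≥0∞}

lemma measurable_lconv (hf : Measurable f) (hg : Measurable g) : Measurable (lconv f g) := by
  have hjoint : Measurable fun p : Rn n × Rn n => f (p.1 - p.2) * g p.2 := by fun_prop
  exact hjoint.lintegral_prod_right'

lemma lconv_mono (f : Rn n → ℝ≥0∞) (hgh : g ≤ h) : lconv f g ≤ lconv f h :=
  fun _ => lintegral_mono fun y => mul_le_mul_right (hgh y) _

lemma lconv_add (hf : Measurable f) (hg : Measurable g) (h : Rn n → ℝ≥0∞) :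
    lconv f (g + h) = lconv f g + lconv f h := by
  funext x
  simp only [lconv, Pi.add_apply, mul_add]
  exact lintegral_add_left (by fun_prop) _

lemma lconv_const_mul (hf : Measurable f) (hg : Measurable g) (c : ℝ≥0∞) (x : Rn n) :
    lconv f (fun y => c * g y) x = c * lconv f g x := by
  simp only [lconv, mul_left_comm _ c]
  exact lintegral_const_mul _ (by fun_prop)

lemma lintegral_lconv_mul_of_even (hk : Measurable k) (heven : ∀ x, k (-x) = k x)
    (hf : Measurable f) (hg : Measurable g) :
    ∫⁻ x, lconv k f x * g x = ∫⁻ x, f x * lconv k g x := by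
  have hleft (x : Rn n) : lconv k f x * g x = ∫⁻ y, k (x - y) * f y * g x :=
    (lintegral_mul_const _ (by fun_prop)).symm
  have hright (y : Rn n) : f y * lconv k g y = ∫⁻ x, k (x - y) * f y * g x := by
    rw [lconv, ← lintegral_const_mul _ (by fun_prop)]
    refine lintegral_congr fun x => ?_
    rw [← heven (y - x), neg_sub]
    ring
  simp_rw [hleft, hright]
  exact lintegral_lintegral_swap (by fun_prop)

@[fun_prop]
lemma measurable_etaK (ν : ℕ) (m : ℝ) : Measurable (etaK ν m : Rn n → ℝ≥0∞) := by
  unfold etaK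
  fun_prop

lemma etaK_neg (ν : ℕ) (m : ℝ) (x : Rn n) : etaK ν m (-x) = etaK ν m x := by
  rw [etaK, norm_neg, etaK]

lemma etaK_le_tsum (ν : ℕ) {m : ℝ} (hm : 0 ≤ m) (z : Rn n) :
    etaK ν m z ≤ ∑' j : ℕ, ENNReal.ofReal (2 ^ (ν * n) * 2 ^ (-(j * m))) *
      (Metric.closedBall (0 : Rn n) (2 ^ ((j : ℤ) + 1 - ν))).indicator 1 z := by
  have hone : 1 ≤ 1 + 2 ^ ν * ‖z‖ := le_add_of_nonneg_right (by positivity)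
  obtain ⟨j, hj, hj'⟩ := exists_nat_pow_near hone one_lt_two
  refine le_trans ?_ (ENNReal.le_tsum j)
  have hz : z ∈ Metric.closedBall (0 : Rn n) (2 ^ ((j : ℤ) + 1 - ν)) := by
    rw [mem_closedBall_zero_iff, zpow_sub₀ two_ne_zero, le_div_iff₀ (by positivity)]
    have hcast : (2 : ℝ) ^ ((j : ℤ) + 1) = 2 ^ (j + 1) := by norm_cast
    rw [hcast, zpow_natCast]
    linarith
  rw [Set.indicator_of_mem hz, Pi.one_apply, mul_one]
  refine ENNReal.ofReal_le_ofReal ?_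
  gcongr
  calc (1 + 2 ^ ν * ‖z‖) ^ (-m) ≤ ((2 : ℝ) ^ j) ^ (-m) :=
        Real.rpow_le_rpow_of_nonpos (by positivity) hj (neg_nonpos.2 hm)
    _ = 2 ^ (-(j * m)) := by
        rw [← Real.rpow_natCast, ← Real.rpow_mul zero_le_two, mul_neg]

lemma lintegral_indicator_closedBall_sub_mul_le {E : Type*} [NormedAddCommGroup E]
    [NormedSpace ℝ E] [FiniteDimensional ℝ E] [MeasurableSpace E] [BorelSpace E] (μ : Measure E)
    [μ.IsAddHaarMeasure] (f : E → ℝ≥0∞) (k : ℤ) (x : E) :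
    ∫⁻ y, (Metric.closedBall (0 : E) (2 ^ k)).indicator 1 (x - y) * f y ∂μ ≤
      μ (Metric.closedBall x (2 ^ k)) * dyadicMaximal μ f x := by
  have hind (y : E) : (Metric.closedBall (0 : E) (2 ^ k)).indicator 1 (x - y) * f y =
      (Metric.closedBall x (2 ^ k)).indicator f y := by
    have hmem : x - y ∈ Metric.closedBall (0 : E) (2 ^ k) ↔ y ∈ Metric.closedBall x (2 ^ k) := by
      rw [mem_closedBall_zero_iff, ← dist_eq_norm, dist_comm, Metric.mem_closedBall]
    by_cases hy : y ∈ Metric.closedBall x (2 ^ k)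
    · simp [Set.indicator_of_mem hy, Set.indicator_of_mem (hmem.2 hy)]
    · simp [Set.indicator_of_notMem hy, Set.indicator_of_notMem (mt hmem.1 hy)]
  simp_rw [hind]
  rw [lintegral_indicator measurableSet_closedBall,
    ← measure_mul_setLAverage f measure_closedBall_lt_top.ne]
  gcongr
  exact laverage_le_dyadicMaximal f k x

lemma ofReal_mul_volume_closedBall_two_zpow (m : ℝ) (ν j : ℕ) (x : Rn n) :
    ENNReal.ofReal (2 ^ (ν * n) * 2 ^ (-(j * m))) *
      volume (Metric.closedBall x (2 ^ ((j : ℤ) + 1 - ν))) =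
    2 ^ n * volume (Metric.ball (0 : Rn n) 1) * ENNReal.ofReal (2 ^ (-(m - n))) ^ j := by
  have hpow : (2 : ℝ) ^ (ν * n) * 2 ^ (-(j * m)) * (2 ^ ((j : ℤ) + 1 - ν)) ^ n =
      2 ^ n * (2 ^ (-(m - n))) ^ j := by
    simp only [← Real.rpow_natCast, ← Real.rpow_intCast, ← Real.rpow_mul zero_le_two,
      ← Real.rpow_add two_pos]
    congr 1
    push_cast
    ring
  rw [Measure.addHaar_closedBall _ _ (by positivity), finrank_euclideanSpace_fin, ← mul_assoc,
    ← ENNReal.ofReal_mul (by positivity), hpow, ENNReal.ofReal_mul (by positivity),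
    ENNReal.ofReal_pow zero_le_two, ENNReal.ofReal_pow (by positivity), ENNReal.ofReal_ofNat]
  ring

lemma exists_lconv_etaK_le_dyadicMaximal (n : ℕ) {m : ℝ} (hm : n < m) :
    ∃ C ≠ ∞, ∀ (ν : ℕ) (f : Rn n → ℝ≥0∞), Measurable f → ∀ x,
      lconv (etaK ν m) f x ≤ C * dyadicMaximal volume f x := by
  set V := volume (Metric.ball (0 : Rn n) 1)
  set θ : ℝ≥0∞ := ENNReal.ofReal (2 ^ (-(m - n)))
  have hθ : θ < 1 := by
    rw [← ENNReal.ofReal_one, ENNReal.ofReal_lt_ofReal_iff one_pos]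
    exact Real.rpow_lt_one_of_one_lt_of_neg one_lt_two (by linarith)
  have hV : V ≠ ∞ := measure_ball_lt_top.ne
  have hsum : ∑' j : ℕ, θ ^ j ≠ ∞ := by
    rw [ENNReal.tsum_geometric]
    exact ENNReal.inv_ne_top.2 (tsub_pos_of_lt hθ).ne'
  refine ⟨2 ^ n * V * ∑' j : ℕ, θ ^ j, by finiteness, fun ν f hf x => ?_⟩
  set a : ℕ → ℝ≥0∞ := fun j => ENNReal.ofReal (2 ^ (ν * n) * 2 ^ (-(j * m)))
  set B : ℕ → Rn n → ℝ≥0∞ := fun j =>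
    (Metric.closedBall (0 : Rn n) (2 ^ ((j : ℤ) + 1 - ν))).indicator 1
  have hB (j : ℕ) : Measurable (B j) := measurable_one.indicator measurableSet_closedBall
  calc lconv (etaK ν m) f x ≤ ∫⁻ y, ∑' j, a j * (B j (x - y) * f y) := by
        refine lintegral_mono fun y => ?_
        simp_rw [← mul_assoc, ENNReal.tsum_mul_right]
        exact mul_le_mul_left (etaK_le_tsum ν (n.cast_nonneg.trans hm.le) (x - y)) _
    _ = ∑' j, a j * ∫⁻ y, B j (x - y) * f y := by
        rw [lintegral_tsum fun j => by fun_prop]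
        exact tsum_congr fun j => lintegral_const_mul _ (by fun_prop)
    _ ≤ ∑' j, a j * (volume (Metric.closedBall x (2 ^ ((j : ℤ) + 1 - ν))) *
          dyadicMaximal volume f x) := by
        gcongr with j
        exact lintegral_indicator_closedBall_sub_mul_le volume f _ x
    _ = 2 ^ n * V * (∑' j : ℕ, θ ^ j) * dyadicMaximal volume f x := by
        simp_rw [← mul_assoc, a, ofReal_mul_volume_closedBall_two_zpow, ENNReal.tsum_mul_right,
          ENNReal.tsum_mul_left]
        rfl

end Convolution

section Conjugate

lemma one_lt_conjExponent {s : ℝ} (hs : 1 < s) : 1 < s.conjExponent :=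
  (Real.HolderConjugate.conjExponent hs).symm.lt

lemma conjExponent_anti {s t : ℝ} (hs : 1 < s) (hst : s ≤ t) :
    t.conjExponent ≤ s.conjExponent := by
  rw [Real.conjExponent, Real.conjExponent, div_le_div_iff₀ (by linarith) (by linarith)]
  linarith

lemma abs_conjExponent_sub_le {a s t : ℝ} (ha : 1 < a) (hs : a ≤ s) (ht : a ≤ t) :
    |s.conjExponent - t.conjExponent| ≤ |s - t| / (a - 1) ^ 2 := by
  have : 0 < a - 1 := sub_pos.2 ha
  have hs1 : 0 < s - 1 := by linarith
  have ht1 : 0 < t - 1 := by linarith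
  have hdiff : s.conjExponent - t.conjExponent = (t - s) / ((s - 1) * (t - 1)) := by
    unfold Real.conjExponent
    field_simp
    ring
  rw [hdiff, abs_div, abs_sub_comm, abs_of_pos (mul_pos hs1 ht1), sq]
  gcongr

lemma LogHolderExponent.conjExponent {X : Type*} [PseudoMetricSpace X] [MeasurableSpace X]
    [Nonempty X] {P : X → ℝ} {a b c : ℝ} (h : LogHolderExponent P a b c) (ha : 1 < a) :
    LogHolderExponent (fun x => (P x).conjExponent) b.conjExponent a.conjExponent
      (c / (a - 1) ^ 2) where
  measurable := h.measurable.div (h.measurable.sub_const 1)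
  one_le := by
    obtain ⟨x⟩ := ‹Nonempty X›
    exact (one_lt_conjExponent ((ha.trans_le (h.lower x)).trans_le (h.upper x))).le
  lower x := conjExponent_anti (ha.trans_le (h.lower x)) (h.upper x)
  upper x := conjExponent_anti ha (h.lower x)
  loc x y R hR hxy := by
    have hlog : 0 ≤ Real.log (Real.exp 1 + R⁻¹) :=
      Real.log_nonneg (one_le_exp_one_add (by positivity))
    calc _ ≤ |P x - P y| / (a - 1) ^ 2 * Real.log (Real.exp 1 + R⁻¹) := by
          gcongr
          exact abs_conjExponent_sub_le ha (h.lower x) (h.lower y)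
      _ = |P x - P y| * Real.log (Real.exp 1 + R⁻¹) / (a - 1) ^ 2 := by ring
      _ ≤ _ := by
          gcongr
          exact h.loc x y R hR hxy

lemma DecayingLogHolderExponent.conjExponent {E : Type*} [NormedAddCommGroup E]
    [MeasurableSpace E] {P : E → ℝ} {Pi a b c : ℝ} (h : DecayingLogHolderExponent P Pi a b c)
    (ha : 1 < a) : DecayingLogHolderExponent (fun x => (P x).conjExponent) Pi.conjExponent
      b.conjExponent a.conjExponent (c / (a - 1) ^ 2) where
  toLogHolderExponent := h.toLogHolderExponent.conjExponent ha
  inf_lower := conjExponent_anti (ha.trans_le h.inf_lower) h.inf_upper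
  inf_upper := conjExponent_anti ha h.inf_lower
  decay x := by
    have hlog : 0 ≤ Real.log (Real.exp 1 + ‖x‖) :=
      Real.log_nonneg (one_le_exp_one_add (norm_nonneg x))
    calc _ ≤ |P x - Pi| / (a - 1) ^ 2 * Real.log (Real.exp 1 + ‖x‖) := by
          gcongr
          exact abs_conjExponent_sub_le ha (h.lower x) h.inf_lower
      _ = |P x - Pi| * Real.log (Real.exp 1 + ‖x‖) / (a - 1) ^ 2 := by ring
      _ ≤ _ := by
          gcongr
          exact h.decay x

lemma mul_le_rpow_add_rpow_conjExponent (s t : ℝ≥0∞) {p : ℝ} (hp : 1 < p) :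
    s * t ≤ s ^ p + t ^ p.conjExponent := by
  refine (ENNReal.young_inequality s t (Real.HolderConjugate.conjExponent hp)).trans ?_
  gcongr <;> refine ENNReal.div_le_of_le_mul (le_mul_of_one_le_right zero_le ?_)
  · exact ENNReal.one_le_ofReal.2 hp.le
  · exact ENNReal.one_le_ofReal.2 (one_lt_conjExponent hp).le

end Conjugate

section BoundedExponent

variable {X : Type*} [MeasurableSpace X] {μ : Measure X} {P : X → ℝ} {b : ℝ} {K : ℝ≥0∞}
  {f : X → ℝ≥0∞}

lemma lintegral_const_mul_rpow_le (hP : ∀ x, 0 ≤ P x) (hb : ∀ x, P x ≤ b) (hK : 1 ≤ K)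
    (hKtop : K ≠ ∞) (f : X → ℝ≥0∞) :
    ∫⁻ x, (K * f x) ^ P x ∂μ ≤ K ^ b * ∫⁻ x, f x ^ P x ∂μ := by
  have hKb : K ^ b ≠ ∞ := ENNReal.rpow_ne_top_of_ne_zero (one_pos.trans_le hK).ne' hKtop
  rw [← lintegral_const_mul' _ _ hKb]
  refine lintegral_mono fun x => ?_
  rw [ENNReal.mul_rpow_of_nonneg _ _ (hP x)]
  exact mul_le_mul_left (ENNReal.rpow_le_rpow_of_exponent_le hK (hb x)) _

lemma lintegral_inv_mul_rpow_le_one (hP : ∀ x, 1 ≤ P x) (hK : 1 ≤ K) (hKtop : K ≠ ∞)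
    (hf : ∫⁻ x, f x ^ P x ∂μ ≤ K) : ∫⁻ x, (K⁻¹ * f x) ^ P x ∂μ ≤ 1 := by
  have hK1 : K⁻¹ ≤ 1 := ENNReal.inv_le_one.2 hK
  calc ∫⁻ x, (K⁻¹ * f x) ^ P x ∂μ ≤ ∫⁻ x, K⁻¹ * f x ^ P x ∂μ := by
        refine lintegral_mono fun x => ?_
        rw [ENNReal.mul_rpow_of_nonneg _ _ (zero_le_one.trans (hP x))]
        exact mul_le_mul_left (ENNReal.rpow_le_self_of_le_one hK1 (hP x)) _
    _ = K⁻¹ * ∫⁻ x, f x ^ P x ∂μ :=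
        lintegral_const_mul' _ _ (ne_top_of_le_ne_top one_ne_top hK1)
    _ ≤ K⁻¹ * K := by gcongr
    _ = 1 := ENNReal.inv_mul_cancel (one_pos.trans_le hK).ne' hKtop

lemma lintegral_rpow_le_of_inv_mul (hP : ∀ x, 0 ≤ P x) (hb : ∀ x, P x ≤ b) (hK : 1 ≤ K)
    (hKtop : K ≠ ∞) (hf : ∫⁻ x, (K⁻¹ * f x) ^ P x ∂μ ≤ 1) : ∫⁻ x, f x ^ P x ∂μ ≤ K ^ b := by
  calc ∫⁻ x, f x ^ P x ∂μ = ∫⁻ x, (K * (K⁻¹ * f x)) ^ P x ∂μ := by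
        simp_rw [ENNReal.mul_inv_cancel_left (one_pos.trans_le hK).ne' hKtop]
    _ ≤ K ^ b * ∫⁻ x, (K⁻¹ * f x) ^ P x ∂μ := lintegral_const_mul_rpow_le hP hb hK hKtop _
    _ ≤ K ^ b := mul_le_of_le_one_right zero_le hf

lemma lintegral_rpow_le_one_of_dual_of_ne_top (hPm : Measurable P) (hP : ∀ x, 1 < P x)
    (hb : ∀ x, P x ≤ b) {D : X → ℝ≥0∞} (hD : Measurable D) (hDtop : ∀ x, D x ≠ ∞)
    (hN : ∫⁻ x, D x ^ P x ∂μ ≠ ∞)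
    (hdual : ∀ w : X → ℝ≥0∞, Measurable w → ∫⁻ x, w x ^ (P x).conjExponent ∂μ ≤ 1 →
      ∫⁻ x, D x * w x ∂μ ≤ 1) :
    ∫⁻ x, D x ^ P x ∂μ ≤ 1 := by
  by_contra! hN1
  set N := ∫⁻ x, D x ^ P x ∂μ with hNdef
  have hN0 : N ≠ 0 := (one_pos.trans hN1).ne'
  have hP0 (x : X) : 0 < P x := one_pos.trans (hP x)
  obtain ⟨x₀⟩ : Nonempty X := by
    by_contra hX
    rw [not_nonempty_iff] at hX
    simp [hNdef] at hN0
  -- a normalised multiple of `D ^ (P - 1)` attains the dual norm of `D`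
  set w : X → ℝ≥0∞ := fun x => D x ^ (P x - 1) * N ^ (-(1 - (P x)⁻¹)) with hw
  have hwm : Measurable w :=
    (hD.pow (hPm.sub_const 1)).mul (measurable_const.pow (hPm.inv.const_sub 1).neg)
  have hwmod : ∫⁻ x, w x ^ (P x).conjExponent ∂μ ≤ 1 := by
    have hwpow (x : X) : w x ^ (P x).conjExponent = D x ^ P x * N⁻¹ := by
      have h1 : P x - 1 ≠ 0 := (sub_pos.2 (hP x)).ne'
      have h2 : P x ≠ 0 := (hP0 x).ne'
      rw [ENNReal.mul_rpow_of_nonneg _ _ (one_pos.trans (one_lt_conjExponent (hP x))).le,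
        ← ENNReal.rpow_mul, ← ENNReal.rpow_mul, ← ENNReal.rpow_neg_one, Real.conjExponent]
      congr 2 <;> field_simp
    simp_rw [hwpow]
    rw [lintegral_mul_const _ (hD.pow hPm), ENNReal.mul_inv_cancel hN0 hN]
  have hlow (x : X) : D x ^ P x * N ^ (b⁻¹ - 1) ≤ D x * w x := by
    have hpow : D x * D x ^ (P x - 1) = D x ^ P x := by
      rcases eq_or_ne (D x) 0 with h0 | h0
      · rw [h0, zero_mul, ENNReal.zero_rpow_of_pos (hP0 x)]
      · rw [ENNReal.rpow_sub _ _ h0 (hDtop x), ENNReal.rpow_one,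
          ENNReal.mul_div_cancel h0 (hDtop x)]
    rw [hw, ← mul_assoc, hpow]
    gcongr
    · exact hN1.le
    · linarith [inv_anti₀ (hP0 x) (hb x)]
  have hNb : N ^ b⁻¹ ≤ 1 :=
    calc N ^ b⁻¹ = N * N ^ (b⁻¹ - 1) := by
          rw [ENNReal.rpow_sub _ _ hN0 hN, ENNReal.rpow_one, ENNReal.mul_div_cancel hN0 hN]
      _ = ∫⁻ x, D x ^ P x * N ^ (b⁻¹ - 1) ∂μ := (lintegral_mul_const _ (hD.pow hPm)).symm
      _ ≤ ∫⁻ x, D x * w x ∂μ := lintegral_mono hlow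
      _ ≤ 1 := hdual w hwm hwmod
  exact hNb.not_gt (ENNReal.one_lt_rpow hN1 (inv_pos.2 ((hP0 x₀).trans_le (hb x₀))))

lemma exists_seq_finite_tendsto_lintegral_rpow [SigmaFinite μ] (hPm : Measurable P)
    (hP : ∀ x, 0 < P x) (hb : ∀ x, P x ≤ b) {D : X → ℝ≥0∞} (hD : Measurable D) :
    ∃ B : ℕ → X → ℝ≥0∞, (∀ k, Measurable (B k)) ∧ (∀ k, B k ≤ D) ∧ (∀ k x, B k x ≠ ∞) ∧
      (∀ k, ∫⁻ x, B k x ^ P x ∂μ ≠ ∞) ∧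
      Filter.Tendsto (fun k => ∫⁻ x, B k x ^ P x ∂μ) Filter.atTop
        (nhds (∫⁻ x, D x ^ P x ∂μ)) := by
  let B (k : ℕ) : X → ℝ≥0∞ := (spanningSets μ k).indicator fun x => min (D x) k
  have hBm (k : ℕ) : Measurable (B k) :=
    (hD.min measurable_const).indicator (measurableSet_spanningSets μ k)
  have hBD (k : ℕ) (x : X) : B k x ≤ D x := (Set.indicator_le_self _ _ x).trans (min_le_left _ _)
  have hBk (k : ℕ) (x : X) : B k x ≤ k := (Set.indicator_le_self _ _ x).trans (min_le_right _ _)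
  have hBmono (x : X) : Monotone fun k => B k x := fun k l hkl =>
    (Set.indicator_le_indicator_of_subset (monotone_spanningSets μ hkl) (fun _ => zero_le) x).trans
      (Set.indicator_le_indicator (min_le_min_left _ (by exact_mod_cast hkl)))
  have hBtendsto (x : X) : Filter.Tendsto (fun k => B k x) Filter.atTop (nhds (D x)) := by
    have hmin : Filter.Tendsto (fun k : ℕ => min (D x) (k : ℝ≥0∞)) Filter.atTop (nhds (D x)) := by
      simpa using (tendsto_const_nhds (x := D x)).min ENNReal.tendsto_nat_nhds_top
    refine hmin.congr' ?_
    filter_upwards [eventually_mem_spanningSets μ x] with k hk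
    simp only [B, Set.indicator_of_mem hk]
  refine ⟨B, hBm, hBD,
    fun k x => ne_top_of_le_ne_top (ENNReal.natCast_ne_top k) (hBk k x), fun k => ?_,
    lintegral_tendsto_of_tendsto_of_monotone (fun k => ((hBm k).pow hPm).aemeasurable)
      (.of_forall fun x k l hkl => ENNReal.rpow_le_rpow (hBmono x hkl) (hP x).le)
      (.of_forall fun x => (ENNReal.continuous_rpow_const.tendsto (D x)).comp (hBtendsto x))⟩
  have hle (x : X) : B k x ^ P x ≤
      (spanningSets μ k).indicator (fun _ => (1 + (k : ℝ≥0∞)) ^ b) x := by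
    by_cases hx : x ∈ spanningSets μ k
    · rw [Set.indicator_of_mem hx]
      exact (ENNReal.rpow_le_rpow ((hBk k x).trans le_add_self) (hP x).le).trans
        (ENNReal.rpow_le_rpow_of_exponent_le le_self_add (hb x))
    · simp [B, Set.indicator_of_notMem hx, ENNReal.zero_rpow_of_pos (hP x)]
  refine ne_top_of_le_ne_top ?_ (lintegral_mono hle)
  rw [lintegral_indicator_const (measurableSet_spanningSets μ k)]
  have hspan : μ (spanningSets μ k) ≠ ∞ := (measure_spanningSets_lt_top μ k).ne
  finiteness

theorem lintegral_rpow_le_one_of_dual [SigmaFinite μ] (hPm : Measurable P) (hP : ∀ x, 1 < P x)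
    (hb : ∀ x, P x ≤ b) {D : X → ℝ≥0∞} (hD : Measurable D)
    (hdual : ∀ w : X → ℝ≥0∞, Measurable w → ∫⁻ x, w x ^ (P x).conjExponent ∂μ ≤ 1 →
      ∫⁻ x, D x * w x ∂μ ≤ 1) :
    ∫⁻ x, D x ^ P x ∂μ ≤ 1 := by
  obtain ⟨B, hBm, hBD, hBtop, hBfin, hBlim⟩ := exists_seq_finite_tendsto_lintegral_rpow (μ := μ)
    hPm (fun x => one_pos.trans (hP x)) hb hD
  refine le_of_tendsto' hBlim fun k => ?_
  refine lintegral_rpow_le_one_of_dual_of_ne_top hPm hP hb (hBm k) (hBtop k) (hBfin k)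
    fun w hw hw1 => ?_
  exact (lintegral_mono fun x => mul_le_mul_left (hBD k x) _).trans (hdual w hw hw1)

end BoundedExponent

section RubioDeFrancia

lemma tsum_inv_two_pow : ∑' k : ℕ, (2⁻¹ : ℝ≥0∞) ^ k = 2 := by
  rw [ENNReal.tsum_geometric, ENNReal.one_sub_inv_two, inv_inv]

lemma tsum_inv_four_pow_mul_rpow_le {p b : ℝ} (hp : 1 ≤ p) (hpb : p ≤ b) (a : ℕ → ℝ≥0∞) :
    (∑' k, 4⁻¹ ^ k * a k) ^ p ≤ 2 ^ b * ∑' k, 2⁻¹ ^ k * a k ^ p := by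
  have hp0 : 0 < p := one_pos.trans_le hp
  have hinv : (4 : ℝ≥0∞)⁻¹ = 2⁻¹ * 2⁻¹ := by
    rw [← ENNReal.mul_inv (by simp) (by simp)]
    norm_num
  set S := ⨆ k, 2⁻¹ ^ k * a k
  have hsum : ∑' k, 4⁻¹ ^ k * a k ≤ 2 * S :=
    calc ∑' k, 4⁻¹ ^ k * a k = ∑' k, 2⁻¹ ^ k * (2⁻¹ ^ k * a k) := by
          simp_rw [hinv, mul_pow, mul_assoc]
      _ ≤ ∑' k, 2⁻¹ ^ k * S := by
          gcongr with k
          exact le_iSup (fun k => 2⁻¹ ^ k * a k) k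
      _ = 2 * S := by rw [ENNReal.tsum_mul_right, tsum_inv_two_pow]
  have hS : S ^ p ≤ ∑' k, 2⁻¹ ^ k * a k ^ p := by
    refine iSup_rpow_le hp0 fun k => le_trans ?_ (ENNReal.le_tsum k)
    rw [ENNReal.mul_rpow_of_nonneg _ _ hp0.le]
    gcongr
    exact ENNReal.rpow_le_self_of_le_one
      (pow_le_one₀ zero_le (ENNReal.inv_le_one.2 one_le_two)) hp
  calc (∑' k, 4⁻¹ ^ k * a k) ^ p ≤ (2 * S) ^ p := by gcongr
    _ = 2 ^ p * S ^ p := ENNReal.mul_rpow_of_nonneg _ _ hp0.le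
    _ ≤ 2 ^ b * ∑' k, 2⁻¹ ^ k * a k ^ p :=
        mul_le_mul' (ENNReal.rpow_le_rpow_of_exponent_le one_le_two hpb) hS

lemma lintegral_tsum_inv_four_pow_mul_rpow_le {X : Type*} [MeasurableSpace X] {μ : Measure X}
    {P : X → ℝ} {b : ℝ} (hPm : Measurable P) (hP : ∀ x, 1 ≤ P x) (hb : ∀ x, P x ≤ b)
    {F : ℕ → X → ℝ≥0∞} (hF : ∀ k, Measurable (F k)) {C : ℝ≥0∞}
    (hFC : ∀ k, ∫⁻ x, F k x ^ P x ∂μ ≤ C) :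
    ∫⁻ x, (∑' k, 4⁻¹ ^ k * F k x) ^ P x ∂μ ≤ 2 ^ b * (2 * C) :=
  calc ∫⁻ x, (∑' k, 4⁻¹ ^ k * F k x) ^ P x ∂μ
      ≤ ∫⁻ x, 2 ^ b * ∑' k, 2⁻¹ ^ k * F k x ^ P x ∂μ :=
        lintegral_mono fun x => tsum_inv_four_pow_mul_rpow_le (hP x) (hb x) _
    _ = 2 ^ b * ∑' k, 2⁻¹ ^ k * ∫⁻ x, F k x ^ P x ∂μ := by
        rw [lintegral_const_mul' _ _ (by finiteness), lintegral_tsum fun k => by fun_prop]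
        simp_rw [lintegral_const_mul _ ((hF _).pow hPm)]
    _ ≤ 2 ^ b * ∑' k : ℕ, 2⁻¹ ^ k * C := by
        gcongr with k
        exact hFC k
    _ = 2 ^ b * (2 * C) := by rw [ENNReal.tsum_mul_right, tsum_inv_two_pow]

variable {X : Type*} [PseudoMetricSpace X] [MeasurableSpace X] {μ : Measure X} {A : ℝ≥0∞}
  {G : X → ℝ≥0∞}

/-- The `k`-th iterate of the maximal function normalised by `A`. -/
def maximalIterate (μ : Measure X) (A : ℝ≥0∞) (G : X → ℝ≥0∞) (k : ℕ) : X → ℝ≥0∞ :=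
  (fun f x => A⁻¹ * dyadicMaximal μ f x)^[k] G

/-- The Rubio de Francia majorant of `G`. The ratio `4⁻¹` leaves room for a geometric series
after raising to a variable exponent. -/
def rubioDeFrancia (μ : Measure X) (A : ℝ≥0∞) (G : X → ℝ≥0∞) (x : X) : ℝ≥0∞ :=
  ∑' k, 4⁻¹ ^ k * maximalIterate μ A G k x

lemma maximalIterate_succ (k : ℕ) : maximalIterate μ A G (k + 1) =
    fun x => A⁻¹ * dyadicMaximal μ (maximalIterate μ A G k) x :=
  Function.iterate_succ_apply' _ _ _

lemma le_rubioDeFrancia : G ≤ rubioDeFrancia μ A G := fun x =>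
  calc G x = 4⁻¹ ^ 0 * maximalIterate μ A G 0 x := by rw [pow_zero, one_mul, maximalIterate,
        Function.iterate_zero_apply]
    _ ≤ rubioDeFrancia μ A G x := ENNReal.le_tsum 0

variable [SecondCountableTopology X] [OpensMeasurableSpace X] [SFinite μ]

lemma measurable_maximalIterate (hG : Measurable G) (k : ℕ) :
    Measurable (maximalIterate μ A G k) := by
  induction k with
  | zero => exact hG
  | succ k ih =>
    rw [maximalIterate_succ]
    exact (measurable_dyadicMaximal ih).const_mul _

lemma measurable_rubioDeFrancia (hG : Measurable G) : Measurable (rubioDeFrancia μ A G) :=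
  Measurable.tsum fun k => (measurable_maximalIterate hG k).const_mul _

lemma dyadicMaximal_rubioDeFrancia_le (hG : Measurable G) (hA : A ≠ 0) (hAtop : A ≠ ∞) (x : X) :
    dyadicMaximal μ (rubioDeFrancia μ A G) x ≤ 4 * A * rubioDeFrancia μ A G x := by
  set F := maximalIterate μ A G
  have hF (k : ℕ) : Measurable (F k) := measurable_maximalIterate hG k
  have hterm (k : ℕ) : dyadicMaximal μ (fun y => 4⁻¹ ^ k * F k y) x =
      4 * A * (4⁻¹ ^ (k + 1) * F (k + 1) x) := by
    have h4 : (4 : ℝ≥0∞) * 4⁻¹ = 1 := ENNReal.mul_inv_cancel (by simp) (by simp)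
    have hsucc : F (k + 1) x = A⁻¹ * dyadicMaximal μ (F k) x := congrFun (maximalIterate_succ k) x
    calc dyadicMaximal μ (fun y => 4⁻¹ ^ k * F k y) x
        = 4 * 4⁻¹ * (A * A⁻¹) * (4⁻¹ ^ k * dyadicMaximal μ (F k) x) := by
          rw [dyadicMaximal_const_mul _ (hF k), h4, ENNReal.mul_inv_cancel hA hAtop, one_mul,
            one_mul]
      _ = 4 * A * (4⁻¹ ^ (k + 1) * F (k + 1) x) := by
          rw [hsucc, pow_succ]
          ring
  calc dyadicMaximal μ (rubioDeFrancia μ A G) x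
      ≤ ∑' k, dyadicMaximal μ (fun y => 4⁻¹ ^ k * F k y) x :=
        dyadicMaximal_tsum_le (fun k => (hF k).const_mul _) x
    _ = 4 * A * ∑' k, 4⁻¹ ^ (k + 1) * F (k + 1) x := by
        simp_rw [hterm, ENNReal.tsum_mul_left]
    _ ≤ 4 * A * rubioDeFrancia μ A G x := by
        gcongr
        exact ENNReal.tsum_comp_le_tsum_of_injective (add_left_injective 1)
          fun k => 4⁻¹ ^ k * F k x

end RubioDeFrancia

section Majorant

variable {E : Type*} [NormedAddCommGroup E] [NormedSpace ℝ E] [FiniteDimensional ℝ E]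
  [MeasurableSpace E] [BorelSpace E]

theorem DecayingLogHolderExponent.exists_majorant {P : E → ℝ} {Pi a b c : ℝ}
    (h : DecayingLogHolderExponent P Pi a b c) (ha : 1 < a) (μ : Measure E)
    [μ.IsAddHaarMeasure] :
    ∃ C ≠ ∞, ∃ A ≠ ∞, ∀ G : E → ℝ≥0∞, Measurable G → ∫⁻ x, G x ^ P x ∂μ ≤ 1 →
      ∃ G' : E → ℝ≥0∞, Measurable G' ∧ G ≤ G' ∧ (∀ x, dyadicMaximal μ G' x ≤ A * G' x) ∧
        ∫⁻ x, G' x ^ P x ∂μ ≤ C := by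
  obtain ⟨C, hC, hM⟩ := h.exists_lintegral_dyadicMaximal_rpow_le ha μ
  have hA1 : 1 ≤ 1 + C := le_self_add
  have hAtop : 1 + C ≠ ∞ := by finiteness
  refine ⟨2 ^ b * (2 * 1), by finiteness, 4 * (1 + C), by finiteness, fun G hG hG1 =>
    ⟨rubioDeFrancia μ (1 + C) G, measurable_rubioDeFrancia hG, le_rubioDeFrancia,
      dyadicMaximal_rubioDeFrancia_le hG (one_pos.trans_le hA1).ne' hAtop,
      lintegral_tsum_inv_four_pow_mul_rpow_le h.measurable h.one_le_apply h.upper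
        (measurable_maximalIterate hG) fun k => ?_⟩⟩
  induction k with
  | zero => exact hG1
  | succ k ih =>
    rw [maximalIterate_succ]
    exact lintegral_inv_mul_rpow_le_one h.one_le_apply hA1 hAtop
      ((hM _ (measurable_maximalIterate hG k) ih).trans le_add_self)

end Majorant

section SummedConvolutions

lemma lintegral_tsum_lconv_etaK_mul {f : ℕ → Rn n → ℝ≥0∞} {w : Rn n → ℝ≥0∞}
    (hf : ∀ ν, Measurable (f ν)) (hw : Measurable w) (m : ℝ) :
    ∫⁻ x, (∑' ν, lconv (etaK ν m) (f ν) x) * w x =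
      ∑' ν, ∫⁻ x, f ν x * lconv (etaK ν m) w x := by
  simp_rw [← ENNReal.tsum_mul_right]
  have hconv (ν : ℕ) : Measurable (lconv (etaK ν m) (f ν)) :=
    measurable_lconv (measurable_etaK ν m) (hf ν)
  rw [lintegral_tsum fun ν => by fun_prop]
  exact tsum_congr fun ν =>
    lintegral_lconv_mul_of_even (measurable_etaK ν m) (etaK_neg ν m) (hf ν) hw

/-- The dual test moves the convolution onto a single function, where the maximal theorem
applies for the conjugate exponent. -/
theorem DecayingLogHolderExponent.exists_lintegral_tsum_lconv_rpow_le {P : Rn n → ℝ}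
    {Pi a b c : ℝ} (h : DecayingLogHolderExponent P Pi a b c) (ha : 1 < a) {m : ℝ} (hm : n < m) :
    ∃ C ≠ ∞, ∀ f : ℕ → Rn n → ℝ≥0∞, (∀ ν, Measurable (f ν)) →
      ∫⁻ x, (∑' ν, f ν x) ^ P x ≤ 1 →
        ∫⁻ x, (∑' ν, lconv (etaK ν m) (f ν) x) ^ P x ≤ C := by
  have hb : 1 < b := ha.trans_le (h.inf_lower.trans h.inf_upper)
  obtain ⟨C₁, hC₁, hker⟩ := exists_lconv_etaK_le_dyadicMaximal n hm
  obtain ⟨C₂, hC₂, hmax⟩ := (h.conjExponent ha).exists_lintegral_dyadicMaximal_rpow_le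
    (one_lt_conjExponent hb) volume
  have hP (x : Rn n) : 1 < P x := ha.trans_le (h.lower x)
  set K : ℝ≥0∞ := 1 + C₁ * (1 + C₂)
  have hK1 : 1 ≤ K := le_self_add
  have hKtop : K ≠ ∞ := by finiteness
  refine ⟨K ^ b, by finiteness, fun f hf hf1 => ?_⟩
  have hBm : Measurable fun x => ∑' ν, lconv (etaK ν m) (f ν) x :=
    Measurable.tsum fun ν => measurable_lconv (measurable_etaK ν m) (hf ν)
  refine lintegral_rpow_le_of_inv_mul (fun x => (h.pos x).le) h.upper hK1 hKtop
    (lintegral_rpow_le_one_of_dual h.measurable hP h.upper (hBm.const_mul _) fun w hw hw1 => ?_)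
  have hMm : Measurable (dyadicMaximal volume w) := measurable_dyadicMaximal hw
  have hpair : ∫⁻ x, (∑' ν, lconv (etaK ν m) (f ν) x) * w x ≤ K :=
    calc ∫⁻ x, (∑' ν, lconv (etaK ν m) (f ν) x) * w x
        = ∑' ν, ∫⁻ x, f ν x * lconv (etaK ν m) w x := lintegral_tsum_lconv_etaK_mul hf hw m
      _ ≤ ∑' ν, ∫⁻ x, f ν x * (C₁ * dyadicMaximal volume w x) := by
          gcongr with ν x
          exact hker ν w hw x
      _ = ∫⁻ x, C₁ * ((∑' ν, f ν x) * dyadicMaximal volume w x) := by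
          rw [← lintegral_tsum fun ν => by fun_prop]
          simp_rw [ENNReal.tsum_mul_right, mul_left_comm]
      _ ≤ ∫⁻ x, C₁ * ((∑' ν, f ν x) ^ P x + dyadicMaximal volume w x ^ (P x).conjExponent) := by
          gcongr with x
          exact mul_le_rpow_add_rpow_conjExponent _ _ (hP x)
      _ = C₁ * ((∫⁻ x, (∑' ν, f ν x) ^ P x) +
            ∫⁻ x, dyadicMaximal volume w x ^ (P x).conjExponent) := by
          rw [lintegral_const_mul' _ _ hC₁,
            lintegral_add_left ((Measurable.tsum hf).pow h.measurable)]
      _ ≤ C₁ * (1 + C₂) := by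
          gcongr
          exact hmax w hw hw1
      _ ≤ K := le_add_self
  calc ∫⁻ x, K⁻¹ * (∑' ν, lconv (etaK ν m) (f ν) x) * w x
      = K⁻¹ * ∫⁻ x, (∑' ν, lconv (etaK ν m) (f ν) x) * w x := by
        simp_rw [mul_assoc]
        exact lintegral_const_mul _ (hBm.mul hw)
    _ ≤ K⁻¹ * K := by gcongr
    _ = 1 := ENNReal.inv_mul_cancel (one_pos.trans_le hK1).ne' hKtop

end SummedConvolutions

section SequenceNorm

/-- The `ℓ^s` norm of a sequence in `[0,∞]` for a real exponent `s > 0`; compare `lqNorm`, whose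
exponent may be infinite. -/
def realLqNorm (s : ℝ) (a : ℕ → ℝ≥0∞) : ℝ≥0∞ := (∑' ν, a ν ^ s) ^ (1 / s)

variable {s : ℝ} {a : ℕ → ℝ≥0∞}

lemma realLqNorm_rpow (hs : 0 < s) (a : ℕ → ℝ≥0∞) : realLqNorm s a ^ s = ∑' ν, a ν ^ s := by
  rw [realLqNorm, one_div, ENNReal.rpow_inv_rpow hs.ne']

lemma realLqNorm_le_iff (hs : 0 < s) {B : ℝ≥0∞} : realLqNorm s a ≤ B ↔ ∑' ν, a ν ^ s ≤ B ^ s := by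
  rw [realLqNorm, one_div, ENNReal.rpow_inv_le_iff hs]

lemma le_realLqNorm (hs : 0 < s) (a : ℕ → ℝ≥0∞) (ν : ℕ) : a ν ≤ realLqNorm s a := by
  rw [realLqNorm, one_div, ENNReal.le_rpow_inv_iff hs]
  exact ENNReal.le_tsum ν

lemma tsum_div_realLqNorm_rpow_le_one (hs : 0 < s) (a : ℕ → ℝ≥0∞) :
    ∑' ν, (a ν / realLqNorm s a) ^ s ≤ 1 := by
  simp_rw [ENNReal.div_rpow_of_nonneg _ _ hs.le, div_eq_mul_inv, ENNReal.tsum_mul_right,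
    realLqNorm_rpow hs, ← div_eq_mul_inv]
  exact ENNReal.div_self_le_one

lemma realLqNorm_le_mul_of_le_mul (hs : 1 ≤ s) {t : ℕ → ℝ≥0∞} {B Z : ℝ≥0∞} (hZ : 1 ≤ Z)
    (hat : ∀ ν, a ν ≤ B * t ν) (ht : ∑' ν, t ν ^ s ≤ Z) : realLqNorm s a ≤ B * Z := by
  have hs0 : 0 < s := one_pos.trans_le hs
  rw [realLqNorm_le_iff hs0]
  calc ∑' ν, a ν ^ s ≤ ∑' ν, B ^ s * t ν ^ s := by
        gcongr with ν
        rw [← ENNReal.mul_rpow_of_nonneg _ _ hs0.le]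
        gcongr
        exact hat ν
    _ ≤ B ^ s * Z ^ s := by
        rw [ENNReal.tsum_mul_left]
        gcongr
        exact ht.trans (ENNReal.le_rpow_self_of_one_le hZ hs)
    _ = (B * Z) ^ s := (ENNReal.mul_rpow_of_nonneg _ _ hs0.le).symm

lemma measurable_realLqNorm {X : Type*} [MeasurableSpace X] {Q : X → ℝ} (hQ : Measurable Q)
    {f : ℕ → X → ℝ≥0∞} (hf : ∀ ν, Measurable (f ν)) :
    Measurable fun x => realLqNorm (Q x) fun ν => f ν x := by
  unfold realLqNorm
  fun_prop

/-- The truncation of `(S ν / H) ^ (1 / s)` from below at the geometric sequence `θ ^ ν`. -/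
lemma exists_seq_geometric_le_le_rpow_mul (hs : 1 ≤ s) {θ H : ℝ≥0∞} (hθ : θ ≤ 1) (hH : H ≠ ∞)
    {S : ℕ → ℝ≥0∞} (hSH : ∑' ν, S ν ≤ H) :
    ∃ t : ℕ → ℝ≥0∞, (∀ ν, θ ^ ν ≤ t ν) ∧ (∀ ν, t ν ≤ 1) ∧ (∀ ν, S ν ≤ t ν ^ s * H) ∧
      ∑' ν, t ν ^ s ≤ (1 - θ)⁻¹ + 1 := by
  have hs0 : 0 < s := one_pos.trans_le hs
  have hS (ν : ℕ) : S ν ≤ H := (ENNReal.le_tsum ν).trans hSH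
  have hpow (ν : ℕ) : ((S ν / H) ^ s⁻¹) ^ s = S ν / H := ENNReal.rpow_inv_rpow hs0.ne' _
  refine ⟨fun ν => max (θ ^ ν) ((S ν / H) ^ s⁻¹), fun ν => le_max_left _ _, fun ν => ?_,
    fun ν => ?_, ?_⟩
  · exact max_le (pow_le_one₀ zero_le hθ) (ENNReal.rpow_le_one
      (ENNReal.div_le_of_le_mul ((hS ν).trans_eq (one_mul H).symm)) (inv_nonneg.2 hs0.le))
  · calc S ν = S ν / H * H :=
          (ENNReal.div_mul_cancel' (fun h0 => le_zero_iff.1 (h0 ▸ hS ν)) fun h => (hH h).elim).symm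
      _ ≤ max (θ ^ ν) ((S ν / H) ^ s⁻¹) ^ s * H := by
          gcongr
          exact (hpow ν).symm.trans_le (ENNReal.rpow_le_rpow (le_max_right _ _) hs0.le)
  · calc ∑' ν, max (θ ^ ν) ((S ν / H) ^ s⁻¹) ^ s ≤ ∑' ν, (θ ^ ν + S ν / H) := by
          gcongr with ν
          rcases max_choice (θ ^ ν) ((S ν / H) ^ s⁻¹) with hmax | hmax <;> rw [hmax]
          · exact (ENNReal.rpow_le_self_of_le_one (pow_le_one₀ zero_le hθ) hs).trans le_self_add
          · rw [hpow]
            exact le_add_self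
      _ = (1 - θ)⁻¹ + (∑' ν, S ν) / H := by
          simp_rw [ENNReal.tsum_add, ENNReal.tsum_geometric, div_eq_mul_inv,
            ENNReal.tsum_mul_right]
      _ ≤ (1 - θ)⁻¹ + 1 := by
          gcongr
          exact ENNReal.div_le_of_le_mul (hSH.trans_eq (one_mul H).symm)

end SequenceNorm

section KernelPowers

lemma etaK_mul_ofReal_rpow (ν : ℕ) (m δ : ℝ) (z : Rn n) :
    etaK ν m z * ENNReal.ofReal ((1 + 2 ^ ν * ‖z‖) ^ δ) = etaK ν (m - δ) z := by
  rw [etaK, etaK, ← ENNReal.ofReal_mul (by positivity), mul_assoc,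
    ← Real.rpow_add (by positivity), neg_add_eq_sub, neg_sub]

lemma etaK_anti (ν : ℕ) {m m' : ℝ} (h : m' ≤ m) (z : Rn n) : etaK ν m z ≤ etaK ν m' z := by
  have : 1 ≤ 1 + 2 ^ ν * ‖z‖ := le_add_of_nonneg_right (by positivity)
  unfold etaK
  gcongr

end KernelPowers

namespace LogHolderExponent

section Scale

variable {X : Type*} [PseudoMetricSpace X] [MeasurableSpace X] {Q : X → ℝ} {a b c K : ℝ} {ν : ℕ}
  {x y : X} {t : ℝ≥0∞}

lemma rpow_sub_le_of_dist_le (h : LogHolderExponent Q a b c) (hK : 0 ≤ K)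
    (ht : 2 ^ (-(K * ν)) ≤ t) (ht1 : t ≤ 1) (hxy : dist x y ≤ 2 ^ (-(ν / 2 : ℝ))) :
    t ^ (Q x - Q y) ≤ ENNReal.ofReal (Real.exp (2 * K * c)) := by
  set X₀ : ℝ := Real.exp 1 + (2 ^ (-(ν / 2 : ℝ)))⁻¹
  have hX₀ : (2 : ℝ≥0∞) ^ (K * ν) ≤ 1 * ENNReal.ofReal X₀ ^ (2 * K) :=
    calc (2 : ℝ≥0∞) ^ (K * ν) = ENNReal.ofReal ((2 ^ (-(ν / 2 : ℝ)))⁻¹) ^ (2 * K) := by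
          rw [← Real.rpow_neg zero_le_two, neg_neg, ← ENNReal.ofReal_rpow_of_pos two_pos,
            ENNReal.ofReal_ofNat, ← ENNReal.rpow_mul]
          congr 1
          ring
      _ ≤ 1 * ENNReal.ofReal X₀ ^ (2 * K) := by
          rw [one_mul]
          gcongr
          exact le_add_of_nonneg_left (Real.exp_pos 1).le
  have hinv : t⁻¹ ≤ 2 ^ (K * ν) := by
    rwa [ENNReal.inv_le_iff_inv_le, ← ENNReal.rpow_neg]
  have hone : 1 ≤ (2 : ℝ≥0∞) ^ (K * ν) := (ENNReal.one_le_inv.2 ht1).trans hinv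
  simpa using h.rpow_sub_le le_rfl (by positivity) (by positivity) hxy
    ((ht1.trans hone).trans hX₀) (hinv.trans hX₀)

lemma rpow_sub_le_of_le_dist (h : LogHolderExponent Q a b c) (hK : 0 ≤ K)
    (ht : 2 ^ (-(K * ν)) ≤ t) (ht1 : t ≤ 1) (hxy : 2 ^ (-(ν / 2 : ℝ)) ≤ dist x y) :
    t ^ (Q x - Q y) ≤ ENNReal.ofReal ((1 + 2 ^ ν * dist x y) ^ (2 * K * b)) := by
  have hb : 0 < b := (h.pos x).trans_le (h.upper x)
  have hinv : t⁻¹ ≤ 2 ^ (K * ν) := by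
    rwa [ENNReal.inv_le_iff_inv_le, ← ENNReal.rpow_neg]
  have hone : 1 ≤ (2 : ℝ≥0∞) ^ (K * ν) := (ENNReal.one_le_inv.2 ht1).trans hinv
  have hscale : (2 : ℝ) ^ (ν / 2 : ℝ) ≤ 1 + 2 ^ ν * dist x y :=
    calc (2 : ℝ) ^ (ν / 2 : ℝ) = 2 ^ ν * 2 ^ (-(ν / 2 : ℝ)) := by
          rw [← Real.rpow_natCast, ← Real.rpow_add two_pos]
          congr 1
          ring
      _ ≤ 2 ^ ν * dist x y := by gcongr
      _ ≤ 1 + 2 ^ ν * dist x y := le_add_of_nonneg_left zero_le_one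
  calc t ^ (Q x - Q y) ≤ (2 ^ (K * ν)) ^ |Q x - Q y| := rpow_le_rpow_abs (ht1.trans hone) hinv _
    _ ≤ (2 ^ (K * ν)) ^ b := ENNReal.rpow_le_rpow_of_exponent_le hone (h.abs_sub_le x y)
    _ = ENNReal.ofReal ((2 ^ (ν / 2 : ℝ)) ^ (2 * K * b)) := by
        rw [← Real.rpow_mul zero_le_two, ← ENNReal.ofReal_rpow_of_pos two_pos,
          ENNReal.ofReal_ofNat, ← ENNReal.rpow_mul]
        congr 1
        ring
    _ ≤ ENNReal.ofReal ((1 + 2 ^ ν * dist x y) ^ (2 * K * b)) := by gcongr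

/-- Powers with exponents `Q x` and `Q y` of a number that is not too small at scale `2 ^ (-ν)`
agree up to a small power of `1 + 2 ^ ν * dist x y`. -/
lemma exists_rpow_sub_le (h : LogHolderExponent Q a b c) (hK : 0 ≤ K) :
    ∃ C ≠ ∞, ∀ (ν : ℕ) (x y : X) (t : ℝ≥0∞), 2 ^ (-(K * ν)) ≤ t → t ≤ 1 →
      t ^ (Q x - Q y) ≤ C * ENNReal.ofReal ((1 + 2 ^ ν * dist x y) ^ (2 * K * b)) := by
  refine ⟨1 + ENNReal.ofReal (Real.exp (2 * K * c)), by finiteness, fun ν x y t ht ht1 => ?_⟩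
  have hb : 0 < b := (h.pos x).trans_le (h.upper x)
  rcases le_total (dist x y) (2 ^ (-(ν / 2 : ℝ))) with hxy | hxy
  · refine ((h.rpow_sub_le_of_dist_le hK ht ht1 hxy).trans le_add_self).trans
      (le_mul_of_one_le_right zero_le (ENNReal.one_le_ofReal.2 (Real.one_le_rpow ?_ ?_)))
    · exact le_add_of_nonneg_right (by positivity)
    · positivity
  · exact (h.rpow_sub_le_of_le_dist hK ht ht1 hxy).trans
      (le_mul_of_one_le_left zero_le le_self_add)

end Scale

section MixedConvolution

variable {Q : Rn n → ℝ} {a b c m m' : ℝ}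

/-- The elementary inequality `f ≤ t + f ^ Q y * t ^ (1 - Q y)`, in which `Q y` is replaced by
`Q x` at the expense of some decay of the kernel. -/
lemma exists_lconv_mul_le_add (h : LogHolderExponent Q a b c) (hm : m' ≤ m) :
    ∃ C ≠ ∞, ∀ (ν : ℕ) (f G : Rn n → ℝ≥0∞), Measurable f → Measurable G → ∀ (x : Rn n) (t : ℝ≥0∞),
      2 ^ (-((m - m') / (2 * b) * ν)) ≤ t → t ≤ 1 →
        lconv (etaK ν m) (fun y => f y * G y) x ≤
          t * lconv (etaK ν m') G x +
            C * t ^ (1 - Q x) * lconv (etaK ν m') (fun y => f y ^ Q y * G y) x := by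
  have hb : 0 < b := (h.pos 0).trans_le (h.upper 0)
  have hK : 0 ≤ (m - m') / (2 * b) := div_nonneg (sub_nonneg.2 hm) (by positivity)
  obtain ⟨C, hC, hcomp⟩ := h.exists_rpow_sub_le hK
  refine ⟨C, hC, fun ν f G hf hG x t ht ht1 => ?_⟩
  have hQm : Measurable Q := h.measurable
  have ht0 : t ≠ 0 := (ENNReal.rpow_pos (by simp) (by simp) |>.trans_le ht).ne'
  have httop : t ≠ ∞ := ne_top_of_le_ne_top one_ne_top ht1
  have hfy (y : Rn n) : f y ≤ t + f y ^ Q y *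
      (C * ENNReal.ofReal ((1 + 2 ^ ν * ‖x - y‖) ^ (m - m')) * t ^ (1 - Q x)) := by
    refine (le_add_rpow_mul_rpow (h.one_le_apply y) ht0 httop).trans ?_
    gcongr
    refine rpow_le_mul_rpow_of_sub ht0 httop ?_
    have hexp : 2 * ((m - m') / (2 * b)) * b = m - m' := by field_simp
    have hsub : 1 - Q y - (1 - Q x) = Q x - Q y := by ring
    rw [hsub, ← hexp, ← dist_eq_norm]
    exact hcomp ν x y t ht ht1
  calc lconv (etaK ν m) (fun y => f y * G y) x
      ≤ ∫⁻ y, (t * (etaK ν m' (x - y) * G y) +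
          C * t ^ (1 - Q x) * (etaK ν m' (x - y) * (f y ^ Q y * G y))) := by
        refine lintegral_mono fun y => ?_
        calc etaK ν m (x - y) * (f y * G y)
            ≤ etaK ν m (x - y) * ((t + f y ^ Q y * (C *
                ENNReal.ofReal ((1 + 2 ^ ν * ‖x - y‖) ^ (m - m')) * t ^ (1 - Q x))) * G y) := by
              gcongr
              exact hfy y
          _ = t * (etaK ν m (x - y) * G y) + C * t ^ (1 - Q x) *
                ((etaK ν m (x - y) * ENNReal.ofReal ((1 + 2 ^ ν * ‖x - y‖) ^ (m - m'))) *
                  (f y ^ Q y * G y)) := by ring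
          _ ≤ t * (etaK ν m' (x - y) * G y) +
                C * t ^ (1 - Q x) * (etaK ν m' (x - y) * (f y ^ Q y * G y)) := by
              rw [etaK_mul_ofReal_rpow, _root_.sub_sub_cancel]
              gcongr
              exact etaK_anti ν hm _
    _ = t * lconv (etaK ν m') G x +
          C * t ^ (1 - Q x) * lconv (etaK ν m') (fun y => f y ^ Q y * G y) x := by
        rw [lintegral_add_left (by fun_prop), lintegral_const_mul _ (by fun_prop),
          lintegral_const_mul _ (by fun_prop)]
        rfl

/-- The thresholds `t ν` in `exists_lconv_mul_le_add` are chosen so as to balance its two terms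
while being `ℓ^{Q x}`-summable in `ν`. -/
theorem exists_realLqNorm_lconv_le (h : LogHolderExponent Q a b c) (hm : m' < m) :
    ∃ C ≠ ∞, ∀ (A : ℝ≥0∞) (f : ℕ → Rn n → ℝ≥0∞) (G G' : Rn n → ℝ≥0∞),
      (∀ ν, Measurable (f ν)) → Measurable G →
      (∀ ν x, lconv (etaK ν m') G x ≤ A * G' x) → ∀ x,
        realLqNorm (Q x) (fun ν => lconv (etaK ν m) (fun y => f ν y * G y) x) ≤
          C * (1 + A) * (G' x + ∑' ν, lconv (etaK ν m') (fun y => f ν y ^ Q y * G y) x) := by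
  have hb : 0 < b := (h.pos 0).trans_le (h.upper 0)
  obtain ⟨C, hC, hlconv⟩ := h.exists_lconv_mul_le_add hm.le
  set K : ℝ := (m - m') / (2 * b)
  set θ : ℝ≥0∞ := 2 ^ (-K)
  have hθ : θ < 1 := ENNReal.rpow_lt_one_of_one_lt_of_neg one_lt_two
    (neg_neg_of_pos (div_pos (sub_pos.2 hm) (by positivity)))
  have hθinv : (1 - θ)⁻¹ ≠ ∞ := ENNReal.inv_ne_top.2 (tsub_pos_of_lt hθ).ne'
  refine ⟨(1 + C) * ((1 - θ)⁻¹ + 1), by finiteness, fun A f G G' hf hG hA x => ?_⟩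
  set S : ℕ → ℝ≥0∞ := fun ν => lconv (etaK ν m') (fun y => f ν y ^ Q y * G y) x
  set H := G' x + ∑' ν, S ν
  rcases eq_or_ne H ∞ with hH | hH
  · rw [hH, ENNReal.mul_top (by simp)]
    exact le_top
  obtain ⟨t, hθt, ht1, hSt, htsum⟩ := exists_seq_geometric_le_le_rpow_mul (h.one_le_apply x)
    hθ.le hH (S := S) le_add_self
  have hlconv_le (ν : ℕ) :
      lconv (etaK ν m) (fun y => f ν y * G y) x ≤ (1 + C) * (1 + A) * H * t ν := by
    have hθν : 2 ^ (-(K * ν)) ≤ t ν := by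
      rw [← neg_mul, ENNReal.rpow_mul, ENNReal.rpow_natCast]
      exact hθt ν
    have ht0 : t ν ≠ 0 := (ENNReal.rpow_pos (by simp) (by simp) |>.trans_le hθν).ne'
    have httop : t ν ≠ ∞ := ne_top_of_le_ne_top one_ne_top (ht1 ν)
    calc lconv (etaK ν m) (fun y => f ν y * G y) x
        ≤ t ν * lconv (etaK ν m') G x + C * t ν ^ (1 - Q x) * S ν :=
          hlconv ν (f ν) G (hf ν) hG x (t ν) hθν (ht1 ν)
      _ ≤ t ν * (A * G' x) + C * t ν ^ (1 - Q x) * (t ν ^ Q x * H) := by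
          gcongr
          · exact hA ν x
          · exact hSt ν
      _ = A * G' x * t ν + C * 1 * H * (t ν ^ (1 - Q x) * t ν ^ Q x) := by ring
      _ = A * G' x * t ν + C * 1 * H * t ν := by
          rw [← ENNReal.rpow_add _ _ ht0 httop, sub_add_cancel, ENNReal.rpow_one]
      _ ≤ (1 + A) * H * t ν + C * (1 + A) * H * t ν := by
          gcongr
          · exact le_add_self
          · exact le_self_add
          · exact le_self_add
      _ = (1 + C) * (1 + A) * H * t ν := by ring
  calc realLqNorm (Q x) (fun ν => lconv (etaK ν m) (fun y => f ν y * G y) x)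
      ≤ (1 + C) * (1 + A) * H * ((1 - θ)⁻¹ + 1) :=
        realLqNorm_le_mul_of_le_mul (h.one_le_apply x) le_add_self hlconv_le htsum
    _ = (1 + C) * ((1 - θ)⁻¹ + 1) * (1 + A) * H := by ring

end MixedConvolution

end LogHolderExponent

section MixedNorm

lemma lconv_congr_ae {g g' : Rn n → ℝ≥0∞} (k : Rn n → ℝ≥0∞) (h : g =ᵐ[volume] g') :
    lconv k g = lconv k g' := by
  funext x
  exact lintegral_congr_ae (h.mono fun y hy => by simp only [hy])

lemma ae_ne_top_of_lintegral_rpow_ne_top {P : Rn n → ℝ} {g : Rn n → ℝ≥0∞} (hP : Measurable P)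
    (hpos : ∀ x, 0 < P x) (hg : Measurable g) (h : ∫⁻ x, g x ^ P x ≠ ∞) : ∀ᵐ x, g x ≠ ∞ := by
  filter_upwards [ae_lt_top (hg.pow hP) h] with x hx hgx
  rw [hgx, ENNReal.top_rpow_of_pos (hpos x)] at hx
  exact hx.false

lemma lconv_div_realLqNorm_mul {Q : Rn n → ℝ} {f : ℕ → Rn n → ℝ≥0∞} (hQ : ∀ x, 0 < Q x)
    (htop : ∀ᵐ x, realLqNorm (Q x) (fun ν => f ν x) ≠ ∞) (k : Rn n → ℝ≥0∞) (ν : ℕ) :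
    lconv k (fun y => f ν y / realLqNorm (Q y) (fun ν => f ν y) *
      realLqNorm (Q y) (fun ν => f ν y)) = lconv k (f ν) := by
  refine lconv_congr_ae _ ?_
  filter_upwards [htop] with y hy
  have hfy : f ν y ≤ realLqNorm (Q y) fun ν => f ν y := le_realLqNorm (hQ y) (fun ν => f ν y) ν
  exact ENNReal.div_mul_cancel' (fun h0 => le_zero_iff.1 (h0 ▸ hfy)) fun h => (hy h).elim

theorem LogHolderExponent.exists_realLqNorm_lconv_le_of_majorant {Q : Rn n → ℝ} {a b c : ℝ}
    (h : LogHolderExponent Q a b c) {m' m : ℝ} (hn : n < m') (hm : m' < m) :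
    ∃ C ≠ ∞, ∀ (A : ℝ≥0∞) (f : ℕ → Rn n → ℝ≥0∞) (G' : Rn n → ℝ≥0∞), (∀ ν, Measurable (f ν)) →
      (∀ᵐ x, realLqNorm (Q x) (fun ν => f ν x) ≠ ∞) → Measurable G' →
      (∀ x, realLqNorm (Q x) (fun ν => f ν x) ≤ G' x) →
      (∀ x, dyadicMaximal volume G' x ≤ A * G' x) → ∀ x,
        realLqNorm (Q x) (fun ν => lconv (etaK ν m) (f ν) x) ≤
          C * (1 + A) * (G' x + ∑' ν, lconv (etaK ν m') (fun y =>
            (f ν y / realLqNorm (Q y) (fun ν => f ν y)) ^ Q y *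
              realLqNorm (Q y) (fun ν => f ν y)) x) := by
  obtain ⟨C₁, hC₁, hker⟩ := exists_lconv_etaK_le_dyadicMaximal n hn
  obtain ⟨C₂, hC₂, hpointwise⟩ := h.exists_realLqNorm_lconv_le hm
  refine ⟨C₂ * (1 + C₁), by finiteness, fun A f G' hf htop hG' hle hmax x => ?_⟩
  set G : Rn n → ℝ≥0∞ := fun x => realLqNorm (Q x) fun ν => f ν x
  have hG : Measurable G := measurable_realLqNorm h.measurable hf
  have hkerG (ν : ℕ) (x : Rn n) : lconv (etaK ν m') G x ≤ C₁ * A * G' x :=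
    calc lconv (etaK ν m') G x ≤ lconv (etaK ν m') G' x := lconv_mono _ hle x
      _ ≤ C₁ * dyadicMaximal volume G' x := hker ν G' hG' x
      _ ≤ C₁ * (A * G' x) := mul_le_mul_right (hmax x) _
      _ = C₁ * A * G' x := (mul_assoc _ _ _).symm
  have hconst : 1 + C₁ * A ≤ (1 + C₁) * (1 + A) :=
    calc 1 + C₁ * A ≤ 1 + C₁ * A + (A + C₁) := le_self_add
      _ = (1 + C₁) * (1 + A) := by ring
  simp_rw [← lconv_div_realLqNorm_mul h.pos htop (etaK _ m)]
  refine (hpointwise _ (fun ν y => f ν y / G y) G G' (fun ν => (hf ν).div hG) hG hkerG x).trans ?_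
  rw [mul_assoc C₂ (1 + C₁)]
  gcongr

theorem DecayingLogHolderExponent.exists_lintegral_realLqNorm_lconv_rpow_le {P Q : Rn n → ℝ}
    {Pi a b c a' b' c' : ℝ} (h : DecayingLogHolderExponent P Pi a b c) (ha : 1 < a)
    (hQ : LogHolderExponent Q a' b' c') {m : ℝ} (hm : n < m) :
    ∃ C ≠ ∞, ∀ f : ℕ → Rn n → ℝ≥0∞, (∀ ν, Measurable (f ν)) →
      ∫⁻ x, realLqNorm (Q x) (fun ν => f ν x) ^ P x ≤ 1 →
        ∫⁻ x, realLqNorm (Q x) (fun ν => lconv (etaK ν m) (f ν) x) ^ P x ≤ C := by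
  obtain ⟨m', hnm', hm'm⟩ := exists_between hm
  obtain ⟨C₁, hC₁, A, hA, hmajorant⟩ := h.exists_majorant ha volume
  obtain ⟨C₂, hC₂, hsum⟩ := h.exists_lintegral_tsum_lconv_rpow_le ha hnm'
  obtain ⟨C₃, hC₃, hpointwise⟩ := hQ.exists_realLqNorm_lconv_le_of_majorant hnm' hm'm
  set K : ℝ≥0∞ := 1 + C₃ * (1 + A)
  have hK : K ≠ ∞ := by finiteness
  refine ⟨K ^ b * (2 ^ b * (C₁ + C₂)), by finiteness, fun f hf hmod => ?_⟩
  set G : Rn n → ℝ≥0∞ := fun x => realLqNorm (Q x) fun ν => f ν x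
  have hG : Measurable G := measurable_realLqNorm hQ.measurable hf
  have hGtop : ∀ᵐ x, G x ≠ ∞ := ae_ne_top_of_lintegral_rpow_ne_top h.measurable h.pos hG
    (ne_top_of_le_ne_top one_ne_top hmod)
  obtain ⟨G', hG', hGG', hmax, hG'mod⟩ := hmajorant G hG hmod
  set S : Rn n → ℝ≥0∞ := fun x =>
    ∑' ν, lconv (etaK ν m') (fun y => (f ν y / G y) ^ Q y * G y) x
  have hS : ∫⁻ x, S x ^ P x ≤ C₂ := by
    refine hsum _ (fun ν => (((hf ν).div hG).pow hQ.measurable).mul hG)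
      ((lintegral_mono fun y => ENNReal.rpow_le_rpow ?_ (h.pos y).le).trans hmod)
    rw [ENNReal.tsum_mul_right]
    exact mul_le_of_le_one_left zero_le (tsum_div_realLqNorm_rpow_le_one (hQ.pos y) _)
  calc ∫⁻ x, realLqNorm (Q x) (fun ν => lconv (etaK ν m) (f ν) x) ^ P x
      ≤ ∫⁻ x, (K * (G' x + S x)) ^ P x := by
        refine lintegral_mono fun x => ENNReal.rpow_le_rpow ?_ (h.pos x).le
        exact (hpointwise A f G' hf hGtop hG' hGG' hmax x).trans (mul_le_mul_left le_add_self _)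
    _ ≤ K ^ b * ∫⁻ x, (G' x + S x) ^ P x :=
        lintegral_const_mul_rpow_le (fun x => (h.pos x).le) h.upper le_self_add hK _
    _ ≤ K ^ b * (2 ^ b * (C₁ + C₂)) := by
        gcongr
        exact (h.lintegral_add_rpow_le hG' _).trans (by gcongr)

end MixedNorm

section BallWeight

/-- The power `r^{-α}` for small radii and `r^{-β}` for large radii. With `α = d / P x` and
`β = d / P_∞` it is the reciprocal, up to a constant factor, of the `L^P` norm of the indicator
function of the ball `B_r(x)` in a `d`-dimensional space. -/
def ballWeight (α β r : ℝ) : ℝ := if r ≤ 1 then r ^ (-α) else r ^ (-β)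

variable {r : ℝ} {α β : ℝ}

lemma ballWeight_pos (hr : 0 < r) (α β : ℝ) : 0 < ballWeight α β r := by
  unfold ballWeight
  split_ifs <;> positivity

lemma ballWeight_self (α r : ℝ) : ballWeight α α r = r ^ (-α) := ite_self _

lemma ballWeight_mul_ballWeight (hr : 0 < r) (α β α' β' : ℝ) :
    ballWeight α β r * ballWeight α' β' r = ballWeight (α + α') (β + β') r := by
  unfold ballWeight
  split_ifs <;> rw [← Real.rpow_add hr, neg_add]

lemma rpow_mul_ballWeight_mul_le {σ e β' ε : ℝ} (hσ : 1 ≤ σ) (hr : 0 < r) (hα : e + ε ≤ α)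
    (hβ' : e + ε ≤ β') (hβ : β ≤ β') :
    σ ^ e * ballWeight α β' (σ * r) ≤ σ ^ (-ε) * ballWeight α β r := by
  have hσ0 : 0 < σ := one_pos.trans_le hσ
  have hle : r ≤ σ * r := le_mul_of_one_le_left hr.le hσ
  have hmul (γ : ℝ) : σ ^ e * (σ * r) ^ (-γ) = σ ^ (e - γ) * r ^ (-γ) := by
    rw [Real.mul_rpow hσ0.le hr.le, ← mul_assoc, ← Real.rpow_add hσ0, sub_eq_add_neg]
  unfold ballWeight
  rcases le_or_gt (σ * r) 1 with hσr | hσr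
  · rw [if_pos hσr, if_pos (hle.trans hσr), hmul]
    gcongr
    linarith
  rw [if_neg hσr.not_ge]
  split_ifs with hr1
  · calc σ ^ e * (σ * r) ^ (-β') ≤ σ ^ e * (σ * r) ^ (-(e + ε)) := by
          gcongr
          exact hσr.le
      _ = σ ^ (-ε) * r ^ (-(e + ε)) := by rw [hmul, sub_add_cancel_left]
      _ ≤ σ ^ (-ε) * r ^ (-α) := by
          gcongr 1
          exact Real.rpow_le_rpow_of_exponent_ge hr hr1 (neg_le_neg hα)
  · rw [hmul]
    gcongr ?_ * ?_
    · exact Real.rpow_le_rpow_of_exponent_le hσ (by linarith)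
    · exact Real.rpow_le_rpow_of_exponent_le (not_le.1 hr1).le (neg_le_neg hβ)

end BallWeight

section BallNorm

variable {E : Type*} [NormedAddCommGroup E] [NormedSpace ℝ E] [FiniteDimensional ℝ E]
  [MeasurableSpace E] [BorelSpace E] {P : E → ℝ} {Pi a b c : ℝ}

local notation "dim" => (Module.finrank ℝ E : ℝ)

lemma ofReal_rpow_neg_finrank_mul_addHaar_ball (μ : Measure E) [μ.IsAddHaarMeasure] (x : E)
    {r : ℝ} (hr : 0 < r) :
    ENNReal.ofReal (r ^ (-dim)) * μ (Metric.ball x r) = μ (Metric.ball 0 1) := by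
  rw [Measure.addHaar_ball_of_pos μ x hr, ← mul_assoc, ← ENNReal.ofReal_mul (by positivity),
    ← Real.rpow_natCast, ← Real.rpow_add hr, neg_add_cancel, Real.rpow_zero, ENNReal.ofReal_one,
    one_mul]

lemma ofReal_rpow_neg_div_rpow {r : ℝ} (hr : 0 < r) (d : ℝ) {e : ℝ} (he : e ≠ 0) :
    ENNReal.ofReal (r ^ (-(d / e))) ^ e = ENNReal.ofReal (r ^ (-d)) := by
  rw [ENNReal.ofReal_rpow_of_pos (by positivity), ← Real.rpow_mul hr.le, neg_mul,
    div_mul_cancel₀ d he]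

lemma LogHolderExponent.setLIntegral_ball_rpow_le (h : LogHolderExponent P a b c)
    (μ : Measure E) [μ.IsAddHaarMeasure] (x₀ : E) {r : ℝ} (hr : 0 < r) (hr1 : r ≤ 1) :
    ∫⁻ x in Metric.ball x₀ r, ENNReal.ofReal (r ^ (-(dim / P x₀))) ^ P x ∂μ ≤
      ENNReal.ofReal (Real.exp (dim * c)) * μ (Metric.ball 0 1) := by
  set t : ℝ≥0∞ := ENNReal.ofReal (r ^ (-(dim / P x₀)))
  have hrinv : 1 ≤ r⁻¹ := (one_le_inv₀ hr).2 hr1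
  have hteq : t = ENNReal.ofReal (r⁻¹ ^ (dim / P x₀)) := by
    rw [Real.inv_rpow hr.le, ← Real.rpow_neg hr.le]
  have ht1 : 1 ≤ t := by
    rw [hteq]
    exact ENNReal.one_le_ofReal.2
      (Real.one_le_rpow hrinv (div_nonneg (Nat.cast_nonneg _) (h.pos x₀).le))
  have ht : t ≤ 1 * ENNReal.ofReal (Real.exp 1 + r⁻¹) ^ dim := by
    rw [one_mul, ENNReal.ofReal_rpow_of_pos (by positivity), hteq]
    refine ENNReal.ofReal_le_ofReal ?_
    calc r⁻¹ ^ (dim / P x₀) ≤ r⁻¹ ^ dim := Real.rpow_le_rpow_of_exponent_le hrinv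
          (div_le_self (Nat.cast_nonneg _) (h.one_le_apply x₀))
      _ ≤ (Real.exp 1 + r⁻¹) ^ dim := by
          gcongr
          exact le_add_of_nonneg_left (Real.exp_pos 1).le
  have hpoint (x : E) (hx : x ∈ Metric.ball x₀ r) :
      t ^ P x ≤ ENNReal.ofReal (Real.exp (dim * c)) * ENNReal.ofReal (r ^ (-dim)) := by
    rw [← ofReal_rpow_neg_div_rpow hr dim (h.pos x₀).ne']
    refine rpow_le_mul_rpow_of_sub (one_pos.trans_le ht1).ne' ENNReal.ofReal_ne_top ?_
    simpa using h.rpow_sub_le le_rfl (Nat.cast_nonneg _) hr (Metric.mem_ball.1 hx).le ht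
      (((ENNReal.inv_le_one.2 ht1).trans ht1).trans ht)
  calc ∫⁻ x in Metric.ball x₀ r, t ^ P x ∂μ
      ≤ ∫⁻ _ in Metric.ball x₀ r,
          ENNReal.ofReal (Real.exp (dim * c)) * ENNReal.ofReal (r ^ (-dim)) ∂μ :=
        setLIntegral_mono' measurableSet_ball hpoint
    _ = ENNReal.ofReal (Real.exp (dim * c)) * μ (Metric.ball 0 1) := by
        rw [setLIntegral_const, mul_assoc, ofReal_rpow_neg_finrank_mul_addHaar_ball μ x₀ hr]

namespace DecayingLogHolderExponent

lemma setLIntegral_ball_rpow_inf_le (h : DecayingLogHolderExponent P Pi a b c)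
    (μ : Measure E) [μ.IsAddHaarMeasure] (x₀ : E) {r : ℝ} (hr : 1 ≤ r) :
    ∫⁻ x in Metric.ball x₀ r, ENNReal.ofReal (r ^ (-(dim / Pi))) ^ P x ∂μ ≤
      ENNReal.ofReal (Real.exp ((dim + 1) * c)) * μ (Metric.ball 0 1) +
        ∫⁻ x, decayWeight x ∂μ := by
  have hr0 : 0 < r := one_pos.trans_le hr
  have hPi : 0 < Pi := one_pos.trans_le h.one_le_inf
  have ht1 : ENNReal.ofReal (r ^ (-(dim / Pi))) ≤ 1 :=
    ENNReal.ofReal_le_one.2 (Real.rpow_le_one_of_one_le_of_nonpos hr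
      (neg_nonpos.2 (by positivity)))
  calc ∫⁻ x in Metric.ball x₀ r, ENNReal.ofReal (r ^ (-(dim / Pi))) ^ P x ∂μ
      ≤ ∫⁻ x in Metric.ball x₀ r, (ENNReal.ofReal (Real.exp ((dim + 1) * c)) *
          ENNReal.ofReal (r ^ (-dim)) + decayWeight x) ∂μ := by
        refine lintegral_mono fun x => ?_
        rw [← ofReal_rpow_neg_div_rpow hr0 dim hPi.ne']
        exact (h.rpow_le_rpow_inf ht1 x).1
    _ = ENNReal.ofReal (Real.exp ((dim + 1) * c)) * μ (Metric.ball 0 1) +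
          ∫⁻ x in Metric.ball x₀ r, decayWeight x ∂μ := by
        rw [lintegral_add_left measurable_const, setLIntegral_const, mul_assoc,
          ofReal_rpow_neg_finrank_mul_addHaar_ball μ x₀ hr0]
    _ ≤ _ := by
        gcongr
        exact Measure.restrict_le_self

lemma exists_setLIntegral_ball_ballWeight_rpow_le (h : DecayingLogHolderExponent P Pi a b c)
    (μ : Measure E) [μ.IsAddHaarMeasure] :
    ∃ C ≠ ∞, ∀ (x₀ : E) (r : ℝ), 0 < r →
      ∫⁻ x in Metric.ball x₀ r,
        ENNReal.ofReal (ballWeight (dim / P x₀) (dim / Pi) r) ^ P x ∂μ ≤ C := by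
  have hball : μ (Metric.ball 0 1) ≠ ∞ := measure_ball_lt_top.ne
  have hweight := lintegral_decayWeight_ne_top μ
  refine ⟨ENNReal.ofReal (Real.exp (dim * c)) * μ (Metric.ball 0 1) +
    (ENNReal.ofReal (Real.exp ((dim + 1) * c)) * μ (Metric.ball 0 1) + ∫⁻ x, decayWeight x ∂μ),
    by finiteness, fun x₀ r hr => ?_⟩
  unfold ballWeight
  split_ifs with hr1
  · exact (h.setLIntegral_ball_rpow_le μ x₀ hr hr1).trans le_self_add
  · exact (h.setLIntegral_ball_rpow_inf_le μ x₀ (not_le.1 hr1).le).trans le_add_self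

/-- Young's inequality for `g w`, where the constant `w` is the ball weight of the conjugate
exponent: up to constants, `w⁻¹` is the norm of the indicator function of the ball in the dual
space. -/
lemma exists_setLIntegral_ball_le (h : DecayingLogHolderExponent P Pi a b c) (ha : 1 < a)
    (μ : Measure E) [μ.IsAddHaarMeasure] :
    ∃ C ≠ ∞, ∀ (x₀ : E) (r : ℝ) (g : E → ℝ≥0∞), 0 < r → Measurable g →
      ∫⁻ x in Metric.ball x₀ r, g x ^ P x ∂μ ≤ 1 →
        ∫⁻ x in Metric.ball x₀ r, g x ∂μ ≤
          C * ENNReal.ofReal (r ^ dim * ballWeight (dim / P x₀) (dim / Pi) r) := by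
  obtain ⟨C, hC, hball⟩ := (h.conjExponent ha).exists_setLIntegral_ball_ballWeight_rpow_le μ
  refine ⟨1 + C, by finiteness, fun x₀ r g hr hg hg1 => ?_⟩
  set w : ℝ≥0∞ := ENNReal.ofReal
    (ballWeight (dim / (P x₀).conjExponent) (dim / Pi.conjExponent) r)
  set z : ℝ≥0∞ := ENNReal.ofReal (r ^ dim * ballWeight (dim / P x₀) (dim / Pi) r)
  have hconj {s : ℝ} (hs : 1 < s) : dim / s.conjExponent + dim / s = dim := by
    have : s - 1 ≠ 0 := (sub_pos.2 hs).ne'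
    have hs0 : s ≠ 0 := (one_pos.trans hs).ne'
    unfold Real.conjExponent
    field_simp
    ring
  have hwz : w * z = 1 := by
    rw [← ENNReal.ofReal_mul (ballWeight_pos hr _ _).le, mul_left_comm,
      ballWeight_mul_ballWeight hr, hconj (ha.trans_le (h.lower x₀)),
      hconj (ha.trans_le h.inf_lower), ballWeight_self, ← Real.rpow_add hr, add_neg_cancel,
      Real.rpow_zero, ENNReal.ofReal_one]
  calc ∫⁻ x in Metric.ball x₀ r, g x ∂μ
      = (∫⁻ x in Metric.ball x₀ r, g x * w ∂μ) * z := by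
        rw [lintegral_mul_const _ hg, mul_assoc, hwz, mul_one]
    _ ≤ (∫⁻ x in Metric.ball x₀ r, (g x ^ P x + w ^ (P x).conjExponent) ∂μ) * z := by
        gcongr
        exact mul_le_rpow_add_rpow_conjExponent _ _ (ha.trans_le (h.lower _))
    _ ≤ (1 + C) * z := by
        rw [lintegral_add_left (hg.pow h.measurable)]
        gcongr
        exact hball x₀ r hr

end DecayingLogHolderExponent

end BallNorm

section KernelSum

variable {m : ℝ}

lemma etaK_le_two_pow (ν : ℕ) (hm : 0 ≤ m) (z : Rn n) : etaK ν m z ≤ (2 ^ n) ^ ν := by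
  have h1 : 1 ≤ 1 + 2 ^ ν * ‖z‖ := le_add_of_nonneg_right (by positivity)
  calc etaK ν m z ≤ ENNReal.ofReal (2 ^ (ν * n) * 1) := by
        unfold etaK
        gcongr
        exact Real.rpow_le_one_of_one_le_of_nonpos h1 (neg_nonpos.2 hm)
    _ = (2 ^ n) ^ ν := by
        rw [mul_one, mul_comm, pow_mul, ENNReal.ofReal_pow (by positivity),
          ENNReal.ofReal_pow zero_le_two, ENNReal.ofReal_ofNat]

lemma etaK_add (ν N : ℕ) (m : ℝ) (z : Rn n) :
    etaK (ν + N) m z = (2 ^ n) ^ N * etaK ν m ((2 : ℝ) ^ N • z) := by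
  have h2 : ((2 : ℝ≥0∞) ^ n) ^ N = ENNReal.ofReal ((2 ^ n) ^ N) := by
    rw [ENNReal.ofReal_pow (by positivity), ENNReal.ofReal_pow zero_le_two, ENNReal.ofReal_ofNat]
  rw [h2, etaK, etaK, ← ENNReal.ofReal_mul (by positivity), norm_smul, norm_pow, Real.norm_ofNat]
  ring_nf

lemma exists_tsum_etaK_le_rpow_neg (n : ℕ) (hm : n < m) :
    ∃ C ≠ ∞, ∀ z : Rn n, z ≠ 0 → ∑' ν, etaK ν m z ≤ C * ENNReal.ofReal (‖z‖ ^ (-m)) := by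
  set θ : ℝ≥0∞ := 2 ^ (-(m - n))
  have hθ : θ < 1 := ENNReal.rpow_lt_one_of_one_lt_of_neg one_lt_two
    (neg_neg_of_pos (sub_pos.2 hm))
  refine ⟨(1 - θ)⁻¹, ENNReal.inv_ne_top.2 (tsub_pos_of_lt hθ).ne', fun z hz => ?_⟩
  have : 0 < ‖z‖ := norm_pos_iff.2 hz
  have hm0 : 0 ≤ m := n.cast_nonneg.trans hm.le
  rw [← ENNReal.tsum_geometric, ← ENNReal.tsum_mul_right]
  gcongr with ν
  have hθν : θ ^ ν = ENNReal.ofReal (2 ^ (ν * n) * (2 ^ ν) ^ (-m)) := by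
    rw [← ENNReal.rpow_natCast, ← ENNReal.rpow_mul, ← ENNReal.ofReal_ofNat,
      ENNReal.ofReal_rpow_of_pos two_pos, ← Real.rpow_natCast, ← Real.rpow_natCast,
      ← Real.rpow_mul zero_le_two, ← Real.rpow_add two_pos]
    congr 2
    push_cast
    ring
  rw [hθν, ← ENNReal.ofReal_mul (by positivity), mul_assoc,
    ← Real.mul_rpow (by positivity) (norm_nonneg z)]
  refine ENNReal.ofReal_le_ofReal (mul_le_mul_of_nonneg_left ?_ (by positivity))
  exact Real.rpow_le_rpow_of_nonpos (by positivity) (le_add_of_nonneg_left zero_le_one)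
    (neg_nonpos.2 hm0)

/-- For `|z| < 1` choose `N` with `2^N |z| ≈ 1`. The first `N` terms form a geometric sum of size
`2^{Nn} ≈ |z|^{-n}`, and by scaling the others reduce to the case of a point of norm at
least one. -/
lemma exists_tsum_etaK_le_rpow_neg_dim (hn : 0 < n) (hm : n < m) :
    ∃ C ≠ ∞, ∀ z : Rn n, z ≠ 0 →
      ∑' ν, etaK ν m z ≤ C * ENNReal.ofReal (‖z‖ ^ (-(n : ℝ))) := by
  obtain ⟨C, hC, hfar⟩ := exists_tsum_etaK_le_rpow_neg n hm
  have hm0 : 0 ≤ m := n.cast_nonneg.trans hm.le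
  refine ⟨C + (1 + C) * 2 ^ n, by finiteness, fun z hz => ?_⟩
  have hz0 : 0 < ‖z‖ := norm_pos_iff.2 hz
  rcases le_or_gt 1 ‖z‖ with hz1 | hz1
  · calc ∑' ν, etaK ν m z ≤ C * ENNReal.ofReal (‖z‖ ^ (-m)) := hfar z hz
      _ ≤ (C + (1 + C) * 2 ^ n) * ENNReal.ofReal (‖z‖ ^ (-(n : ℝ))) := by
          gcongr
          exact le_self_add
  obtain ⟨N, hN, hN'⟩ := exists_nat_pow_near ((one_le_inv₀ hz0).2 hz1.le) one_lt_two
  have hnorm : 1 ≤ ‖(2 : ℝ) ^ (N + 1) • z‖ := by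
    rw [norm_smul, norm_pow, Real.norm_ofNat]
    exact ((inv_lt_iff_one_lt_mul₀ hz0).1 hN').le
  have htail : ∑' ν, etaK ν m ((2 : ℝ) ^ (N + 1) • z) ≤ C := by
    refine (hfar _ (norm_pos_iff.1 (one_pos.trans_le hnorm))).trans
      (mul_le_of_le_one_right zero_le (ENNReal.ofReal_le_one.2 ?_))
    exact Real.rpow_le_one_of_one_le_of_nonpos hnorm (neg_nonpos.2 hm0)
  have hhead : ∑ ν ∈ Finset.range (N + 1), etaK ν m z ≤ (2 ^ n) ^ (N + 1) := by
    refine (Finset.sum_le_sum fun ν _ => etaK_le_two_pow ν hm0 z).trans ?_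
    have hgeom : ∑ ν ∈ Finset.range (N + 1), (2 ^ n) ^ ν ≤ (2 ^ n) ^ (N + 1) :=
      (Nat.geomSum_lt (le_self_pow₀ one_le_two hn.ne') fun ν hν => Finset.mem_range.1 hν).le
    exact_mod_cast hgeom
  have hpow : ((2 : ℝ≥0∞) ^ n) ^ N ≤ ENNReal.ofReal (‖z‖ ^ (-(n : ℝ))) := by
    rw [← pow_mul, mul_comm, pow_mul, Real.rpow_neg hz0.le, Real.rpow_natCast, ← inv_pow,
      ENNReal.ofReal_pow (by positivity)]
    gcongr
    simpa [ENNReal.ofReal_pow] using ENNReal.ofReal_le_ofReal hN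
  have hsplit := Summable.sum_add_tsum_nat_add' (f := fun ν => etaK ν m z) (k := N + 1)
    ENNReal.summable
  calc ∑' ν, etaK ν m z
      = ∑ ν ∈ Finset.range (N + 1), etaK ν m z + ∑' ν, etaK (ν + (N + 1)) m z := hsplit.symm
    _ ≤ (2 ^ n) ^ (N + 1) + (2 ^ n) ^ (N + 1) * C := by
        simp_rw [etaK_add, ENNReal.tsum_mul_left]
        exact add_le_add hhead (mul_le_mul_right htail _)
    _ = (1 + C) * 2 ^ n * (2 ^ n) ^ N := by rw [pow_succ]; ring
    _ ≤ (C + (1 + C) * 2 ^ n) * ENNReal.ofReal (‖z‖ ^ (-(n : ℝ))) :=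
        mul_le_mul' le_add_self hpow

lemma exists_tsum_etaK_le_ballWeight (hn : 0 < n) (hm : n < m) :
    ∃ C ≠ ∞, ∀ (R : ℝ) (z : Rn n), 0 < R → R / 4 ≤ ‖z‖ →
      ∑' ν, etaK ν m z ≤ C * ENNReal.ofReal (ballWeight n m R) := by
  obtain ⟨C₁, hC₁, hnear⟩ := exists_tsum_etaK_le_rpow_neg_dim hn hm
  obtain ⟨C₂, hC₂, hfar⟩ := exists_tsum_etaK_le_rpow_neg n hm
  have hscale {R s : ℝ} {z : Rn n} (hR : 0 < R) (hz : R / 4 ≤ ‖z‖) (hs : 0 ≤ s) :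
      ENNReal.ofReal (‖z‖ ^ (-s)) ≤ ENNReal.ofReal (4 ^ s) * ENNReal.ofReal (R ^ (-s)) := by
    rw [← ENNReal.ofReal_mul (by positivity)]
    refine ENNReal.ofReal_le_ofReal ?_
    calc ‖z‖ ^ (-s) ≤ (R / 4) ^ (-s) :=
          Real.rpow_le_rpow_of_nonpos (by positivity) hz (neg_nonpos.2 hs)
      _ = 4 ^ s * R ^ (-s) := by
          rw [Real.div_rpow hR.le zero_le_four, Real.rpow_neg zero_le_four, div_inv_eq_mul,
            mul_comm]
  refine ⟨C₁ * ENNReal.ofReal (4 ^ (n : ℝ)) + C₂ * ENNReal.ofReal (4 ^ m), by finiteness,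
    fun R z hR hz => ?_⟩
  have hz0 : z ≠ 0 := norm_pos_iff.1 ((by positivity : 0 < R / 4).trans_le hz)
  unfold ballWeight
  split_ifs
  · calc ∑' ν, etaK ν m z ≤ C₁ * ENNReal.ofReal (‖z‖ ^ (-(n : ℝ))) := hnear z hz0
      _ ≤ C₁ * (ENNReal.ofReal (4 ^ (n : ℝ)) * ENNReal.ofReal (R ^ (-(n : ℝ)))) := by
          gcongr
          exact hscale hR hz n.cast_nonneg
      _ ≤ _ := by
          rw [← mul_assoc]
          gcongr
          exact le_self_add
  · calc ∑' ν, etaK ν m z ≤ C₂ * ENNReal.ofReal (‖z‖ ^ (-m)) := hfar z hz0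
      _ ≤ C₂ * (ENNReal.ofReal (4 ^ m) * ENNReal.ofReal (R ^ (-m))) := by
          gcongr
          exact hscale hR hz (n.cast_nonneg.trans hm.le)
      _ ≤ _ := by
          rw [← mul_assoc]
          gcongr
          exact le_add_self

end KernelSum

section SequenceNorm

variable {s : ℝ}

lemma realLqNorm_const_mul (hs : 0 < s) (k : ℝ≥0∞) (a : ℕ → ℝ≥0∞) :
    realLqNorm s (fun ν => k * a ν) = k * realLqNorm s a := by
  unfold realLqNorm
  simp_rw [ENNReal.mul_rpow_of_nonneg _ _ hs.le, ENNReal.tsum_mul_left]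
  rw [ENNReal.mul_rpow_of_nonneg _ _ (by positivity), one_div, ENNReal.rpow_rpow_inv hs.ne']

lemma realLqNorm_add_le (hs : 1 ≤ s) (a b : ℕ → ℝ≥0∞) :
    realLqNorm s (a + b) ≤ realLqNorm s a + realLqNorm s b := by
  simpa only [lintegral_count, Pi.add_apply, realLqNorm] using
    ENNReal.lintegral_Lp_add_le (μ := Measure.count) (f := a) (g := b)
      (measurable_of_countable a).aemeasurable (measurable_of_countable b).aemeasurable hs

lemma realLqNorm_le_tsum (hs : 1 ≤ s) (a : ℕ → ℝ≥0∞) : realLqNorm s a ≤ ∑' ν, a ν := by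
  have hs0 : 0 < s := one_pos.trans_le hs
  have hsplit (t : ℝ≥0∞) : t ^ s = t * t ^ (s - 1) := by
    conv_lhs => rw [← add_sub_cancel 1 s,
      ENNReal.rpow_add_of_nonneg _ _ zero_le_one (sub_nonneg.2 hs), ENNReal.rpow_one]
  rw [realLqNorm_le_iff hs0, hsplit (∑' ν, a ν), ← ENNReal.tsum_mul_right]
  refine ENNReal.tsum_le_tsum fun ν => ?_
  rw [hsplit]
  exact mul_le_mul_right (ENNReal.rpow_le_rpow (ENNReal.le_tsum ν) (sub_nonneg.2 hs)) _

end SequenceNorm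

section FarPart

variable {P : Rn n → ℝ} {Pi a b c m ε : ℝ}

lemma compl_ball_subset_iUnion_annulus {X : Type*} [PseudoMetricSpace X] (x : X) {r : ℝ}
    (hr : 0 < r) :
    (Metric.ball x r)ᶜ ⊆
      ⋃ k : ℕ, Metric.ball x (2 ^ (k + 1) * r) \ Metric.ball x (2 ^ (k + 1) * r / 2) := by
  intro y hy
  have hy' : 1 ≤ dist y x / r := (one_le_div hr).2 (not_lt.1 hy)
  obtain ⟨k, hk, hk'⟩ := exists_nat_pow_near hy' one_lt_two
  refine Set.mem_iUnion.2 ⟨k, (div_lt_iff₀ hr).1 hk', fun hlt => ?_⟩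
  rw [Metric.mem_ball, pow_succ] at hlt
  linarith [(le_div_iff₀ hr).1 hk]

lemma DecayingLogHolderExponent.exists_setLIntegral_annulus_le
    (h : DecayingLogHolderExponent P Pi a b c) (ha : 1 < a) (hn : 0 < n) (hm : n < m) :
    ∃ C ≠ ∞, ∀ (x₀ x : Rn n) (R e : ℝ) (g : Rn n → ℝ≥0∞), 0 < R → Measurable g →
      x ∈ Metric.ball x₀ (R / 4) →
      ∫⁻ y in Metric.ball x₀ R, (ENNReal.ofReal (R ^ (-e)) * g y) ^ P y ≤ 1 →
        ∫⁻ y in Metric.ball x₀ R \ Metric.ball x₀ (R / 2), (∑' ν, etaK ν m (x - y)) * g y ≤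
          C * ENNReal.ofReal (R ^ e * ballWeight (n / P x₀) (m - n + n / Pi) R) := by
  obtain ⟨K, hK, hkernel⟩ := exists_tsum_etaK_le_ballWeight hn hm
  obtain ⟨C, hC, hhol⟩ := h.exists_setLIntegral_ball_le ha volume
  simp only [finrank_euclideanSpace_fin] at hhol
  refine ⟨K * C, by finiteness, fun x₀ x R e g hR hg hx hmod => ?_⟩
  set B := Metric.ball x₀ R
  have hker {y : Rn n} (hy : y ∈ B \ Metric.ball x₀ (R / 2)) :
      ∑' ν, etaK ν m (x - y) ≤ K * ENNReal.ofReal (ballWeight n m R) := by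
    refine hkernel R (x - y) hR ?_
    rw [← dist_eq_norm, dist_comm]
    linarith [dist_triangle y x x₀, Metric.mem_ball.1 hx, not_lt.1 (mt Metric.mem_ball.2 hy.2)]
  have hgint : ∫⁻ y in B, g y ≤ ENNReal.ofReal (R ^ e) *
      (C * ENNReal.ofReal (R ^ (n : ℝ) * ballWeight (n / P x₀) (n / Pi) R)) := by
    have hone : ENNReal.ofReal (R ^ e) * ENNReal.ofReal (R ^ (-e)) = 1 := by
      rw [← ENNReal.ofReal_mul (by positivity), ← Real.rpow_add hR, add_neg_cancel,
        Real.rpow_zero, ENNReal.ofReal_one]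
    calc ∫⁻ y in B, g y
        = ENNReal.ofReal (R ^ e) * ∫⁻ y in B, ENNReal.ofReal (R ^ (-e)) * g y := by
          rw [lintegral_const_mul _ hg, ← mul_assoc, hone, one_mul]
      _ ≤ _ := mul_le_mul_right (hhol x₀ R _ hR (by fun_prop) hmod) _
  have hweight : ballWeight n m R * (R ^ (n : ℝ) * ballWeight (n / P x₀) (n / Pi) R) =
      ballWeight (n / P x₀) (m - n + n / Pi) R := by
    have hRn : R ^ (n : ℝ) = ballWeight (-n) (-n) R := by rw [ballWeight_self, neg_neg]
    rw [hRn, ballWeight_mul_ballWeight hR, ballWeight_mul_ballWeight hR]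
    congr 1 <;> ring
  calc ∫⁻ y in B \ Metric.ball x₀ (R / 2), (∑' ν, etaK ν m (x - y)) * g y
      ≤ ∫⁻ y in B \ Metric.ball x₀ (R / 2), K * ENNReal.ofReal (ballWeight n m R) * g y :=
        setLIntegral_mono' (measurableSet_ball.diff measurableSet_ball)
          fun y hy => mul_le_mul_left (hker hy) _
    _ ≤ ∫⁻ y in B, K * ENNReal.ofReal (ballWeight n m R) * g y :=
        lintegral_mono_set Set.sdiff_subset
    _ = K * ENNReal.ofReal (ballWeight n m R) * ∫⁻ y in B, g y := lintegral_const_mul _ hg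
    _ ≤ K * ENNReal.ofReal (ballWeight n m R) * (ENNReal.ofReal (R ^ e) *
        (C * ENNReal.ofReal (R ^ (n : ℝ) * ballWeight (n / P x₀) (n / Pi) R))) := by gcongr
    _ = K * C * ENNReal.ofReal (R ^ e *
        (ballWeight n m R * (R ^ (n : ℝ) * ballWeight (n / P x₀) (n / Pi) R))) := by
        rw [ENNReal.ofReal_mul (by positivity : 0 ≤ R ^ e),
          ENNReal.ofReal_mul (ballWeight_pos hR _ _).le]
        ring
    _ = _ := by rw [hweight]

lemma rpow_mul_ballWeight_two_pow_mul_le {r e ε α β β' : ℝ} (hr : 0 < r) (hα : e + ε ≤ α)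
    (hβ' : e + ε ≤ β') (hβ : β ≤ β') (k : ℕ) :
    (2 ^ k * r) ^ e * ballWeight α β' (2 ^ k * r) ≤
      (2 ^ (-ε)) ^ k * (r ^ e * ballWeight α β r) := by
  rw [Real.mul_rpow (by positivity) hr.le, mul_comm ((2 ^ k) ^ e), mul_assoc,
    Real.rpow_pow_comm zero_le_two, mul_left_comm _ (r ^ e)]
  exact mul_le_mul_of_nonneg_left
    (rpow_mul_ballWeight_mul_le (one_le_pow₀ one_le_two) hr hα hβ' hβ) (by positivity)

/-- On the annulus of radius `2^k r` the bound is smaller than on `B_r` by the factor `2^{-εk}`;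
the Morrey condition at all scales thus makes the contributions of the annuli summable. -/
lemma DecayingLogHolderExponent.exists_setLIntegral_compl_ball_le
    (h : DecayingLogHolderExponent P Pi a b c) (ha : 1 < a) (hn : 0 < n) (hm : n < m)
    (hε : 0 < ε) :
    ∃ C ≠ ∞, ∀ (x₀ x : Rn n) (r e : ℝ) (g : Rn n → ℝ≥0∞), 0 < r → e + ε ≤ n / P x₀ →
      e + ε ≤ m - n + n / Pi → Measurable g →
      (∀ R : ℝ, 0 < R →
        ∫⁻ y in Metric.ball x₀ R, (ENNReal.ofReal (R ^ (-e)) * g y) ^ P y ≤ 1) →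
      x ∈ Metric.ball x₀ r →
        ∫⁻ y in (Metric.ball x₀ (2 * r))ᶜ, (∑' ν, etaK ν m (x - y)) * g y ≤
          C * ENNReal.ofReal (r ^ e * ballWeight (n / P x₀) (n / Pi) r) := by
  obtain ⟨C, hC, hann⟩ := h.exists_setLIntegral_annulus_le ha hn hm
  set θ : ℝ≥0∞ := 2 ^ (-ε)
  have hθ : θ < 1 := ENNReal.rpow_lt_one_of_one_lt_of_neg one_lt_two (neg_neg_of_pos hε)
  have : (1 - θ)⁻¹ ≠ ∞ := ENNReal.inv_ne_top.2 (tsub_pos_of_lt hθ).ne'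
  refine ⟨C * (1 - θ)⁻¹, by finiteness, fun x₀ x r e g hr he he' hg hmod hx => ?_⟩
  set w : ℝ := r ^ e * ballWeight (n / P x₀) (n / Pi) r
  have hw : 0 ≤ w := mul_nonneg (by positivity) (ballWeight_pos hr _ _).le
  have hdecay (k : ℕ) : ENNReal.ofReal ((2 ^ (k + 1) * (2 * r)) ^ e *
      ballWeight (n / P x₀) (m - n + n / Pi) (2 ^ (k + 1) * (2 * r))) ≤
        θ ^ k * ENNReal.ofReal w := by
    have hσ : (2 : ℝ) ^ (k + 1) * (2 * r) = 2 ^ (k + 2) * r := by ring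
    have hθk : θ ^ k = ENNReal.ofReal ((2 ^ (-ε)) ^ k) := by
      rw [ENNReal.ofReal_pow (by positivity), ← ENNReal.ofReal_rpow_of_pos two_pos,
        ENNReal.ofReal_ofNat]
    rw [hθk, ← ENNReal.ofReal_mul (by positivity), hσ]
    have hPi : n / Pi ≤ m - n + n / Pi := le_add_of_nonneg_left (sub_pos.2 hm).le
    refine ENNReal.ofReal_le_ofReal
      ((rpow_mul_ballWeight_two_pow_mul_le hr he he' hPi (k + 2)).trans ?_)
    refine mul_le_mul_of_nonneg_right (pow_le_pow_of_le_one (by positivity) ?_ (by lia)) hw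
    exact Real.rpow_le_one_of_one_le_of_nonpos one_le_two (neg_nonpos.2 hε.le)
  have hx' (k : ℕ) : x ∈ Metric.ball x₀ (2 ^ (k + 1) * (2 * r) / 4) := by
    refine Metric.ball_subset_ball ?_ hx
    have : (1 : ℝ) ≤ 2 ^ k := one_le_pow₀ one_le_two
    rw [pow_succ]
    nlinarith
  calc ∫⁻ y in (Metric.ball x₀ (2 * r))ᶜ, (∑' ν, etaK ν m (x - y)) * g y
      ≤ ∑' k : ℕ, ∫⁻ y in Metric.ball x₀ (2 ^ (k + 1) * (2 * r)) \
          Metric.ball x₀ (2 ^ (k + 1) * (2 * r) / 2), (∑' ν, etaK ν m (x - y)) * g y :=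
        (lintegral_mono_set (compl_ball_subset_iUnion_annulus x₀ (by positivity))).trans
          (lintegral_iUnion_le _ _)
    _ ≤ ∑' k : ℕ, C * (θ ^ k * ENNReal.ofReal w) := by
        gcongr with k
        exact (hann x₀ x _ e g (by positivity) hg (hx' k) (hmod _ (by positivity))).trans
          (mul_le_mul_right (hdecay k) C)
    _ = _ := by
        rw [ENNReal.tsum_mul_left, ENNReal.tsum_mul_right, ENNReal.tsum_geometric, mul_assoc]

end FarPart

section Splitting

variable {k : ℕ → Rn n → ℝ≥0∞} {f : ℕ → Rn n → ℝ≥0∞} {B : Set (Rn n)}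

lemma realLqNorm_lconv_le_add {s : ℝ} (hs : 1 ≤ s) (hk : ∀ ν, Measurable (k ν))
    (hf : ∀ ν, Measurable (f ν)) (hB : MeasurableSet B) (x : Rn n) :
    realLqNorm s (fun ν => lconv (k ν) (f ν) x) ≤
      realLqNorm s (fun ν => lconv (k ν) (B.indicator (f ν)) x) +
        ∑' ν, lconv (k ν) (Bᶜ.indicator (f ν)) x := by
  have hsplit : (fun ν => lconv (k ν) (f ν) x) =
      (fun ν => lconv (k ν) (B.indicator (f ν)) x) +
        fun ν => lconv (k ν) (Bᶜ.indicator (f ν)) x := by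
    funext ν
    rw [Pi.add_apply, ← Pi.add_apply, ← lconv_add (hk ν) ((hf ν).indicator hB),
      Set.indicator_self_add_compl]
  rw [hsplit]
  exact (realLqNorm_add_le hs _ _).trans (add_le_add_right (realLqNorm_le_tsum hs _) _)

lemma tsum_lconv_indicator_le {g : Rn n → ℝ≥0∞} (hk : ∀ ν, Measurable (k ν))
    (hf : ∀ ν, Measurable (f ν)) (hfg : ∀ ν, f ν ≤ g) (hB : MeasurableSet B) (x : Rn n) :
    ∑' ν, lconv (k ν) (B.indicator (f ν)) x ≤ ∫⁻ y in B, (∑' ν, k ν (x - y)) * g y := by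
  have hterm (ν : ℕ) : lconv (k ν) (B.indicator (f ν)) x = ∫⁻ y in B, k ν (x - y) * f ν y := by
    rw [lconv, ← lintegral_indicator hB]
    simp only [Set.indicator_mul_right]
  simp_rw [hterm]
  rw [← lintegral_tsum (by fun_prop)]
  gcongr with y
  rw [← ENNReal.tsum_mul_right]
  gcongr with ν
  exact hfg ν y

end Splitting

section MorreyModular

variable {P Q : Rn n → ℝ} {Pi a b c a' b' c' m ε : ℝ}

lemma ofReal_rpow_neg_le_two_pow_mul {r e : ℝ} (hr : 0 < r) {d : ℕ} (he : e ≤ d) :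
    ENNReal.ofReal (r ^ (-e)) ≤ 2 ^ d * ENNReal.ofReal ((2 * r) ^ (-e)) := by
  rw [← ENNReal.ofReal_ofNat 2, ← ENNReal.ofReal_pow zero_le_two,
    ← ENNReal.ofReal_mul (by positivity), Real.mul_rpow zero_le_two hr.le, ← mul_assoc,
    ← Real.rpow_natCast, ← Real.rpow_add two_pos]
  refine ENNReal.ofReal_le_ofReal (le_mul_of_one_le_left (by positivity) ?_)
  exact Real.one_le_rpow one_le_two (sub_nonneg.2 he)

namespace DecayingLogHolderExponent

lemma exists_lintegral_realLqNorm_lconv_indicator_rpow_le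
    (h : DecayingLogHolderExponent P Pi a b c) (ha : 1 < a) (hQ : LogHolderExponent Q a' b' c')
    (hm : n < m) :
    ∃ C ≠ ∞, ∀ (f : ℕ → Rn n → ℝ≥0∞) (t : ℝ≥0∞) (B : Set (Rn n)), (∀ ν, Measurable (f ν)) →
      MeasurableSet B → ∫⁻ x in B, (t * realLqNorm (Q x) fun ν => f ν x) ^ P x ≤ 1 →
        ∫⁻ x, (t * realLqNorm (Q x) fun ν => lconv (etaK ν m) (B.indicator (f ν)) x) ^ P x ≤
          C := by
  obtain ⟨C, hC, hmod⟩ := h.exists_lintegral_realLqNorm_lconv_rpow_le ha hQ hm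
  refine ⟨C, hC, fun f t B hf hB ht => ?_⟩
  have hfB (ν : ℕ) : Measurable (B.indicator (f ν)) := (hf ν).indicator hB
  have hscaled := hmod (fun ν y => t * B.indicator (f ν) y) (fun ν => (hfB ν).const_mul t) ?_
  · simpa only [lconv_const_mul (measurable_etaK _ _) (hfB _),
      realLqNorm_const_mul (hQ.pos _)] using hscaled
  · refine le_trans (le_of_eq ?_) ht
    rw [← lintegral_indicator hB]
    refine lintegral_congr fun x => ?_
    rw [realLqNorm_const_mul (hQ.pos x)]
    by_cases hx : x ∈ B
    · simp only [Set.indicator_of_mem hx]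
    · simp [Set.indicator_of_notMem hx, realLqNorm, hQ.pos x, h.pos x]

/-- Split `f ν` into its restrictions to the double ball and to the complement: the contribution
of the latter is at most a constant on the ball. -/
lemma exists_mul_realLqNorm_lconv_le (h : DecayingLogHolderExponent P Pi a b c) (ha : 1 < a)
    (hQ : LogHolderExponent Q a' b' c') (hn : 0 < n) (hm : n < m) (hε : 0 < ε) :
    ∃ C ≠ ∞, ∀ (f : ℕ → Rn n → ℝ≥0∞) (x₀ x : Rn n) (r e : ℝ), (∀ ν, Measurable (f ν)) → 0 < r →
      e + ε ≤ n / P x₀ → e + ε ≤ m - n + n / Pi →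
      (∀ R : ℝ, 0 < R → ∫⁻ y in Metric.ball x₀ R,
        (ENNReal.ofReal (R ^ (-e)) * realLqNorm (Q y) fun ν => f ν y) ^ P y ≤ 1) →
      x ∈ Metric.ball x₀ r →
        ENNReal.ofReal (r ^ (-e)) * realLqNorm (Q x) (fun ν => lconv (etaK ν m) (f ν) x) ≤
          2 ^ n * (ENNReal.ofReal ((2 * r) ^ (-e)) * realLqNorm (Q x) fun ν =>
            lconv (etaK ν m) ((Metric.ball x₀ (2 * r)).indicator (f ν)) x) +
          C * ENNReal.ofReal (ballWeight (n / P x₀) (n / Pi) r) := by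
  obtain ⟨C, hC, hfar⟩ := h.exists_setLIntegral_compl_ball_le ha hn hm hε
  refine ⟨C, hC, fun f x₀ x r e hf hr he he' hmod hx => ?_⟩
  set B := Metric.ball x₀ (2 * r)
  have hB : MeasurableSet B := measurableSet_ball
  set t := ENNReal.ofReal (r ^ (-e))
  set w := ENNReal.ofReal (ballWeight (n / P x₀) (n / Pi) r)
  have hen : e ≤ n :=
    calc e ≤ n / P x₀ := by linarith
      _ ≤ n := div_le_self n.cast_nonneg (h.one_le_apply x₀)
  have hone : t * ENNReal.ofReal (r ^ e) = 1 := by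
    rw [← ENNReal.ofReal_mul (by positivity), ← Real.rpow_add hr, neg_add_cancel,
      Real.rpow_zero, ENNReal.ofReal_one]
  have hcompl : t * ∑' ν, lconv (etaK ν m) (Bᶜ.indicator (f ν)) x ≤ C * w :=
    calc t * ∑' ν, lconv (etaK ν m) (Bᶜ.indicator (f ν)) x
        ≤ t * ∫⁻ y in Bᶜ, (∑' ν, etaK ν m (x - y)) * realLqNorm (Q y) fun ν => f ν y :=
          mul_le_mul_right (tsum_lconv_indicator_le (fun ν => measurable_etaK ν m) hf
            (fun ν y => le_realLqNorm (hQ.pos y) (fun ν => f ν y) ν) hB.compl x) t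
      _ ≤ t * (C * ENNReal.ofReal (r ^ e * ballWeight (n / P x₀) (n / Pi) r)) :=
          mul_le_mul_right (hfar x₀ x r e _ hr he he'
            (measurable_realLqNorm hQ.measurable hf) hmod hx) t
      _ = C * w := by
          rw [ENNReal.ofReal_mul (by positivity), mul_left_comm, ← mul_assoc t, hone, one_mul]
  refine (mul_le_mul_right (realLqNorm_lconv_le_add (hQ.one_le_apply x)
    (fun ν => measurable_etaK ν m) hf hB x) t).trans ?_
  rw [mul_add, ← mul_assoc]
  exact add_le_add (mul_le_mul_left (ofReal_rpow_neg_le_two_pow_mul hr hen) _) hcompl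

theorem exists_setLIntegral_ball_realLqNorm_lconv_rpow_le
    (h : DecayingLogHolderExponent P Pi a b c) (ha : 1 < a) (hQ : LogHolderExponent Q a' b' c')
    (hn : 0 < n) (hm : n < m) (hε : 0 < ε) {e : Rn n → ℝ} (he : ∀ x, e x + ε ≤ n / P x)
    (he' : ∀ x, e x + ε ≤ m - n + n / Pi) :
    ∃ C ≠ ∞, ∀ f : ℕ → Rn n → ℝ≥0∞, (∀ ν, Measurable (f ν)) →
      (∀ (x₀ : Rn n) (r : ℝ), 0 < r → ∫⁻ x in Metric.ball x₀ r,
        (ENNReal.ofReal (r ^ (-e x₀)) * realLqNorm (Q x) fun ν => f ν x) ^ P x ≤ 1) →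
      ∀ (x₀ : Rn n) (r : ℝ), 0 < r → ∫⁻ x in Metric.ball x₀ r, (ENNReal.ofReal (r ^ (-e x₀)) *
        realLqNorm (Q x) fun ν => lconv (etaK ν m) (f ν) x) ^ P x ≤ C := by
  obtain ⟨C₁, hC₁, hnear⟩ := h.exists_lintegral_realLqNorm_lconv_indicator_rpow_le ha hQ hm
  obtain ⟨C₂, hC₂, hpt⟩ := h.exists_mul_realLqNorm_lconv_le ha hQ hn hm hε
  obtain ⟨C₃, hC₃, hweight⟩ := h.exists_setLIntegral_ball_ballWeight_rpow_le volume
  simp only [finrank_euclideanSpace_fin] at hweight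
  have hb : 0 ≤ b := (h.pos 0).le.trans (h.upper 0)
  refine ⟨2 ^ b * ((2 ^ n) ^ b * C₁ + (1 + C₂) ^ b * C₃), by finiteness,
    fun f hf hmod x₀ r hr => ?_⟩
  set B := Metric.ball x₀ (2 * r)
  set near : Rn n → ℝ≥0∞ := fun x => ENNReal.ofReal ((2 * r) ^ (-e x₀)) *
    realLqNorm (Q x) fun ν => lconv (etaK ν m) (B.indicator (f ν)) x
  set w := ENNReal.ofReal (ballWeight (n / P x₀) (n / Pi) r)
  have hnear_meas : Measurable near :=
    (measurable_realLqNorm hQ.measurable fun ν => measurable_lconv (by fun_prop)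
      ((hf ν).indicator measurableSet_ball)).const_mul _
  have hnear_le : ∫⁻ x, near x ^ P x ≤ C₁ :=
    hnear f _ B hf measurableSet_ball (hmod x₀ (2 * r) (by positivity))
  have hP0 (x : Rn n) : 0 ≤ P x := (h.pos x).le
  calc ∫⁻ x in Metric.ball x₀ r, (ENNReal.ofReal (r ^ (-e x₀)) *
        realLqNorm (Q x) fun ν => lconv (etaK ν m) (f ν) x) ^ P x
      ≤ ∫⁻ x in Metric.ball x₀ r, (2 ^ n * near x + (1 + C₂) * w) ^ P x :=
        setLIntegral_mono' measurableSet_ball fun x hx => ENNReal.rpow_le_rpow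
          ((hpt f x₀ x r _ hf hr (he x₀) (he' x₀) (hmod x₀) hx).trans
            (add_le_add_right (mul_le_mul_left le_add_self w) _)) (hP0 x)
    _ ≤ 2 ^ b * ((∫⁻ x in Metric.ball x₀ r, (2 ^ n * near x) ^ P x) +
          ∫⁻ x in Metric.ball x₀ r, ((1 + C₂) * w) ^ P x) :=
        h.lintegral_add_rpow_le (hnear_meas.const_mul _) _
    _ ≤ 2 ^ b * ((2 ^ n) ^ b * (∫⁻ x in Metric.ball x₀ r, near x ^ P x) +
          (1 + C₂) ^ b * ∫⁻ x in Metric.ball x₀ r, w ^ P x) := by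
        gcongr 2 ^ b * (?_ + ?_)
        · exact lintegral_const_mul_rpow_le hP0 h.upper (one_le_pow₀ one_le_two)
            (by finiteness) _
        · exact lintegral_const_mul_rpow_le hP0 h.upper le_self_add (by finiteness) _
    _ ≤ 2 ^ b * ((2 ^ n) ^ b * C₁ + (1 + C₂) ^ b * C₃) := by
        gcongr 2 ^ b * ((2 ^ n) ^ b * ?_ + (1 + C₂) ^ b * ?_)
        · exact (setLIntegral_le_lintegral _ _).trans hnear_le
        · exact hweight x₀ r hr

end DecayingLogHolderExponent

end MorreyModular

section LogHolderOfPLog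

lemma LocLogHolder.continuous {g : Rn n → ℝ} (hg : LocLogHolder g) : Continuous g := by
  obtain ⟨c, hc, h⟩ := hg
  refine Metric.continuous_iff.2 fun y ε hε => ⟨Real.exp (-(c / ε)), Real.exp_pos _, ?_⟩
  intro x hx
  rcases eq_or_ne x y with rfl | hxy
  · simpa only [dist_self] using hε
  have hexp : Real.exp (c / ε) < (dist x y)⁻¹ := by
    rwa [lt_inv_comm₀ (Real.exp_pos _) (dist_pos.2 hxy), ← Real.exp_neg]
  have hlog : c / ε < Real.log (Real.exp 1 + (dist x y)⁻¹) := by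
    rw [Real.lt_log_iff_exp_lt (by positivity)]
    linarith [Real.exp_pos 1]
  rw [Real.dist_eq]
  exact (h x y).trans_lt ((div_lt_comm₀ hε ((div_pos hc hε).trans hlog)).1 hlog)

lemma forall_le_and_le_of_ae_of_continuous_inv {X : Type*} [TopologicalSpace X]
    [MeasurableSpace X] {μ : Measure X} [μ.IsOpenPosMeasure] {p : X → ℝ≥0∞} {a b : ℝ≥0∞}
    (hp : Continuous fun x => (p x)⁻¹.toReal) (ha : a ≠ 0) (hb : b ≠ ∞)
    (h : ∀ᵐ x ∂μ, a ≤ p x ∧ p x ≤ b) (x : X) : a ≤ p x ∧ p x ≤ b := by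
  have : Nonempty X := ⟨x⟩
  obtain ⟨x₀, hx₀a, hx₀b⟩ := (Measure.dense_of_ae h).nonempty
  have hb0 : b ≠ 0 := ((pos_iff_ne_zero.2 ha).trans_le (hx₀a.trans hx₀b)).ne'
  have hainv : a⁻¹ ≠ ∞ := ENNReal.inv_ne_top.2 ha
  have hbinv : b⁻¹ ≠ ∞ := ENNReal.inv_ne_top.2 hb0
  have hdense : Dense {x | (p x)⁻¹.toReal ∈ Set.Icc b⁻¹.toReal a⁻¹.toReal} := by
    refine Measure.dense_of_ae (μ := μ) (h.mono fun y hy => ?_)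
    have hle : (p y)⁻¹ ≤ a⁻¹ := ENNReal.inv_le_inv.2 hy.1
    exact ⟨ENNReal.toReal_mono (ne_top_of_le_ne_top hainv hle) (ENNReal.inv_le_inv.2 hy.2),
      ENNReal.toReal_mono hainv hle⟩
  have hmem : x ∈ {x | (p x)⁻¹.toReal ∈ Set.Icc b⁻¹.toReal a⁻¹.toReal} :=
    (isClosed_Icc.preimage hp).closure_subset (hdense x)
  have htop : (p x)⁻¹ ≠ ∞ :=
    (ENNReal.toReal_pos_iff.1
      ((ENNReal.toReal_pos (ENNReal.inv_ne_zero.2 hb) hbinv).trans_le hmem.1)).2.ne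
  exact ⟨ENNReal.inv_le_inv.1 ((ENNReal.toReal_le_toReal htop hainv).1 hmem.2),
    ENNReal.inv_le_inv.1 ((ENNReal.toReal_le_toReal hbinv htop).1 hmem.1)⟩

lemma abs_sub_le_sq_mul_abs_inv_sub {b s t : ℝ} (hs : 0 < s) (ht : 0 < t) (hsb : s ≤ b)
    (htb : t ≤ b) : |s - t| ≤ b ^ 2 * |s⁻¹ - t⁻¹| :=
  calc |s - t| = s * t * |s⁻¹ - t⁻¹| := by
        rw [abs_sub_comm s⁻¹, ← abs_of_pos (mul_pos hs ht), ← abs_mul]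
        congr 1
        field_simp
    _ ≤ b ^ 2 * |s⁻¹ - t⁻¹| := by
        rw [sq]
        gcongr
        exact hs.le.trans hsb

lemma abs_sub_mul_le_of_abs_inv_sub_le_div {b c l s t : ℝ} (hs : 0 < s) (ht : 0 < t) (hsb : s ≤ b)
    (htb : t ≤ b) (hl : 0 < l) (h : |s⁻¹ - t⁻¹| ≤ c / l) : |s - t| * l ≤ b ^ 2 * c :=
  calc |s - t| * l ≤ b ^ 2 * |s⁻¹ - t⁻¹| * l := by
        gcongr
        exact abs_sub_le_sq_mul_abs_inv_sub hs ht hsb htb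
    _ ≤ b ^ 2 * c := by
        rw [mul_assoc]
        gcongr
        exact (le_div_iff₀ hl).1 h

lemma log_exp_one_add_pos {s : ℝ} (hs : 0 ≤ s) : 0 < Real.log (Real.exp 1 + s) :=
  Real.log_pos (by linarith [Real.one_lt_exp_iff.2 one_pos])

variable {p : Rn n → ℝ≥0∞}

lemma LocLogHolder.exists_logHolderExponent (hg : LocLogHolder fun x => (p x)⁻¹.toReal)
    (hp : Measurable p) (hinf : 1 ≤ essInf p (volume : Measure (Rn n)))
    (hsup : essSup p (volume : Measure (Rn n)) ≠ ∞) :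
    ∃ c, LogHolderExponent (fun x => (p x).toReal) (essInf p volume).toReal
      (essSup p volume).toReal c := by
  have hbounds (x : Rn n) : essInf p volume ≤ p x ∧ p x ≤ essSup p volume :=
    forall_le_and_le_of_ae_of_continuous_inv hg.continuous (one_pos.trans_le hinf).ne' hsup
      (Filter.Eventually.and ae_essInf_le (ENNReal.ae_le_essSup p)) x
  have hptop (x : Rn n) : p x ≠ ∞ := ne_top_of_le_ne_top hsup (hbounds x).2
  have hlower (x : Rn n) : (essInf p volume).toReal ≤ (p x).toReal :=
    ENNReal.toReal_mono (hptop x) (hbounds x).1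
  have hupper (x : Rn n) : (p x).toReal ≤ (essSup p volume).toReal :=
    ENNReal.toReal_mono hsup (hbounds x).2
  have hone : 1 ≤ (essInf p volume).toReal := by
    rw [← ENNReal.toReal_one]
    exact ENNReal.toReal_mono (ne_top_of_le_ne_top (hptop 0) (hbounds 0).1) hinf
  have hpos (x : Rn n) : 0 < (p x).toReal := one_pos.trans_le (hone.trans (hlower x))
  obtain ⟨c, hc, h⟩ := hg
  refine ⟨(essSup p volume).toReal ^ 2 * c, hp.ennreal_toReal, hone, hlower, hupper,
    fun x y R hR hxy => ?_⟩
  rcases eq_or_ne x y with rfl | hne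
  · simp only [sub_self, abs_zero, zero_mul]
    positivity
  have hd : 0 < dist x y := dist_pos.2 hne
  refine le_trans ?_ (abs_sub_mul_le_of_abs_inv_sub_le_div (hpos x) (hpos y) (hupper x) (hupper y)
    (log_exp_one_add_pos (inv_nonneg.2 hd.le))
    (by simpa only [ENNReal.toReal_inv] using h x y))
  gcongr

lemma LogDecay.exists_abs_sub_le [Nontrivial (Rn n)] {g : Rn n → ℝ} {gInf c δ : ℝ}
    (h : LogDecay g gInf c) (hδ : 0 < δ) : ∃ x, |g x - gInf| ≤ δ := by
  obtain ⟨x, hx⟩ := NormedSpace.exists_lt_norm ℝ (Rn n) (Real.exp (c / δ))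
  refine ⟨x, (h x).trans ?_⟩
  rw [div_le_comm₀ (log_exp_one_add_pos (norm_nonneg x)) hδ,
    Real.le_log_iff_exp_le (by positivity)]
  linarith [Real.exp_pos 1]

lemma LogDecay.limit_mem_Icc [Nontrivial (Rn n)] {g : Rn n → ℝ} {gInf c a b : ℝ}
    (h : LogDecay g gInf c) (hg : ∀ x, g x ∈ Set.Icc a b) : gInf ∈ Set.Icc a b := by
  constructor <;> refine le_of_forall_pos_le_add fun δ hδ => ?_ <;>
    obtain ⟨x, hx⟩ := h.exists_abs_sub_le hδ
  · linarith [(abs_le.1 hx).2, (hg x).1]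
  · linarith [(abs_le.1 hx).1, (hg x).2]

lemma LogHolderExponent.exists_decayingLogHolderExponent [Nontrivial (Rn n)] {P : Rn n → ℝ}
    {a b c pinvInf c' : ℝ} (h : LogHolderExponent P a b c)
    (hdec : LogDecay (fun x => (P x)⁻¹) pinvInf c') :
    ∃ c, DecayingLogHolderExponent P pinvInf⁻¹ a b c := by
  have ha : 0 < a := one_pos.trans_le h.one_le
  have hb : 0 < b := (h.pos 0).trans_le (h.upper 0)
  obtain ⟨hlow, hupp⟩ : pinvInf ∈ Set.Icc b⁻¹ a⁻¹ := hdec.limit_mem_Icc fun x =>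
    ⟨inv_anti₀ (h.pos x) (h.upper x), inv_anti₀ ha (h.lower x)⟩
  have hpi : 0 < pinvInf := (inv_pos.2 hb).trans_le hlow
  have hPb : pinvInf⁻¹ ≤ b := inv_le_of_inv_le₀ hb hlow
  exact ⟨max c (b ^ 2 * c'), {
    measurable := h.measurable
    one_le := h.one_le
    lower := h.lower
    upper := h.upper
    loc := fun x y R hR hxy => (h.loc x y R hR hxy).trans (le_max_left _ _)
    inf_lower := (le_inv_comm₀ ha hpi).2 hupp
    inf_upper := hPb
    decay := fun x => le_max_of_le_right <|
      abs_sub_mul_le_of_abs_inv_sub_le_div (h.pos x) (inv_pos.2 hpi) (h.upper x) hPb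
        (log_exp_one_add_pos (norm_nonneg x)) (by simpa only [inv_inv] using hdec x) }⟩

lemma IsPLogWith.exists_decayingLogHolderExponent [Nontrivial (Rn n)] {pinvInf : ℝ}
    (hp : IsPLogWith p pinvInf) (hinf : 1 ≤ essInf p (volume : Measure (Rn n)))
    (hsup : essSup p (volume : Measure (Rn n)) ≠ ∞) :
    ∃ c, DecayingLogHolderExponent (fun x => (p x).toReal) pinvInf⁻¹ (essInf p volume).toReal
      (essSup p volume).toReal c := by
  obtain ⟨hvar, hloc, c', -, hdec⟩ := hp
  obtain ⟨c, h⟩ := hloc.exists_logHolderExponent hvar.1 hinf hsup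
  simp only [ENNReal.toReal_inv] at hdec
  exact h.exists_decayingLogHolderExponent hdec

end LogHolderOfPLog

section MorreyNorm

variable {p q u : Rn n → ℝ≥0∞}

lemma vLpNorm_indicator (hp : ∀ x, 0 < (p x).toReal) {B : Set (Rn n)} (hB : MeasurableSet B)
    (g : Rn n → ℝ≥0∞) :
    vLpNorm p (B.indicator g) =
      sInf {l : ℝ≥0∞ | ∫⁻ x in B, (l⁻¹ * g x) ^ (p x).toReal ≤ 1} := by
  unfold vLpNorm modularVE phiVE
  congr! 4 with l
  rw [← lintegral_indicator hB]
  refine lintegral_congr fun x => ?_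
  simp only [if_neg (ENNReal.toReal_pos_iff.1 (hp x)).2.ne]
  by_cases hx : x ∈ B
  · rw [Set.indicator_of_mem hx, Set.indicator_of_mem hx, mul_comm, div_eq_mul_inv]
  · rw [Set.indicator_of_notMem hx, Set.indicator_of_notMem hx, ENNReal.zero_div,
      ENNReal.zero_rpow_of_pos (hp x)]

variable {g : Rn n → ℝ≥0∞} {N : ℝ≥0∞}

lemma setLIntegral_rpow_le_one_of_morreyNorm_lt (hp : ∀ x, 0 < (p x).toReal)
    (h : morreyNorm p u g < N) (x₀ : Rn n) {r : ℝ} (hr : 0 < r) :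
    ∫⁻ x in Metric.ball x₀ r,
      (ENNReal.ofReal (r ^ (n * ((u x₀)⁻¹.toReal - (p x₀)⁻¹.toReal))) * (N⁻¹ * g x)) ^
        (p x).toReal ≤ 1 := by
  set t := ENNReal.ofReal (r ^ (n * ((u x₀)⁻¹.toReal - (p x₀)⁻¹.toReal)))
  have ht : t ≠ 0 := (ENNReal.ofReal_pos.2 (by positivity)).ne'
  have hball : vLpNorm p ((Metric.ball x₀ r).indicator g) < N / t := by
    rw [ENNReal.lt_div_iff_mul_lt (.inl ht) (.inl ENNReal.ofReal_ne_top), mul_comm]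
    refine lt_of_le_of_lt ?_ h
    exact le_iSup_of_le x₀ (le_iSup_of_le r (le_iSup_of_le hr le_rfl))
  rw [vLpNorm_indicator hp measurableSet_ball] at hball
  obtain ⟨l, hl, hlN⟩ := sInf_lt_iff.1 hball
  refine le_trans (lintegral_mono fun x => ENNReal.rpow_le_rpow ?_ ENNReal.toReal_nonneg) hl
  rw [← mul_assoc, ← div_eq_mul_inv, ← ENNReal.inv_div (.inl ENNReal.ofReal_ne_top) (.inl ht)]
  exact mul_le_mul_left (ENNReal.inv_le_inv.2 hlN.le) _

lemma morreyNorm_le_of_setLIntegral_rpow_le_one (hp : ∀ x, 0 < (p x).toReal)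
    (h : ∀ (x₀ : Rn n) (r : ℝ), 0 < r → ∫⁻ x in Metric.ball x₀ r,
      (ENNReal.ofReal (r ^ (n * ((u x₀)⁻¹.toReal - (p x₀)⁻¹.toReal))) * (N⁻¹ * g x)) ^
        (p x).toReal ≤ 1) :
    morreyNorm p u g ≤ N := by
  refine iSup_le fun x₀ => iSup_le fun r => iSup_le fun hr => ?_
  set t := ENNReal.ofReal (r ^ (n * ((u x₀)⁻¹.toReal - (p x₀)⁻¹.toReal)))
  have ht : t ≠ 0 := (ENNReal.ofReal_pos.2 (by positivity)).ne'
  rw [mul_comm, ← ENNReal.le_div_iff_mul_le (.inl ht) (.inl ENNReal.ofReal_ne_top),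
    vLpNorm_indicator hp measurableSet_ball]
  refine sInf_le ?_
  rw [Set.mem_ofPred_eq, ENNReal.inv_div (.inl ENNReal.ofReal_ne_top) (.inl ht)]
  simpa only [div_eq_mul_inv, mul_assoc] using h x₀ r hr

lemma morreySeqNorm_eq (hq : ∀ x, 0 < (q x).toReal) (f : ℕ → Rn n → ℝ≥0∞) :
    morreySeqNorm p u q f = morreyNorm p u fun x => realLqNorm (q x).toReal fun ν => f ν x := by
  simp only [morreySeqNorm, lqNorm, realLqNorm, (ENNReal.toReal_pos_iff.1 (hq _)).2.ne, if_false]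

variable {Pi a b c a' b' c' m ε : ℝ}

theorem exists_morreySeqNorm_lconv_le
    (h : DecayingLogHolderExponent (fun x => (p x).toReal) Pi a b c) (ha : 1 < a)
    (hQ : LogHolderExponent (fun x => (q x).toReal) a' b' c') (hn : 0 < n) (hm : n < m)
    (hε : 0 < ε) (hu : ∀ x, ε ≤ n * (u x)⁻¹.toReal)
    (hpu : ∀ x, n * ((p x)⁻¹.toReal - (u x)⁻¹.toReal) + ε ≤ m - n + n / Pi) :
    ∃ K : ℝ≥0∞, K ≠ 0 ∧ K ≠ ∞ ∧ ∀ f : ℕ → Rn n → ℝ≥0∞, (∀ ν, Measurable (f ν)) →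
      morreySeqNorm p u q (fun ν => lconv (etaK ν m) (f ν)) ≤ K * morreySeqNorm p u q f := by
  have hp_u (x : Rn n) : n * ((p x)⁻¹.toReal - (u x)⁻¹.toReal) + ε ≤ n / (p x).toReal := by
    rw [div_eq_mul_inv, ← ENNReal.toReal_inv, mul_sub]
    linarith [hu x]
  obtain ⟨C, hC, hmain⟩ :=
    h.exists_setLIntegral_ball_realLqNorm_lconv_rpow_le ha hQ hn hm hε hp_u hpu
  simp only [← mul_neg, neg_sub] at hmain
  have hK1 : 1 ≤ 1 + C := le_self_add
  have hK0 : 1 + C ≠ 0 := (one_pos.trans_le hK1).ne'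
  have hKtop : 1 + C ≠ ∞ := by finiteness
  refine ⟨1 + C, hK0, hKtop, fun f hf => ?_⟩
  rw [morreySeqNorm_eq hQ.pos, morreySeqNorm_eq hQ.pos, mul_comm,
    ← ENNReal.div_le_iff_le_mul (.inl hK0) (.inl hKtop)]
  refine le_of_forall_gt_imp_ge_of_dense fun N hN => ?_
  rw [ENNReal.div_le_iff_le_mul (.inl hK0) (.inl hKtop)]
  refine morreyNorm_le_of_setLIntegral_rpow_le_one h.pos fun x₀ r hr => ?_
  have hmod := hmain (fun ν x => N⁻¹ * f ν x) (fun ν => (hf ν).const_mul _) (by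
    simp_rw [fun x => realLqNorm_const_mul (hQ.pos x) N⁻¹ fun ν => f ν x]
    exact fun x₀ r hr => setLIntegral_rpow_le_one_of_morreyNorm_lt h.pos hN x₀ hr) x₀ r hr
  simp_rw [fun ν x => lconv_const_mul (measurable_etaK (n := n) ν m) (hf ν) N⁻¹ x,
    fun x => realLqNorm_const_mul (hQ.pos x) N⁻¹ fun ν => lconv (etaK ν m) (f ν) x] at hmod
  refine (lintegral_mono fun x => ?_).trans
    (lintegral_inv_mul_rpow_le_one h.one_le_apply hK1 hKtop (hmod.trans le_add_self))
  refine ENNReal.rpow_le_rpow (le_of_eq ?_) (h.pos x).le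
  rw [mul_comm N, ENNReal.mul_inv (.inl hK0) (.inl hKtop)]
  ring

lemma le_cpu_add (pinvInf : ℝ) (hp : ∀ x, 1 ≤ (p x).toReal) (x : Rn n) :
    (p x)⁻¹.toReal - (u x)⁻¹.toReal ≤ cpu p u pinvInf + pinvInf := by
  have hbdd : BddAbove (Set.range fun x => (p x)⁻¹.toReal - (u x)⁻¹.toReal) := by
    refine ⟨1, Set.forall_mem_range.2 fun x => ?_⟩
    have hpx : (p x)⁻¹.toReal ≤ 1 := by
      rw [ENNReal.toReal_inv]
      exact inv_le_one_of_one_le₀ (hp x)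
    linarith [ENNReal.toReal_nonneg (a := (u x)⁻¹)]
  exact sub_le_iff_le_add.1 ((sub_le_sub_right (le_ciSup hbdd x) _).trans (le_max_right _ _))

lemma exists_pos_le_toReal_inv_of_iSup_lt_top {ι : Type*} [Nonempty ι] {v : ι → ℝ≥0∞}
    (hv : ∀ i, 0 < v i) (hsup : ⨆ i, v i < ∞) : ∃ κ > 0, ∀ i, κ ≤ (v i)⁻¹.toReal := by
  have hsup0 : ⨆ i, v i ≠ 0 := ((hv (Classical.arbitrary ι)).trans_le (le_iSup v _)).ne'
  exact ⟨(⨆ i, v i)⁻¹.toReal,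
    ENNReal.toReal_pos (ENNReal.inv_ne_zero.2 hsup.ne) (ENNReal.inv_ne_top.2 hsup0),
    fun i => ENNReal.toReal_mono (ENNReal.inv_ne_top.2 (hv i).ne')
      (ENNReal.inv_le_inv.2 (le_iSup v i))⟩

lemma lconv_etaK_of_dim_zero (ν : ℕ) (m : ℝ) (f : Rn 0 → ℝ≥0∞) : lconv (etaK ν m) f = f := by
  funext x
  rw [Subsingleton.elim x 0]
  simp [lconv, etaK, volume_euclideanSpace_eq_dirac]

end MorreyNorm

theorem statement2_general (n : ℕ) (p q u : Rn n → ℝ≥0∞) (pinvInf : ℝ)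
    (hp : IsPLogWith p pinvInf)
    (hpm : 1 < essInf p (volume : Measure (Rn n)))
    (hpp : essSup p (volume : Measure (Rn n)) < ∞)
    (hu : ∀ x, 0 < u x) (husup : (⨆ x : Rn n, u x) < ∞)
    (hq : Measurable q) (hqlog : LocLogHolder fun x => (q x)⁻¹.toReal)
    (hqm : 1 ≤ essInf q (volume : Measure (Rn n)))
    (hqp : essSup q (volume : Measure (Rn n)) < ∞)
    (m : ℝ) (hm : (n : ℝ) + n * cpu p u pinvInf < m) :
    ∃ c : ℝ, 0 < c ∧ ∀ f : ℕ → Rn n → ℝ≥0∞, (∀ ν, Measurable (f ν)) →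
      morreySeqNorm p u q (fun ν => lconv (etaK ν m) (f ν)) ≤
        ENNReal.ofReal c * morreySeqNorm p u q f := by
  rcases Nat.eq_zero_or_pos n with rfl | hn
  · exact ⟨1, one_pos, fun f _ => by simp [lconv_etaK_of_dim_zero]⟩
  have : Nonempty (Fin n) := ⟨⟨0, hn⟩⟩
  obtain ⟨c, h⟩ := hp.exists_decayingLogHolderExponent hpm.le hpp.ne
  obtain ⟨c', hQ⟩ := hqlog.exists_logHolderExponent hq hqm hqp.ne
  have hinf : essInf p volume ≠ ∞ := fun h' => by
    simpa [h'] using one_pos.trans_le h.one_le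
  have ha : 1 < (essInf p volume).toReal := by
    simpa using (ENNReal.toReal_lt_toReal ENNReal.one_ne_top hinf).2 hpm
  have hcpu : 0 ≤ n * cpu p u pinvInf := mul_nonneg n.cast_nonneg (le_max_left _ _)
  obtain ⟨κ, hκ, hκu⟩ := exists_pos_le_toReal_inv_of_iSup_lt_top hu husup
  obtain ⟨K, hK0, hKtop, hK⟩ := exists_morreySeqNorm_lconv_le (u := u) (m := m)
    (ε := min (n * κ) (m - n - n * cpu p u pinvInf)) h ha hQ hn (by linarith)
    (lt_min (by positivity) (by linarith))
    (fun x => (min_le_left _ _).trans (by gcongr; exact hκu x)) fun x => by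
      rw [div_inv_eq_mul]
      linarith [min_le_right (n * κ) (m - n - n * cpu p u pinvInf), mul_le_mul_of_nonneg_left
        (le_cpu_add (u := u) pinvInf h.one_le_apply x) (Nat.cast_nonneg (α := ℝ) n)]
  refine ⟨K.toReal, ENNReal.toReal_pos hK0 hKtop, ?_⟩
  rwa [ENNReal.ofReal_toReal hKtop]

/-- the convolution inequality in variable exponent Morrey spaces,
with `m > n + n·c_{p,u}`. -/
theorem statement2 (n : ℕ) (p q u : Rn n → ℝ≥0∞) (pinvInf : ℝ)
    (hp : IsPLogWith p pinvInf) (hq : IsPLog q) (hu : IsVarExp u)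
    (hpm : 1 < essInf p (volume : Measure (Rn n)))
    (hpu : ∀ᵐ x : Rn n ∂(volume : Measure (Rn n)), p x ≤ u x)
    (husup : (⨆ x : Rn n, u x) < ∞)
    (hqm : 1 < essInf q (volume : Measure (Rn n)))
    (hqp : essSup q (volume : Measure (Rn n)) < ∞)
    (m : ℝ) (hm : (n : ℝ) + n * cpu p u pinvInf < m) :
    ∃ c : ℝ, 0 < c ∧ ∀ f : ℕ → Rn n → ℝ≥0∞, (∀ ν, Measurable (f ν)) →
      morreySeqNorm p u q (fun ν => lconv (etaK ν m) (f ν)) ≤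
        ENNReal.ofReal c * morreySeqNorm p u q f := by
  obtain ⟨_, hqvar, hqlog, -⟩ := hq
  have hpp : essSup p (volume : Measure (Rn n)) < ∞ :=
    (essSup_le_of_ae_le _ (hpu.mono fun x hx => hx.trans (le_iSup u x))).trans_lt husup
  exact statement2_general n p q u pinvInf hp hpm hpp hu.2.1 husup hqvar.1 hqlog hqm.le hqp m hm

end
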